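/- (Equivalence to the neural tangent kernel.) There exist absolute constants C, c > 0 such that for every fixed unit vector x ∈ ℝ^𝔡 and every ω satisfying C·d^{3/2}/(m^{3/2}·L^{3/2}·(log m)^{3/2}) ≤ ω ≤ 1/(C·L^{4.5}·(log m)³), with probability at least 1 − e^{−c·m·ω^{2/3}·L} over the random initialization (W⁽⁰⁾, A, B): for every tuple W' with ‖W'‖₂ ≤ ω and every j ∈ [d], (a) ‖∇y_j(W⁽⁰⁾ + W'; x) − ∇y_j(W⁽⁰⁾; x)‖_F ≤ C·√(log m)·ω^{1/3}·L³·‖∇y_j(W⁽⁰⁾; x)‖_F, and (b) |y_j(W⁽⁰⁾ + W'; x) − y_j(W⁽⁰⁾; x) − y_j^{ntk}(W'; x)| ≤ C·L³·ω^{4/3}·√(m·log m)/√d, where y_j^{ntk}(W'; x) = Σ_{ℓ=1}^L ⟨∇_{W_ℓ}y_j(W⁽⁰⁾; x), W'_ℓ⟩. -/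

import Mathlib

/-!
## Why the network is close to its linearization

Write `θ = ω^{1/3}`, `Λ = log m`, `t = m θ² L` and `τ = θ² L / √m`; the failure probability is to be
at most `e^{-t}`. The constraints on `ω` say that `θ² m L Λ ≥ 10^20 d` and `10^10 L^{3/2} θ Λ ≤ 1`
(`root_bounds`), which forces `m ≥ 10^40 d L² Λ`.

*Probabilistic part.* `GoodInit` collects the properties used of the initialization: activations have
norm in `[1/2, 2]`; at most `100 L t` pre-activations in total lie within `τ` of the kink of the ReLU;
the layer products `W_{b+1} D_b W_b ⋯ D_{a+1} W_{a+1}`, with the signs of the unperturbed network, have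
operator norm `O(√L)` and pair vectors of total sparsity `n` with gain `O(√(Λ/m) √(n + t))`; the
backward vectors from each output row are regular in the same sense; and the last sign pattern keeps
a constant fraction of every output row. `good_event` shows that this fails with probability at most
`e^{-t}`. A Gaussian row `w` has a sign `1[⟨w, h⟩ ≥ 0]` that is independent of even functions of `w`
(`lintegral_half`), so a random ReLU layer preserves squared norms on average with sub-exponential
fluctuations (`layer_exp`, `layer_rpow`). Conditioning on the layers one at a time gives power moments
of layer products (`safeProd_moment`), hence sub-Gaussian tails of their bilinear forms (`tail_W`,
`tail_B`). Union bounds over integer nets then give the sparse estimates (`sparse_event_W`,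
`sparse_event_B`), and, after dividing the coordinates into `O(L)` blocks, the operator norms
(`op_event_W`, `op_event_B`).

*Deterministic part.* Given a good initialization and any `W'` with spectral norms at most `ω`,
`PertHyp.fwd_step` proceeds layer by layer: the change of the pre-activation is the response to the
sign flips of the earlier layers plus a term linear in `W'`. A coordinate that flips either was within
`τ` of the kink, or has moved by more than `τ`; the latter cannot happen for too many coordinates,
because of the sparse pairing bound. The accumulated errors obey a Grönwall-type recursion that is
closed in `closing_step`. Pairing the expansion with the backward vectors gives the second-order
remainder of the output (`PertHyp.output_remainder`, `GoodInit.output`). The same recursion run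
backwards (`bwd_step`) bounds the change of the backward vectors, hence of the gradient
(`grad_block_diff`), and the gradient block of the last layer bounds the full gradient norm from below
(`GoodInit.gradient`).
-/

open MeasureTheory ProbabilityTheory

noncomputable section

namespace DNNPaper

/-! ### Elementary linear algebra on plain function matrices -/

def mulVec {p q : ℕ} (M : Fin p → Fin q → ℝ) (v : Fin q → ℝ) : Fin p → ℝ :=
  fun i => ∑ j, M i j * v j

def mmul {p q r : ℕ} (M : Fin p → Fin q → ℝ) (N : Fin q → Fin r → ℝ) :
    Fin p → Fin r → ℝ :=
  fun i k => ∑ j, M i j * N j k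

def transpose {p q : ℕ} (M : Fin p → Fin q → ℝ) : Fin q → Fin p → ℝ :=
  fun j i => M i j

def dot {p : ℕ} (u v : Fin p → ℝ) : ℝ := ∑ i, u i * v i

def outer {p q : ℕ} (u : Fin p → ℝ) (v : Fin q → ℝ) : Fin p → Fin q → ℝ :=
  fun i j => u i * v j

def idMat (p : ℕ) : Fin p → Fin p → ℝ := fun i j => if i = j then 1 else 0

def diagMat {p : ℕ} (dg : Fin p → ℝ) : Fin p → Fin p → ℝ :=
  fun i j => if i = j then dg i else 0

def relu {p : ℕ} (v : Fin p → ℝ) : Fin p → ℝ := fun k => max (v k) 0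

/-- diagonal entries of the ReLU sign matrix of a pre-activation vector -/
def signOf {p : ℕ} (g : Fin p → ℝ) : Fin p → ℝ := fun k => if 0 ≤ g k then 1 else 0

/-- Euclidean norm -/
def l2 {p : ℕ} (v : Fin p → ℝ) : ℝ := Real.sqrt (∑ k, v k ^ 2)

/-- max-norm -/
def linf {p : ℕ} (v : Fin p → ℝ) : ℝ := ⨆ k, |v k|

/-- number of nonzero entries -/
def l0 {p : ℕ} (v : Fin p → ℝ) : ℕ := (Finset.univ.filter fun k => v k ≠ 0).card

/-- Frobenius norm -/
def frob {p q : ℕ} (M : Fin p → Fin q → ℝ) : ℝ := Real.sqrt (∑ i, ∑ j, M i j ^ 2)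

/-- spectral norm (ℓ₂ operator norm) -/
def spec {p q : ℕ} (M : Fin p → Fin q → ℝ) : ℝ :=
  sSup {r | ∃ v : Fin q → ℝ, l2 v ≤ 1 ∧ r = l2 (mulVec M v)}

/-- trace (Frobenius) inner product -/
def innerF {p q : ℕ} (M N : Fin p → Fin q → ℝ) : ℝ := ∑ i, ∑ j, M i j * N i j

/-- `‖W‖₂ = max_ℓ ‖W_ℓ‖₂` for a tuple of matrices -/
def tupleSpec {m L : ℕ} (W : Fin L → Fin m → Fin m → ℝ) : ℝ := ⨆ ℓ, spec (W ℓ)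

/-! ### The network -/

variable {𝔡 m d L : ℕ}

/-- `Wat W ℓ` is the weight matrix of layer `ℓ ∈ {1,…,L}` (identity outside this range). -/
def Wat (W : Fin L → Fin m → Fin m → ℝ) (ℓ : ℕ) : Fin m → Fin m → ℝ :=
  if h : 1 ≤ ℓ ∧ ℓ ≤ L then W ⟨ℓ - 1, by omega⟩ else idMat m

/-- the forward (post-activation) vectors `h_ℓ`, `ℓ = 0,1,…,L` -/
def hseq (A : Fin m → Fin 𝔡 → ℝ) (W : Fin L → Fin m → Fin m → ℝ) (x : Fin 𝔡 → ℝ) :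
    ℕ → Fin m → ℝ
  | 0 => relu (mulVec A x)
  | ℓ + 1 =>
      if ℓ + 1 ≤ L then relu (mulVec (Wat W (ℓ + 1)) (hseq A W x ℓ)) else hseq A W x ℓ

/-- the pre-activation vectors `g_ℓ`, `ℓ = 0,1,…,L` -/
def gseq (A : Fin m → Fin 𝔡 → ℝ) (W : Fin L → Fin m → Fin m → ℝ) (x : Fin 𝔡 → ℝ) :
    ℕ → Fin m → ℝ
  | 0 => mulVec A x
  | ℓ + 1 => mulVec (Wat W (ℓ + 1)) (hseq A W x ℓ)

/-- `chainProd W Dfun a b = (D_b W_b) (D_{b-1} W_{b-1}) ⋯ (D_a W_a)` where `D_ℓ` is the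
diagonal matrix with entries `Dfun ℓ`; it is the identity when `b < a`, and factors with
index outside `{1,…,L}` are skipped. -/
def chainProd (W : Fin L → Fin m → Fin m → ℝ) (Dfun : ℕ → Fin m → ℝ) (a : ℕ) :
    ℕ → Fin m → Fin m → ℝ
  | 0 => idMat m
  | b + 1 =>
      if a ≤ b + 1 ∧ b + 1 ≤ L then
        mmul (mmul (diagMat (Dfun (b + 1))) (Wat W (b + 1))) (chainProd W Dfun a b)
      else chainProd W Dfun a b

/-- `prodDW A W x a b = D_b W_b D_{b-1} W_{b-1} ⋯ D_a W_a` with the sign matrices of input `x` -/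
def prodDW (A : Fin m → Fin 𝔡 → ℝ) (W : Fin L → Fin m → Fin m → ℝ) (x : Fin 𝔡 → ℝ)
    (a b : ℕ) : Fin m → Fin m → ℝ :=
  chainProd W (fun ℓ => signOf (gseq A W x ℓ)) a b

/-- `Back_ℓ = B D_L W_L ⋯ D_ℓ W_ℓ` (equal to `B` for `ℓ = L+1`) -/
def backMat (B : Fin d → Fin m → ℝ) (A : Fin m → Fin 𝔡 → ℝ)
    (W : Fin L → Fin m → Fin m → ℝ) (x : Fin 𝔡 → ℝ) (ℓ : ℕ) : Fin d → Fin m → ℝ :=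
  mmul B (prodDW A W x ℓ L)

/-- formula gradient w.r.t. `W_ℓ` with an arbitrary (fake) loss vector `v`:
`D_ℓ (Back_{ℓ+1}ᵀ v) h_{ℓ-1}ᵀ` -/
def gradW (B : Fin d → Fin m → ℝ) (A : Fin m → Fin 𝔡 → ℝ)
    (W : Fin L → Fin m → Fin m → ℝ) (x : Fin 𝔡 → ℝ) (v : Fin d → ℝ) (ℓ : ℕ) :
    Fin m → Fin m → ℝ :=
  outer (mulVec (diagMat (signOf (gseq A W x ℓ)))
      (mulVec (transpose (backMat B A W x (ℓ + 1))) v))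
    (hseq A W x (ℓ - 1))

/-- loss vector `B h_L − y` -/
def lossVec (B : Fin d → Fin m → ℝ) (A : Fin m → Fin 𝔡 → ℝ)
    (W : Fin L → Fin m → Fin m → ℝ) (x : Fin 𝔡 → ℝ) (y : Fin d → ℝ) : Fin d → ℝ :=
  fun j => mulVec B (hseq A W x L) j - y j

/-- per-sample ℓ₂ regression loss `F_i` -/
def objFi (B : Fin d → Fin m → ℝ) (A : Fin m → Fin 𝔡 → ℝ)
    (W : Fin L → Fin m → Fin m → ℝ) (x : Fin 𝔡 → ℝ) (y : Fin d → ℝ) : ℝ :=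
  (1 / 2) * l2 (lossVec B A W x y) ^ 2

/-- total objective `F` -/
def objF {n : ℕ} (B : Fin d → Fin m → ℝ) (A : Fin m → Fin 𝔡 → ℝ)
    (W : Fin L → Fin m → Fin m → ℝ) (x : Fin n → Fin 𝔡 → ℝ)
    (y : Fin n → Fin d → ℝ) : ℝ :=
  ∑ i, objFi B A W (x i) (y i)

/-- formula gradient of the total objective w.r.t. `W_ℓ` -/
def gradF {n : ℕ} (B : Fin d → Fin m → ℝ) (A : Fin m → Fin 𝔡 → ℝ)
    (W : Fin L → Fin m → Fin m → ℝ) (x : Fin n → Fin 𝔡 → ℝ)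
    (y : Fin n → Fin d → ℝ) (ℓ : ℕ) : Fin m → Fin m → ℝ :=
  ∑ i, gradW B A W (x i) (lossVec B A W (x i) (y i)) ℓ

/-! ### Random initialization -/

/-- a `p × q` random matrix with i.i.d. `N(0, v)` entries -/
def gaussMat (p q : ℕ) (v : NNReal) : Measure (Fin p → Fin q → ℝ) :=
  Measure.pi fun _ => Measure.pi fun _ => gaussianReal 0 v

/-- joint law of `(A, W)` at random initialization -/
def initAW (𝔡 m L : ℕ) :
    Measure ((Fin m → Fin 𝔡 → ℝ) × (Fin L → Fin m → Fin m → ℝ)) :=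
  (gaussMat m 𝔡 (2 / m)).prod (Measure.pi fun _ : Fin L => gaussMat m m (2 / m))

/-- joint law of `(A, W, B)` at random initialization -/
def initMeasure (𝔡 m d L : ℕ) :
    Measure ((Fin m → Fin 𝔡 → ℝ) ×
      (Fin L → Fin m → Fin m → ℝ) × (Fin d → Fin m → ℝ)) :=
  (gaussMat m 𝔡 (2 / m)).prod
    ((Measure.pi fun _ : Fin L => gaussMat m m (2 / m)).prod (gaussMat d m (1 / d)))


/-- the `j`-th standard basis vector of `ℝ^d` -/
def basisVec (d : ℕ) (j : Fin d) : Fin d → ℝ := fun k => if k = j then 1 else 0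

/-! ### Euclidean norm and inner product on plain functions -/

lemma l2_eq_norm {p : ℕ} (v : Fin p → ℝ) : l2 v = ‖WithLp.toLp 2 v‖ := by
  simp [l2, EuclideanSpace.norm_eq]

lemma l2_nonneg {p : ℕ} (v : Fin p → ℝ) : 0 ≤ l2 v := Real.sqrt_nonneg _

lemma l2_sq {p : ℕ} (v : Fin p → ℝ) : l2 v ^ 2 = ∑ k, v k ^ 2 :=
  Real.sq_sqrt (Finset.sum_nonneg fun _ _ => sq_nonneg _)

lemma l2_add_le {p : ℕ} (u v : Fin p → ℝ) : l2 (u + v) ≤ l2 u + l2 v := by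
  simp only [l2_eq_norm, WithLp.toLp_add]; exact norm_add_le _ _

lemma l2_sub_le {p : ℕ} (u v : Fin p → ℝ) : l2 (u - v) ≤ l2 u + l2 v := by
  simp only [l2_eq_norm, WithLp.toLp_sub]; exact norm_sub_le _ _

lemma l2_smul {p : ℕ} (c : ℝ) (v : Fin p → ℝ) : l2 (c • v) = |c| * l2 v := by
  simp only [l2_eq_norm, WithLp.toLp_smul, norm_smul, Real.norm_eq_abs]

@[simp] lemma l2_zero {p : ℕ} : l2 (0 : Fin p → ℝ) = 0 := by simp [l2]

lemma l2_eq_zero {p : ℕ} {v : Fin p → ℝ} : l2 v = 0 ↔ v = 0 := by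
  rw [l2_eq_norm, norm_eq_zero]; simp

lemma l2_pos {p : ℕ} {v : Fin p → ℝ} (h : v ≠ 0) : 0 < l2 v :=
  lt_of_le_of_ne (l2_nonneg v) fun h' => h (l2_eq_zero.1 h'.symm)

lemma l2_sum_le {p : ℕ} {ι : Type*} (s : Finset ι) (f : ι → Fin p → ℝ) :
    l2 (∑ i ∈ s, f i) ≤ ∑ i ∈ s, l2 (f i) := by
  classical
  induction s using Finset.induction_on with
  | empty => simp
  | insert a s ha ih =>
    rw [Finset.sum_insert ha, Finset.sum_insert ha]
    exact (l2_add_le _ _).trans (by gcongr)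

lemma l2_mono {p : ℕ} {u v : Fin p → ℝ} (h : ∀ k, |u k| ≤ |v k|) : l2 u ≤ l2 v :=
  Real.sqrt_le_sqrt (Finset.sum_le_sum fun k _ => sq_le_sq.2 (h k))

lemma dot_self {p : ℕ} (v : Fin p → ℝ) : dot v v = l2 v ^ 2 := by
  rw [l2_sq]; simp [dot, sq]

lemma dot_comm {p : ℕ} (u v : Fin p → ℝ) : dot u v = dot v u := by
  simp [dot, mul_comm]

lemma abs_dot_le {p : ℕ} (u v : Fin p → ℝ) : |dot u v| ≤ l2 u * l2 v := by
  have h := abs_real_inner_le_norm (WithLp.toLp 2 v) (WithLp.toLp 2 u)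
  rw [l2_eq_norm, l2_eq_norm, mul_comm]
  convert h using 2
  simp [dot, PiLp.inner_apply]

lemma dot_add {p : ℕ} (u v w : Fin p → ℝ) : dot u (v + w) = dot u v + dot u w := by
  simp [dot, mul_add, Finset.sum_add_distrib]

lemma dot_sub {p : ℕ} (u v w : Fin p → ℝ) : dot u (v - w) = dot u v - dot u w := by
  simp [dot, mul_sub, Finset.sum_sub_distrib]

lemma sub_dot {p : ℕ} (u v w : Fin p → ℝ) : dot (u - v) w = dot u w - dot v w := by
  simp [dot, sub_mul, Finset.sum_sub_distrib]

lemma dot_smul {p : ℕ} (c : ℝ) (u v : Fin p → ℝ) : dot u (c • v) = c * dot u v := by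
  simp only [dot, Finset.mul_sum]; refine Finset.sum_congr rfl fun k _ => ?_
  simp; ring

lemma smul_dot {p : ℕ} (c : ℝ) (u v : Fin p → ℝ) : dot (c • u) v = c * dot u v := by
  rw [dot_comm, dot_smul, dot_comm]

lemma dot_sum {p : ℕ} {ι : Type*} (s : Finset ι) (u : Fin p → ℝ) (f : ι → Fin p → ℝ) :
    dot u (∑ i ∈ s, f i) = ∑ i ∈ s, dot u (f i) := by
  simp only [dot, Finset.sum_apply, Finset.mul_sum]; rw [Finset.sum_comm]

lemma sum_dot {p : ℕ} {ι : Type*} (s : Finset ι) (u : Fin p → ℝ) (f : ι → Fin p → ℝ) :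
    dot (∑ i ∈ s, f i) u = ∑ i ∈ s, dot (f i) u := by
  rw [dot_comm, dot_sum]; simp [dot_comm]

@[simp] lemma dot_zero {p : ℕ} (u : Fin p → ℝ) : dot u 0 = 0 := by simp [dot]

@[simp] lemma zero_dot {p : ℕ} (u : Fin p → ℝ) : dot 0 u = 0 := by simp [dot]

lemma dot_mul {p : ℕ} (s u v : Fin p → ℝ) : dot u (s * v) = dot (s * u) v := by
  simp only [dot, Pi.mul_apply]; exact Finset.sum_congr rfl fun k _ => by ring

/-- Duality: a bound on all pairings with `u` bounds the norm of `u`. -/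
lemma l2_le_of_dot {p : ℕ} {u : Fin p → ℝ} {c : ℝ} (hc : 0 ≤ c)
    (h : ∀ v, |dot u v| ≤ c * l2 v) : l2 u ≤ c := by
  rcases eq_or_ne u 0 with rfl | hu
  · simpa
  · have h1 := h u
    rw [dot_self, abs_of_nonneg (sq_nonneg _), sq] at h1
    exact le_of_mul_le_mul_right h1 (l2_pos hu)

/-- Coordinate restriction of `v` to the set `T`. -/
def restr {p : ℕ} (T : Finset (Fin p)) (v : Fin p → ℝ) : Fin p → ℝ :=
  fun k => if k ∈ T then v k else 0

lemma dot_restr_self {p : ℕ} (T : Finset (Fin p)) (v : Fin p → ℝ) :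
    dot (restr T v) v = l2 (restr T v) ^ 2 := by
  rw [← dot_self]; simp only [dot, restr]
  exact Finset.sum_congr rfl fun k _ => by split_ifs <;> simp

lemma restr_supp {p : ℕ} (T : Finset (Fin p)) (v : Fin p → ℝ) :
    ∀ k, k ∉ T → restr T v k = 0 := fun k hk => by simp [restr, hk]

lemma l2_restr_le {p : ℕ} (T : Finset (Fin p)) (v : Fin p → ℝ) : l2 (restr T v) ≤ l2 v :=
  l2_mono fun k => by unfold restr; split_ifs <;> simp

/-- A vector whose entries on `T` exceed `τ` has restricted norm at least `τ √|T|`. -/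
lemma sqrt_card_le_l2_restr {p : ℕ} (T : Finset (Fin p)) (v : Fin p → ℝ) {τ : ℝ} (hτ : 0 ≤ τ)
    (h : ∀ k ∈ T, τ ≤ |v k|) : τ * Real.sqrt T.card ≤ l2 (restr T v) := by
  have h1 : τ ^ 2 * T.card ≤ ∑ k, restr T v k ^ 2 := by
    have : ∑ k, restr T v k ^ 2 = ∑ k ∈ T, v k ^ 2 := by
      simp only [restr, ite_pow]
      simp [Finset.sum_ite_mem]
    rw [this, mul_comm, ← nsmul_eq_mul]
    refine Finset.card_nsmul_le_sum _ _ _ fun k hk => ?_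
    have := h k hk
    rw [← sq_abs (v k)]; gcongr
  rw [l2]
  refine Real.le_sqrt_of_sq_le ?_
  rwa [mul_pow, Real.sq_sqrt (Nat.cast_nonneg _)]

lemma l2_mul_le {p : ℕ} {s : Fin p → ℝ} (hs : ∀ k, |s k| ≤ 1) (v : Fin p → ℝ) :
    l2 (s * v) ≤ l2 v :=
  l2_mono fun k => by
    rw [Pi.mul_apply, abs_mul]
    exact mul_le_of_le_one_left (abs_nonneg _) (hs k)

/-! ### Matrix–vector products as linear maps, and the spectral norm -/

/-- `mulVec M` as a linear map. -/
def mvL {p q : ℕ} (M : Fin p → Fin q → ℝ) : (Fin q → ℝ) →ₗ[ℝ] (Fin p → ℝ) where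
  toFun := mulVec M
  map_add' u v := by
    funext i; simp [mulVec, mul_add, Finset.sum_add_distrib]
  map_smul' c v := by
    funext i; simp only [mulVec, Pi.smul_apply, smul_eq_mul, RingHom.id_apply, Finset.mul_sum]
    exact Finset.sum_congr rfl fun k _ => by ring

@[simp] lemma mvL_apply {p q : ℕ} (M : Fin p → Fin q → ℝ) (v) : mvL M v = mulVec M v := rfl

lemma mulVec_eq_dot {p q : ℕ} (M : Fin p → Fin q → ℝ) (v) (i) : mulVec M v i = dot (M i) v := rfl

lemma mulVec_diagMat {p : ℕ} (s v : Fin p → ℝ) : mulVec (diagMat s) v = s * v := by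
  funext i; simp [mulVec, diagMat]

lemma mulVec_idMat {p : ℕ} (v : Fin p → ℝ) : mulVec (idMat p) v = v := by
  funext i; simp [mulVec, idMat]

lemma mulVec_mmul {p q r : ℕ} (M : Fin p → Fin q → ℝ) (N : Fin q → Fin r → ℝ) (v) :
    mulVec (mmul M N) v = mulVec M (mulVec N v) := by
  funext i
  simp only [mulVec, mmul, Finset.sum_mul, Finset.mul_sum]
  rw [Finset.sum_comm]
  exact Finset.sum_congr rfl fun k _ => Finset.sum_congr rfl fun l _ => by ring

lemma dot_transpose {p q : ℕ} (M : Fin p → Fin q → ℝ) (u v) :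
    dot (mulVec (transpose M) u) v = dot u (mulVec M v) := by
  simp only [dot, mulVec, transpose, Finset.sum_mul, Finset.mul_sum]
  rw [Finset.sum_comm]
  exact Finset.sum_congr rfl fun k _ => Finset.sum_congr rfl fun l _ => by ring

lemma mulVec_add_mat {p q : ℕ} (M N : Fin p → Fin q → ℝ) (v) :
    mulVec (M + N) v = mulVec M v + mulVec N v := by
  funext i; simp [mulVec, add_mul, Finset.sum_add_distrib]

lemma l2_mulVec_le_frob {p q : ℕ} (M : Fin p → Fin q → ℝ) (v) :
    l2 (mulVec M v) ≤ frob M * l2 v := by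
  have h : ∑ i, mulVec M v i ^ 2 ≤ (∑ i, ∑ j, M i j ^ 2) * ∑ j, v j ^ 2 := by
    rw [Finset.sum_mul]
    exact Finset.sum_le_sum fun i _ => Finset.sum_mul_sq_le_sq_mul_sq _ _ _
  rw [l2, frob, l2, ← Real.sqrt_mul (Finset.sum_nonneg fun _ _ =>
    Finset.sum_nonneg fun _ _ => sq_nonneg _)]
  exact Real.sqrt_le_sqrt h

lemma l2_mulVec_le_spec {p q : ℕ} (M : Fin p → Fin q → ℝ) (v) :
    l2 (mulVec M v) ≤ spec M * l2 v := by
  rcases eq_or_ne v 0 with rfl | hv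
  · have : mulVec M 0 = 0 := (mvL M).map_zero
    simp [this]
  have hb : BddAbove {r | ∃ v : Fin q → ℝ, l2 v ≤ 1 ∧ r = l2 (mulVec M v)} := by
    refine ⟨frob M, ?_⟩
    rintro _ ⟨w, hw, rfl⟩
    exact (l2_mulVec_le_frob M w).trans (mul_le_of_le_one_right (Real.sqrt_nonneg _) hw)
  have hp := l2_pos hv
  have h1 : l2 (mulVec M ((l2 v)⁻¹ • v)) ≤ spec M := by
    refine le_csSup hb ⟨_, ?_, rfl⟩
    rw [l2_smul, abs_of_pos (inv_pos.2 hp), inv_mul_cancel₀ hp.ne']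
  have h2 : mulVec M ((l2 v)⁻¹ • v) = (l2 v)⁻¹ • mulVec M v := (mvL M).map_smul _ _
  rw [h2, l2_smul, abs_of_pos (inv_pos.2 hp), inv_mul_le_iff₀ hp] at h1
  linarith

lemma frob_sq {p q : ℕ} (M : Fin p → Fin q → ℝ) : frob M ^ 2 = ∑ i, ∑ j, M i j ^ 2 :=
  Real.sq_sqrt (Finset.sum_nonneg fun i _ => Finset.sum_nonneg fun j _ => sq_nonneg _)

lemma frob_outer {p q : ℕ} (u : Fin p → ℝ) (v : Fin q → ℝ) : frob (outer u v) = l2 u * l2 v := by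
  rw [frob, l2, l2, ← Real.sqrt_mul (Finset.sum_nonneg fun _ _ => sq_nonneg _), Finset.sum_mul_sum]
  simp [outer, mul_pow]

lemma frob_add_le {p q : ℕ} (M N : Fin p → Fin q → ℝ) : frob (M + N) ≤ frob M + frob N := by
  have h : ∀ K : Fin p → Fin q → ℝ,
      frob K = ‖(WithLp.toLp 2 fun ij : Fin p × Fin q => K ij.1 ij.2)‖ := fun K => by
    simp [frob, EuclideanSpace.norm_eq, Fintype.sum_prod_type]
  have h2 : (WithLp.toLp 2 fun ij : Fin p × Fin q => (M + N) ij.1 ij.2) =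
      (WithLp.toLp 2 fun ij : Fin p × Fin q => M ij.1 ij.2) +
      (WithLp.toLp 2 fun ij : Fin p × Fin q => N ij.1 ij.2) := by
    ext ij; simp
  rw [h, h, h, h2]
  exact norm_add_le _ _

lemma innerF_outer {p q : ℕ} (u : Fin p → ℝ) (v : Fin q → ℝ) (M : Fin p → Fin q → ℝ) :
    innerF (outer u v) M = dot u (mulVec M v) := by
  simp only [innerF, outer, dot, mulVec, Finset.mul_sum]
  exact Finset.sum_congr rfl fun k _ => Finset.sum_congr rfl fun l _ => by ring

/-! ### Layer products with frozen sign patterns -/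

/-- `layerProd V s a b = D_b V_b ⋯ D_{a+1} V_{a+1}` as a linear map, where `D_ℓ` is the diagonal
matrix of `s ℓ`; it is the identity for `b ≤ a`. -/
def layerProd (V : ℕ → Fin m → Fin m → ℝ) (s : ℕ → Fin m → ℝ) (a : ℕ) :
    ℕ → (Fin m → ℝ) →ₗ[ℝ] (Fin m → ℝ)
  | 0 => LinearMap.id
  | b + 1 =>
      if a ≤ b then mvL (diagMat (s (b + 1))) ∘ₗ mvL (V (b + 1)) ∘ₗ layerProd V s a b
      else LinearMap.id

lemma layerProd_of_le (V : ℕ → Fin m → Fin m → ℝ) (s : ℕ → Fin m → ℝ) {a b : ℕ} (h : b ≤ a)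
    (v : Fin m → ℝ) : layerProd V s a b v = v := by
  cases b with
  | zero => rfl
  | succ b => rw [layerProd, if_neg (by omega)]; rfl

lemma layerProd_succ (V : ℕ → Fin m → Fin m → ℝ) (s : ℕ → Fin m → ℝ) {a b : ℕ} (h : a ≤ b)
    (v : Fin m → ℝ) :
    layerProd V s a (b + 1) v = s (b + 1) * mulVec (V (b + 1)) (layerProd V s a b v) := by
  rw [layerProd, if_pos h]; simp [mulVec_diagMat]

/-- Peeling off the first layer of a product. -/
lemma layerProd_peel (V : ℕ → Fin m → Fin m → ℝ) (s : ℕ → Fin m → ℝ) {a b : ℕ} (h : a < b)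
    (v : Fin m → ℝ) :
    layerProd V s a b v = layerProd V s (a + 1) b (s (a + 1) * mulVec (V (a + 1)) v) := by
  induction b with
  | zero => omega
  | succ b ih =>
    rw [layerProd_succ _ _ (by omega)]
    rcases Nat.lt_or_ge a b with h' | h'
    · rw [ih h', layerProd_succ _ _ (by omega)]
    · obtain rfl : a = b := by omega
      rw [layerProd_of_le _ _ le_rfl, layerProd_of_le _ _ le_rfl]

lemma mulVec_chainProd (W : Fin L → Fin m → Fin m → ℝ) (s : ℕ → Fin m → ℝ) (a : ℕ) {b : ℕ}
    (hb : b ≤ L) (v : Fin m → ℝ) :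
    mulVec (chainProd W s (a + 1) b) v = layerProd (Wat W) s a b v := by
  induction b with
  | zero => simp [chainProd, mulVec_idMat, layerProd]
  | succ b ih =>
    rw [chainProd]
    split_ifs with h
    · rw [mulVec_mmul, mulVec_mmul, ih (by omega), mulVec_diagMat, layerProd_succ _ _ (by omega)]
    · rw [ih (by omega), layerProd_of_le _ _ (by omega), layerProd_of_le _ _ (by omega)]

lemma signOf_abs_le {p : ℕ} (g : Fin p → ℝ) (k) : |signOf g k| ≤ 1 := by
  unfold signOf; split_ifs <;> simp

lemma relu_eq {p : ℕ} (g : Fin p → ℝ) : relu g = signOf g * g := by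
  funext k; simp only [relu, signOf, Pi.mul_apply]
  split_ifs with h
  · simp [h]
  · simp [(not_le.1 h).le]

lemma l2_relu_sub_le {p : ℕ} (u v : Fin p → ℝ) : l2 (relu u - relu v) ≤ l2 (u - v) :=
  l2_mono fun _ => abs_max_sub_max_le_abs _ _ _

/-! ### Forward perturbation of the network -/

/-- `g`, `h` are the pre- and post-activations of an `L`-layer ReLU network with weights `V`. -/
structure IsNet (L : ℕ) (V : ℕ → Fin m → Fin m → ℝ) (g h : ℕ → Fin m → ℝ) : Prop where
  hg : ∀ i < L, g (i + 1) = mulVec (V (i + 1)) (h i)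
  hh : ∀ i < L, h (i + 1) = relu (g (i + 1))

/-- Coordinates whose activation differs between two pre-activations. -/
def flipSet {p : ℕ} (u v : Fin p → ℝ) : Finset (Fin p) :=
  Finset.univ.filter fun k => signOf v k ≠ signOf u k

/-- The activation error `(D̃ - D) g̃` caused by sign flips from `u` to `v`. -/
def flipErr {p : ℕ} (u v : Fin p → ℝ) : Fin p → ℝ := (signOf v - signOf u) * v

lemma signDiff_supp {p : ℕ} (u v w : Fin p → ℝ) :
    ∀ k, k ∉ flipSet u v → ((signOf v - signOf u) * w) k = 0 := fun k hk => by
  simp only [flipSet, Finset.mem_filter, Finset.mem_univ, true_and, not_not] at hk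
  simp [hk]

lemma signDiff_abs_le {p : ℕ} (u v : Fin p → ℝ) (k) : |(signOf v - signOf u) k| ≤ 1 := by
  simp only [Pi.sub_apply, signOf]; split_ifs <;> simp

lemma flip_abs_le {p : ℕ} {u v : Fin p → ℝ} {k} (hk : k ∈ flipSet u v) :
    |u k| ≤ |v k - u k| ∧ |v k| ≤ |v k - u k| := by
  replace hk : signOf v k ≠ signOf u k := (Finset.mem_filter.1 hk).2
  simp only [signOf] at hk
  rcases le_or_gt 0 (u k) with h1 | h1 <;> rcases le_or_gt 0 (v k) with h2 | h2
  · simp [h1, h2] at hk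
  · rw [abs_of_nonneg h1, abs_of_neg h2, abs_of_neg (by linarith)]; constructor <;> linarith
  · rw [abs_of_neg h1, abs_of_nonneg h2, abs_of_pos (by linarith)]; constructor <;> linarith
  · simp [not_le.2 h1, not_le.2 h2] at hk

lemma l2_flipErr_le {p : ℕ} (u v : Fin p → ℝ) :
    l2 (flipErr u v) ≤ l2 (restr (flipSet u v) (v - u)) := l2_mono fun k => by
  by_cases hk : k ∈ flipSet u v
  · simp only [restr, hk, if_true, flipErr, Pi.mul_apply, abs_mul]
    exact (mul_le_of_le_one_left (abs_nonneg _) (signDiff_abs_le u v k)).trans (flip_abs_le hk).2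
  · rw [flipErr, signDiff_supp u v v k hk]; simp

/-- Source term injected at layer `i` in the expansion of `h̃ - h`. -/
def fwdSrc (U : ℕ → Fin m → Fin m → ℝ) (g gt ht : ℕ → Fin m → ℝ) (i : ℕ) : Fin m → ℝ :=
  signOf (g i) * mulVec (U i) (ht (i - 1)) + flipErr (g i) (gt i)

lemma fwd_h_succ {V U : ℕ → Fin m → Fin m → ℝ} {g h gt ht : ℕ → Fin m → ℝ}
    (hN : IsNet L V g h) (hN' : IsNet L (fun i => V i + U i) gt ht) {l : ℕ} (hl : l < L) :
    gt (l + 1) - g (l + 1) = mulVec (V (l + 1)) (ht l - h l) + mulVec (U (l + 1)) (ht l) ∧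
    ht (l + 1) - h (l + 1) =
      signOf (g (l + 1)) * mulVec (V (l + 1)) (ht l - h l) + fwdSrc U g gt ht (l + 1) := by
  have h1 : gt (l + 1) - g (l + 1) =
      mulVec (V (l + 1)) (ht l - h l) + mulVec (U (l + 1)) (ht l) := by
    rw [hN.hg l hl, hN'.hg l hl, mulVec_add_mat]
    have := (mvL (V (l + 1))).map_sub (ht l) (h l)
    simp only [mvL_apply] at this
    rw [this]; abel
  refine ⟨h1, ?_⟩
  have h2 : ht (l + 1) - h (l + 1) = signOf (g (l + 1)) * (gt (l + 1) - g (l + 1)) +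
      flipErr (g (l + 1)) (gt (l + 1)) := by
    rw [hN.hh l hl, hN'.hh l hl, relu_eq, relu_eq, flipErr]; ring
  rw [h2, h1, fwdSrc, Nat.add_sub_cancel]; ring

/-- Duhamel expansion of `h̃ - h` along the sign patterns of the unperturbed network: every layer
injects a source term, which the frozen layer products transport forward. -/
lemma fwd_expand {V U : ℕ → Fin m → Fin m → ℝ} {g h gt ht : ℕ → Fin m → ℝ}
    (hN : IsNet L V g h) (hN' : IsNet L (fun i => V i + U i) gt ht) (h0 : ht 0 = h 0)
    {l : ℕ} (hl : l ≤ L) :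
    ht l - h l = ∑ i ∈ Finset.range l,
      layerProd V (fun i => signOf (g i)) (i + 1) l (fwdSrc U g gt ht (i + 1)) := by
  induction l with
  | zero => simp [h0]
  | succ l ih =>
    rw [(fwd_h_succ hN hN' (by omega)).2, ih (by omega), Finset.sum_range_succ,
      layerProd_of_le _ _ le_rfl]
    congr 1
    rw [← mulVec_diagMat, ← mvL_apply, ← mvL_apply, map_sum, map_sum]
    refine Finset.sum_congr rfl fun i hi => ?_
    rw [Finset.mem_range] at hi
    rw [layerProd_succ _ _ (by omega), mvL_apply, mvL_apply, mulVec_diagMat]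

/-- Closing the loop in a Grönwall-type recursion: if each `X j` is controlled by its own
weight `ε j` and by bounds `y`, `z` for the accumulated sums, then the new sums obey the same
bounds, with room to spare in the second one. -/
lemma closing_step {s : Finset ℕ} {X ε : ℕ → ℝ} {L : ℕ} {E Γ ρ y : ℝ} (hL : 0 < L)
    (hs : s.card ≤ L) (hε : ∀ j ∈ s, 0 ≤ ε j) (hE : L * ∑ j ∈ s, ε j ^ 2 ≤ E)
    (hE0 : 0 ≤ E) (hE1 : E ≤ 1 / 16)
    (hΓ : 0 ≤ Γ) (hρ : 0 ≤ ρ) (hy : y = 2 * (Γ * Real.sqrt E + L * ρ))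
    (hX : ∀ j ∈ s, X j ≤ Γ * ε j + ρ + y / (4 * L) + ε j * y) :
    ∑ j ∈ s, X j ≤ y ∧ ∑ j ∈ s, ε j * X j ≤ Real.sqrt E * y / L ∧
      ∑ j ∈ s, ε j * X j ≤ y / (4 * L) := by
  have hL' : (0 : ℝ) < L := by exact_mod_cast hL
  set q := Real.sqrt E with hq
  have hq0 : 0 ≤ q := Real.sqrt_nonneg _
  have hqq : q * q = E := Real.mul_self_sqrt hE0
  have hq4 : q ≤ 1 / 4 := by nlinarith
  have hy0 : 0 ≤ y := by rw [hy]; positivity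
  have hcard : (s.card : ℝ) ≤ L := by exact_mod_cast hs
  have hsum : ∑ j ∈ s, ε j ≤ q := by
    have h1 := sq_sum_le_card_mul_sum_sq (s := s) (f := ε)
    have h2 : (s.card : ℝ) * ∑ j ∈ s, ε j ^ 2 ≤ E :=
      le_trans (mul_le_mul_of_nonneg_right hcard (Finset.sum_nonneg fun _ _ => sq_nonneg _)) hE
    exact Real.le_sqrt_of_sq_le (h1.trans h2)
  have hsum2 : ∑ j ∈ s, ε j ^ 2 ≤ E / L := by rw [le_div_iff₀ hL']; linarith
  have hz0 : 0 ≤ y / (4 * L) := by positivity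
  have hLz : L * (y / (4 * L)) = y / 4 := by field_simp
  have hA : ∑ j ∈ s, X j ≤ Γ * q + L * ρ + L * (y / (4 * L)) + q * y := by
    calc ∑ j ∈ s, X j ≤ ∑ j ∈ s, (Γ * ε j + ρ + y / (4 * L) + ε j * y) := Finset.sum_le_sum hX
      _ = Γ * ∑ j ∈ s, ε j + s.card * ρ + s.card * (y / (4 * L)) + (∑ j ∈ s, ε j) * y := by
        simp [Finset.sum_add_distrib, Finset.mul_sum, Finset.sum_mul]
      _ ≤ _ := by gcongr
  have hB : ∑ j ∈ s, ε j * X j ≤ q / L * (Γ * q + L * ρ + L * (y / (4 * L)) + q * y) := by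
    calc ∑ j ∈ s, ε j * X j
        ≤ ∑ j ∈ s, ε j * (Γ * ε j + ρ + y / (4 * L) + ε j * y) :=
          Finset.sum_le_sum fun j hj => mul_le_mul_of_nonneg_left (hX j hj) (hε j hj)
      _ = Γ * ∑ j ∈ s, ε j ^ 2 + (∑ j ∈ s, ε j) * (ρ + y / (4 * L)) +
            (∑ j ∈ s, ε j ^ 2) * y := by
        simp only [Finset.mul_sum, Finset.sum_mul, ← Finset.sum_add_distrib]
        exact Finset.sum_congr rfl fun j _ => by ring
      _ ≤ Γ * (E / L) + q * (ρ + y / (4 * L)) + (E / L) * y := by gcongr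
      _ = _ := by rw [← hqq]; field_simp; ring
  have hC : Γ * q + L * ρ + L * (y / (4 * L)) + q * y ≤ y := by
    rw [hLz]; nlinarith
  refine ⟨hA.trans hC, ?_, ?_⟩
  · refine hB.trans ?_
    rw [div_mul_eq_mul_div]
    gcongr
  · refine hB.trans ((mul_le_mul_of_nonneg_left hC (by positivity)).trans ?_)
    rw [div_mul_eq_mul_div, div_le_div_iff₀ hL' (by positivity)]
    nlinarith [mul_nonneg hy0 hL'.le]

/-! ### Regularity hypotheses and the forward induction -/

/-- Regularity of the frozen layer products: operator norm at most `κ`, and pairings of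
sparse vectors of total sparsity `n` smaller by the factor `η √(n + t)`. -/
structure RegV (L : ℕ) (V : ℕ → Fin m → Fin m → ℝ) (g : ℕ → Fin m → ℝ) (κ η t N : ℝ) : Prop where
  op : ∀ a b v, a ≤ b → b < L →
    l2 (mulVec (V (b + 1)) (layerProd V (fun i => signOf (g i)) a b v)) ≤ κ * l2 v
  sp : ∀ a b (u v : Fin m → ℝ) (S S' : Finset (Fin m)), a ≤ b → b < L →
    (∀ k, k ∉ S → u k = 0) → (∀ k, k ∉ S' → v k = 0) → (S.card : ℝ) + S'.card + t ≤ N →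
    |dot u (mulVec (V (b + 1)) (layerProd V (fun i => signOf (g i)) a b v))| ≤
      η * Real.sqrt (S.card + S'.card + t) * (l2 u * l2 v)

/-- The analogous regularity of the backward vectors started from the output row `b`. -/
structure RegB (L : ℕ) (V : ℕ → Fin m → Fin m → ℝ) (g : ℕ → Fin m → ℝ) (b : Fin m → ℝ)
    (κB Γ η t N : ℝ) : Prop where
  op : ∀ a v, a ≤ L → |dot b (layerProd V (fun i => signOf (g i)) a L v)| ≤ κB * l2 v
  sp : ∀ a (v : Fin m → ℝ) (S : Finset (Fin m)), a ≤ L → (∀ k, k ∉ S → v k = 0) →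
    (S.card : ℝ) + t ≤ N →
    |dot b (layerProd V (fun i => signOf (g i)) a L v)| ≤
      Γ * (η * Real.sqrt (S.card + t)) * l2 v

/-- Coordinates of a pre-activation that are within `τ` of the ReLU kink. -/
def nearSet {p : ℕ} (τ : ℝ) (g : Fin p → ℝ) : Finset (Fin p) :=
  Finset.univ.filter fun k => |g k| ≤ τ

/-- The weight `η √(sc i + t)` of layer `i` in the perturbation recursions. -/
def layWt (η t : ℝ) (sc : ℕ → ℕ) (i : ℕ) : ℝ := η * Real.sqrt (sc i + t)

/-- Deterministic hypotheses under which a perturbation of spectral size `ω` is analysed.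
`sc i` is the allowed number of sign flips in layer `i`. -/
structure PertHyp (L : ℕ) (V U : ℕ → Fin m → Fin m → ℝ) (g h gt ht : ℕ → Fin m → ℝ)
    (κ η t N ω τ E : ℝ) (n : ℕ) (sc : ℕ → ℕ) : Prop where
  hL : 0 < L
  net : IsNet L V g h
  net' : IsNet L (fun i => V i + U i) gt ht
  h0 : ht 0 = h 0
  reg : RegV L V g κ η t N
  hU : ∀ i ∈ Finset.Icc 1 L, ∀ v, l2 (mulVec (U i) v) ≤ ω * l2 v
  hh : ∀ i ≤ L, l2 (h i) ≤ 2
  κ1 : 1 ≤ κ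
  η0 : 0 ≤ η
  t0 : 0 ≤ t
  ω0 : 0 ≤ ω
  τ0 : 0 ≤ τ
  E0 : 0 ≤ E
  E1 : E ≤ 1 / 16
  hsc : ∀ i, sc i = (nearSet τ (g i)).card + n
  hn : 9 * (3 * ω * L * κ) ^ 2 < τ ^ 2 * (n + 1)
  hηy : η * (2 * L * (3 * ω * L * κ)) ≤ τ / 2
  hE : L * ∑ i ∈ Finset.Icc 1 L, layWt η t sc i ^ 2 ≤ E
  hG : (1 + 2 * L * κ) * (3 * ω * L * κ) ≤ 1
  hN : ∀ i ∈ Finset.Icc 1 L, ∀ j ∈ Finset.Icc 1 L, (sc i : ℝ) + sc j + t ≤ N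
  hN' : ∀ i ∈ Finset.Icc 1 L, (n : ℝ) + 1 + sc i + t ≤ N

lemma sqrt_add_three_le {a b t : ℝ} (ha : 0 ≤ a) (hb : 0 ≤ b) (ht : 0 ≤ t) :
    Real.sqrt (a + b + t) ≤ Real.sqrt a + Real.sqrt (b + t) := by
  rw [add_assoc]
  refine Real.sqrt_le_iff.2 ⟨by positivity, ?_⟩
  have h1 := Real.sq_sqrt ha
  have h2 := Real.sq_sqrt (add_nonneg hb ht)
  have h3 := mul_nonneg (Real.sqrt_nonneg a) (Real.sqrt_nonneg (b + t))
  nlinarith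

section forward

variable {V U : ℕ → Fin m → Fin m → ℝ} {g h gt ht : ℕ → Fin m → ℝ}
  {κ η t N ω τ E : ℝ} {n : ℕ} {sc : ℕ → ℕ}

lemma PertHyp.layerProd_le (H : PertHyp L V U g h gt ht κ η t N ω τ E n sc) {a b : ℕ}
    (hb : b ≤ L) (v : Fin m → ℝ) :
    l2 (layerProd V (fun i => signOf (g i)) a b v) ≤ κ * l2 v := by
  rcases Nat.lt_or_ge a b with h1 | h1
  · obtain ⟨b, rfl⟩ : ∃ b', b = b' + 1 := ⟨b - 1, by omega⟩
    rw [layerProd_succ _ _ (by omega)]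
    exact (l2_mul_le (signOf_abs_le _) _).trans (H.reg.op a b v (by omega) (by omega))
  · rw [layerProd_of_le _ _ h1]
    exact le_mul_of_one_le_left (l2_nonneg _) H.κ1

/-- The change of the pre-activation is the response to sign flips plus a remainder coming
linearly from the weight perturbation. -/
lemma PertHyp.fwd_split (H : PertHyp L V U g h gt ht κ η t N ω τ E n sc) {l : ℕ} (hl : l < L)
    (hht : ∀ i ≤ l, l2 (ht i) ≤ 3) :
    ∃ R : Fin m → ℝ, l2 R ≤ 3 * ω * L * κ ∧
      gt (l + 1) - g (l + 1) = R + ∑ i ∈ Finset.Icc 1 l,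
        mulVec (V (l + 1)) (layerProd V (fun i => signOf (g i)) i l (flipErr (g i) (gt i))) := by
  have hω := H.ω0
  have hκ := H.κ1
  set f : ℕ → Fin m → ℝ := fun i => mulVec (V (l + 1)) (layerProd V (fun i => signOf (g i)) i l
    (signOf (g i) * mulVec (U i) (ht (i - 1)))) with hf
  have hUt : ∀ i ≤ l, l2 (mulVec (U (i + 1)) (ht i)) ≤ 3 * ω := fun i hi =>
    (H.hU (i + 1) (Finset.mem_Icc.2 ⟨by omega, by omega⟩) _).trans (by nlinarith [hht i hi])
  refine ⟨mulVec (U (l + 1)) (ht l) + ∑ i ∈ Finset.Icc 1 l, f i, ?_, ?_⟩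
  · have h1 : ∀ i ∈ Finset.Icc 1 l, l2 (f i) ≤ κ * (3 * ω) := fun i hi => by
      rw [Finset.mem_Icc] at hi
      refine (H.reg.op _ _ _ (by omega) hl).trans ?_
      gcongr
      refine (l2_mul_le (signOf_abs_le _) _).trans ?_
      have := hUt (i - 1) (by omega)
      rwa [Nat.sub_add_cancel hi.1] at this
    have h2 := l2_sum_le (Finset.Icc 1 l) f
    have h3 := Finset.sum_le_sum h1
    rw [Finset.sum_const, Nat.card_Icc, Nat.add_sub_cancel, nsmul_eq_mul] at h3
    have hlL : (l : ℝ) + 1 ≤ L := by exact_mod_cast hl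
    have h4 := hUt l le_rfl
    refine (l2_add_le _ _).trans ?_
    have h5 : 3 * ω ≤ κ * (3 * ω) := by nlinarith
    have h6 : (l + 1 : ℝ) * (κ * (3 * ω)) ≤ L * (κ * (3 * ω)) := by gcongr
    nlinarith
  · rw [(fwd_h_succ H.net H.net' hl).1, fwd_expand H.net H.net' H.h0 hl.le, add_comm, add_assoc]
    congr 1
    rw [← Finset.sum_add_distrib, ← mvL_apply, map_sum, Finset.range_eq_Ico,
      Finset.sum_Ico_add' (fun i => (mvL (V (l + 1)))
        (layerProd V (fun i => signOf (g i)) i l (fwdSrc U g gt ht i))) 0 l 1]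
    refine Finset.sum_congr (by ext; simp) fun i _ => ?_
    rw [fwdSrc, map_add, map_add]; rfl

lemma flipErr_supp {p : ℕ} (u v : Fin p → ℝ) :
    ∀ k, k ∉ flipSet u v → flipErr u v k = 0 := signDiff_supp u v v

/-- Testing the change of the pre-activation against a sparse vector. -/
lemma PertHyp.fwd_pair (H : PertHyp L V U g h gt ht κ η t N ω τ E n sc) {l : ℕ} (hl : l < L)
    (hht : ∀ i ≤ l, l2 (ht i) ≤ 3)
    (hF : ∀ i ∈ Finset.Icc 1 l, (flipSet (g i) (gt i)).card ≤ sc i)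
    (S : Finset (Fin m)) (hS : ∀ i ∈ Finset.Icc 1 l, (S.card : ℝ) + sc i + t ≤ N) :
    l2 (restr S (gt (l + 1) - g (l + 1))) ≤ 3 * ω * L * κ +
      ∑ i ∈ Finset.Icc 1 l, layWt η t sc i * l2 (flipErr (g i) (gt i)) +
      η * Real.sqrt S.card * ∑ i ∈ Finset.Icc 1 l, l2 (flipErr (g i) (gt i)) := by
  obtain ⟨R, hR, hs⟩ := H.fwd_split hl hht
  have hη := H.η0
  have ht := H.t0
  set G := gt (l + 1) - g (l + 1)
  set u := restr S G with hu
  have hG0 : 0 ≤ 3 * ω * L * κ := (l2_nonneg _).trans hR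
  have hsum0 : 0 ≤ ∑ i ∈ Finset.Icc 1 l, layWt η t sc i * l2 (flipErr (g i) (gt i)) :=
    Finset.sum_nonneg fun i _ => by 
    have := l2_nonneg (flipErr (g i) (gt i)); unfold layWt; positivity
  have hsum1 : 0 ≤ ∑ i ∈ Finset.Icc 1 l, l2 (flipErr (g i) (gt i)) :=
    Finset.sum_nonneg fun i _ => l2_nonneg _
  rcases eq_or_ne u 0 with h0 | h0
  · rw [h0, l2_zero]; positivity
  have hpos := l2_pos h0
  have h1 : l2 u ^ 2 = dot u G := by rw [hu, dot_restr_self]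
  have h2 : dot u G ≤ l2 u * (3 * ω * L * κ) + ∑ i ∈ Finset.Icc 1 l,
      (η * Real.sqrt S.card + layWt η t sc i) * (l2 u * l2 (flipErr (g i) (gt i))) := by
    rw [hs, dot_add, dot_sum]
    refine add_le_add ((le_abs_self _).trans ((abs_dot_le _ _).trans (by gcongr)))
      (Finset.sum_le_sum fun i hi => ?_)
    have hi' := Finset.mem_Icc.1 hi
    have hc : ((flipSet (g i) (gt i)).card : ℝ) ≤ sc i := by exact_mod_cast hF i hi
    refine (le_abs_self _).trans ((H.reg.sp i l u _ S (flipSet (g i) (gt i)) hi'.2 hl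
      (restr_supp _ _) (flipErr_supp _ _) ?_).trans ?_)
    · linarith [hS i hi]
    · have := l2_nonneg (flipErr (g i) (gt i))
      gcongr
      have h3 : Real.sqrt (S.card + (flipSet (g i) (gt i)).card + t) ≤
          Real.sqrt S.card + Real.sqrt (sc i + t) := by
        refine le_trans (Real.sqrt_le_sqrt ?_) (sqrt_add_three_le (Nat.cast_nonneg _)
          (Nat.cast_nonneg _) ht)
        gcongr
      rw [layWt]; nlinarith
  have h4 : ∑ i ∈ Finset.Icc 1 l,
      (η * Real.sqrt S.card + layWt η t sc i) * (l2 u * l2 (flipErr (g i) (gt i))) =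
      l2 u * (∑ i ∈ Finset.Icc 1 l, layWt η t sc i * l2 (flipErr (g i) (gt i)) +
      η * Real.sqrt S.card * ∑ i ∈ Finset.Icc 1 l, l2 (flipErr (g i) (gt i))) := by
    rw [Finset.mul_sum, ← Finset.sum_add_distrib, Finset.mul_sum]
    exact Finset.sum_congr rfl fun i _ => by ring
  rw [h4] at h2
  refine le_of_mul_le_mul_left ?_ hpos
  nlinarith

lemma PertHyp.fwd_op (H : PertHyp L V U g h gt ht κ η t N ω τ E n sc) {l : ℕ} (hl : l < L)
    (hht : ∀ i ≤ l, l2 (ht i) ≤ 3) :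
    l2 (gt (l + 1) - g (l + 1)) ≤ 3 * ω * L * κ +
      κ * ∑ i ∈ Finset.Icc 1 l, l2 (flipErr (g i) (gt i)) := by
  obtain ⟨R, hR, hs⟩ := H.fwd_split hl hht
  rw [hs, Finset.mul_sum]
  refine (l2_add_le _ _).trans (add_le_add hR ((l2_sum_le _ _).trans
    (Finset.sum_le_sum fun i hi => ?_)))
  exact H.reg.op _ _ _ (Finset.mem_Icc.1 hi).2 hl

/-- Per-layer conclusion of the forward analysis. -/
structure FwdOK (L : ℕ) (g gt : ℕ → Fin m → ℝ) (κ η t ω : ℝ) (sc : ℕ → ℕ) (i : ℕ) : Prop where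
  card : (flipSet (g i) (gt i)).card ≤ sc i
  err : l2 (flipErr (g i) (gt i)) ≤
    3 * ω * L * κ + 3 * ω * L * κ / 2 + layWt η t sc i * (2 * (L * (3 * ω * L * κ)))
  diff : l2 (gt i - g i) ≤ (1 + 2 * L * κ) * (3 * ω * L * κ)

lemma layWt_nonneg (hη : 0 ≤ η) (sc : ℕ → ℕ) (i : ℕ) : 0 ≤ layWt η t sc i := by
  unfold layWt; positivity

/-- Sums over the layers controlled so far. -/
lemma PertHyp.fwd_sums (H : PertHyp L V U g h gt ht κ η t N ω τ E n sc) {l : ℕ} (hl : l ≤ L)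
    (ih : ∀ i ∈ Finset.Icc 1 l, FwdOK L g gt κ η t ω sc i) :
    ∑ i ∈ Finset.Icc 1 l, l2 (flipErr (g i) (gt i)) ≤ 2 * (L * (3 * ω * L * κ)) ∧
    ∑ i ∈ Finset.Icc 1 l, layWt η t sc i * l2 (flipErr (g i) (gt i)) ≤
      2 * Real.sqrt E * (3 * ω * L * κ) ∧
    ∑ i ∈ Finset.Icc 1 l, layWt η t sc i * l2 (flipErr (g i) (gt i)) ≤ 3 * ω * L * κ / 2 := by
  have hω := H.ω0
  have hκ := H.κ1
  have hL' : (0 : ℝ) < L := by exact_mod_cast H.hL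
  have hsub : Finset.Icc 1 l ⊆ Finset.Icc 1 L := Finset.Icc_subset_Icc le_rfl hl
  have key := closing_step (s := Finset.Icc 1 l) (X := fun i => l2 (flipErr (g i) (gt i)))
    (ε := layWt η t sc) (L := L) (E := E) (Γ := 0) (ρ := 3 * ω * L * κ)
    (y := 2 * (0 * Real.sqrt E + L * (3 * ω * L * κ))) H.hL (by simpa using hl)
    (fun j _ => layWt_nonneg H.η0 sc j)
    (le_trans (mul_le_mul_of_nonneg_left (Finset.sum_le_sum_of_subset_of_nonneg hsub
      fun _ _ _ => sq_nonneg _) hL'.le) H.hE) H.E0 H.E1 le_rfl (by positivity) rfl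
    (fun j hj => by
      refine (ih j hj).err.trans (le_of_eq ?_)
      field_simp; ring)
  refine ⟨key.1.trans (by simp), key.2.1.trans (le_of_eq ?_), key.2.2.trans (le_of_eq ?_)⟩
  · field_simp; ring
  · field_simp; ring

lemma PertHyp.fwd_h_le (H : PertHyp L V U g h gt ht κ η t N ω τ E n sc) {l : ℕ} (hl : l ≤ L)
    (ih : ∀ i ∈ Finset.Icc 1 l, FwdOK L g gt κ η t ω sc i) {i : ℕ} (hi : i ≤ l) :
    l2 (ht i - h i) ≤ (1 + 2 * L * κ) * (3 * ω * L * κ) ∧ l2 (ht i) ≤ 3 := by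
  have hω := H.ω0
  have hκ := H.κ1
  have h1 : l2 (ht i - h i) ≤ (1 + 2 * L * κ) * (3 * ω * L * κ) := by
    rcases i with _ | i
    · rw [H.h0, sub_self, l2_zero]; positivity
    · rw [H.net.hh i (by omega), H.net'.hh i (by omega)]
      exact (l2_relu_sub_le _ _).trans (ih (i + 1) (Finset.mem_Icc.2 ⟨by omega, hi⟩)).diff
  refine ⟨h1, ?_⟩
  have h2 := l2_add_le (ht i - h i) (h i)
  rw [sub_add_cancel] at h2
  linarith [H.hh i (by omega), H.hG]

/-- One layer of the forward induction. A coordinate that flips away from the kink has moved by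
more than `τ`; too many of these would contradict the sparse pairing bound. -/
lemma PertHyp.fwd_step (H : PertHyp L V U g h gt ht κ η t N ω τ E n sc) {l : ℕ} (hl : l < L)
    (ih : ∀ i ∈ Finset.Icc 1 l, FwdOK L g gt κ η t ω sc i) :
    FwdOK L g gt κ η t ω sc (l + 1) := by
  have hω := H.ω0
  have hκ := H.κ1
  have hη := H.η0
  have hτ := H.τ0
  obtain ⟨hY, -, hZ⟩ := H.fwd_sums hl.le ih
  have hY0 : 0 ≤ ∑ i ∈ Finset.Icc 1 l, l2 (flipErr (g i) (gt i)) :=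
    Finset.sum_nonneg fun i _ => l2_nonneg _
  have hht : ∀ i ≤ l, l2 (ht i) ≤ 3 := fun i hi => (H.fwd_h_le hl.le ih hi).2
  have hF : ∀ i ∈ Finset.Icc 1 l, (flipSet (g i) (gt i)).card ≤ sc i := fun i hi => (ih i hi).card
  have hmem : ∀ i ∈ Finset.Icc 1 l, i ∈ Finset.Icc 1 L := fun i hi =>
    Finset.Icc_subset_Icc le_rfl hl.le hi
  have hl1 : l + 1 ∈ Finset.Icc 1 L := Finset.mem_Icc.2 ⟨by omega, hl⟩
  have hP0 : 0 ≤ 3 * ω * L * κ := by positivity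
  have hcard : (flipSet (g (l + 1)) (gt (l + 1))).card ≤ sc (l + 1) := by
    by_contra hcon
    rw [not_le, H.hsc] at hcon
    have h1 := Finset.card_le_card_sdiff_add_card (t := nearSet τ (g (l + 1)))
      (s := flipSet (g (l + 1)) (gt (l + 1)))
    obtain ⟨S, hS, hSc⟩ := Finset.exists_subset_card_eq
      (show n + 1 ≤ (flipSet (g (l + 1)) (gt (l + 1)) \ nearSet τ (g (l + 1))).card by omega)
    have hSc' : (S.card : ℝ) = n + 1 := by rw [hSc]; push_cast; ring
    have h2 := H.fwd_pair hl hht hF S (fun i hi => by rw [hSc']; exact H.hN' i (hmem i hi))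
    have h3 : τ * Real.sqrt S.card ≤ l2 (restr S (gt (l + 1) - g (l + 1))) := by
      refine sqrt_card_le_l2_restr _ _ hτ fun k hk => ?_
      have hk' := Finset.mem_sdiff.1 (hS hk)
      have h4 : τ < |g (l + 1) k| := by
        by_contra h5
        exact hk'.2 (Finset.mem_filter.2 ⟨Finset.mem_univ _, not_lt.1 h5⟩)
      exact h4.le.trans (flip_abs_le hk'.1).1
    rw [hSc'] at h2 h3
    set q := Real.sqrt ((n : ℝ) + 1)
    have hq0 : 0 ≤ q := Real.sqrt_nonneg _
    have hqq : q ^ 2 = n + 1 := Real.sq_sqrt (by positivity)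
    have h4 : η * q * ∑ i ∈ Finset.Icc 1 l, l2 (flipErr (g i) (gt i)) ≤ q * (τ / 2) := by
      calc _ ≤ η * q * (2 * (L * (3 * ω * L * κ))) := by gcongr
        _ = q * (η * (2 * L * (3 * ω * L * κ))) := by ring
        _ ≤ _ := mul_le_mul_of_nonneg_left H.hηy hq0
    have h5 : τ * q ≤ 3 * (3 * ω * L * κ) := by linarith
    have h6 : (τ * q) ^ 2 ≤ (3 * (3 * ω * L * κ)) ^ 2 := by gcongr
    have := H.hn
    rw [mul_pow, hqq] at h6
    linarith
  refine ⟨hcard, ?_, ?_⟩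
  · refine (l2_flipErr_le _ _).trans ((H.fwd_pair hl hht hF _ (fun i hi => ?_)).trans ?_)
    · have : ((flipSet (g (l + 1)) (gt (l + 1))).card : ℝ) ≤ sc (l + 1) := by exact_mod_cast hcard
      linarith [H.hN (l + 1) hl1 i (hmem i hi)]
    · have h1 : η * Real.sqrt (flipSet (g (l + 1)) (gt (l + 1))).card ≤ layWt η t sc (l + 1) := by
        unfold layWt
        have : ((flipSet (g (l + 1)) (gt (l + 1))).card : ℝ) ≤ sc (l + 1) := by
          exact_mod_cast hcard
        have := H.t0
        gcongr
        linarith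
      have h2 := layWt_nonneg (t := t) hη sc (l + 1)
      gcongr
  · refine (H.fwd_op hl hht).trans ?_
    have : κ * ∑ i ∈ Finset.Icc 1 l, l2 (flipErr (g i) (gt i)) ≤
      κ * (2 * (L * (3 * ω * L * κ))) := by gcongr
    linarith

/-- Induction over the layers: at most `sc i` signs flip in layer `i`, and the response stays small. -/
lemma PertHyp.fwd_all (H : PertHyp L V U g h gt ht κ η t N ω τ E n sc) {l : ℕ} (hl : l ≤ L) :
    ∀ i ∈ Finset.Icc 1 l, FwdOK L g gt κ η t ω sc i := by
  induction l with
  | zero => intro i hi; simp at hi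
  | succ l ih =>
    intro i hi
    have ih' := ih (by omega)
    rw [Finset.mem_Icc] at hi
    rcases Nat.lt_or_ge i (l + 1) with h1 | h1
    · exact ih' i (Finset.mem_Icc.2 ⟨hi.1, by omega⟩)
    · obtain rfl : i = l + 1 := by omega
      exact H.fwd_step (by omega) ih'

/-- The first-order Taylor remainder of the output. -/
lemma PertHyp.output_remainder (H : PertHyp L V U g h gt ht κ η t N ω τ E n sc)
    {b : Fin m → ℝ} {κB Γ : ℝ} (hκB : 0 ≤ κB) (hΓ : 0 ≤ Γ) (HB : RegB L V g b κB Γ η t N) :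
    |dot b (ht L) - dot b (h L) - ∑ i ∈ Finset.Icc 1 L,
      dot b (layerProd V (fun i => signOf (g i)) i L (signOf (g i) * mulVec (U i) (h (i - 1))))| ≤
      L * (κB * (ω * ((1 + 2 * L * κ) * (3 * ω * L * κ)))) +
        Γ * (2 * Real.sqrt E * (3 * ω * L * κ)) := by
  have hω := H.ω0
  have hκ := H.κ1
  have hη := H.η0
  have hall := H.fwd_all le_rfl
  obtain ⟨-, hZ, -⟩ := H.fwd_sums le_rfl hall
  have h1 : dot b (ht L) - dot b (h L) = ∑ i ∈ Finset.Icc 1 L,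
      dot b (layerProd V (fun i => signOf (g i)) i L (fwdSrc U g gt ht i)) := by
    rw [← dot_sub, fwd_expand H.net H.net' H.h0 le_rfl, dot_sum, Finset.range_eq_Ico,
      Finset.sum_Ico_add' (fun i => dot b
        (layerProd V (fun i => signOf (g i)) i L (fwdSrc U g gt ht i))) 0 L 1]
    exact Finset.sum_congr (by ext; simp) fun i _ => rfl
  have h2 : ∀ i ∈ Finset.Icc 1 L,
      dot b (layerProd V (fun i => signOf (g i)) i L (fwdSrc U g gt ht i)) -
      dot b (layerProd V (fun i => signOf (g i)) i L
        (signOf (g i) * mulVec (U i) (h (i - 1)))) =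
      dot b (layerProd V (fun i => signOf (g i)) i L
        (signOf (g i) * mulVec (U i) (ht (i - 1) - h (i - 1)))) +
      dot b (layerProd V (fun i => signOf (g i)) i L (flipErr (g i) (gt i))) := fun i _ => by
    rw [← dot_sub, ← map_sub, ← dot_add, ← map_add]
    congr 2
    have := (mvL (U i)).map_sub (ht (i - 1)) (h (i - 1))
    simp only [mvL_apply] at this
    rw [fwdSrc, this]; ring
  rw [h1, ← Finset.sum_sub_distrib, Finset.sum_congr rfl h2, Finset.sum_add_distrib]
  refine (abs_add_le _ _).trans (add_le_add ?_ ?_)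
  · refine (Finset.abs_sum_le_sum_abs _ _).trans ?_
    have h3 : ∀ i ∈ Finset.Icc 1 L, |dot b (layerProd V (fun i => signOf (g i)) i L
        (signOf (g i) * mulVec (U i) (ht (i - 1) - h (i - 1))))| ≤
        κB * (ω * ((1 + 2 * L * κ) * (3 * ω * L * κ))) := fun i hi => by
      have hi' := Finset.mem_Icc.1 hi
      refine (HB.op i _ hi'.2).trans (mul_le_mul_of_nonneg_left ?_ hκB)
      refine (l2_mul_le (signOf_abs_le _) _).trans ((H.hU i hi _).trans ?_)
      exact mul_le_mul_of_nonneg_left (H.fwd_h_le le_rfl hall (by omega)).1 hω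
    have := Finset.sum_le_sum h3
    simpa using this
  · refine (Finset.abs_sum_le_sum_abs _ _).trans (le_trans (Finset.sum_le_sum fun i hi => ?_)
      ((Finset.mul_sum _ _ _).symm.le.trans (mul_le_mul_of_nonneg_left hZ hΓ)))
    have hc : ((flipSet (g i) (gt i)).card : ℝ) ≤ sc i := by exact_mod_cast (hall i hi).card
    have h0 := H.t0
    refine (HB.sp i _ _ (Finset.mem_Icc.1 hi).2 (flipErr_supp (g i) (gt i)) ?_).trans ?_
    · linarith [H.hN i hi i hi, (Nat.cast_nonneg (sc i) : (0 : ℝ) ≤ sc i)]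
    · rw [layWt, mul_assoc Γ]
      have := l2_nonneg (flipErr (g i) (gt i))
      gcongr

/-! ### Backward perturbation -/

/-- Replacing perturbed layers one at a time, starting from the first one. Here `γt p` represents
the perturbed functional `v ↦ ⟨b, T̃_{p→L} v⟩`. -/
lemma bwd_telescope {V U : ℕ → Fin m → Fin m → ℝ} {s st : ℕ → Fin m → ℝ} {γt : ℕ → Fin m → ℝ}
    (hγ : ∀ p < L, ∀ v, dot (γt p) v =
      dot (γt (p + 1)) (st (p + 1) * mulVec (V (p + 1) + U (p + 1)) v))
    {l p : ℕ} (hlp : l ≤ p) (hp : p ≤ L) (v : Fin m → ℝ) :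
    dot (γt l) v = dot (γt p) (layerProd V s l p v) + ∑ i ∈ Finset.Ico l p,
      (dot ((st (i + 1) - s (i + 1)) * γt (i + 1)) (mulVec (V (i + 1)) (layerProd V s l i v)) +
        dot (γt (i + 1)) (st (i + 1) * mulVec (U (i + 1)) (layerProd V s l i v))) := by
  induction p with
  | zero =>
    obtain rfl : l = 0 := by omega
    simp [layerProd]
  | succ p ih =>
    rcases Nat.lt_or_ge p l with h1 | h1
    · obtain rfl : l = p + 1 := by omega
      simp [layerProd_of_le]
    · rw [ih h1 (by omega), Finset.sum_Ico_succ_top h1, hγ p (by omega), layerProd_succ _ _ h1,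
        mulVec_add_mat, mul_add, dot_add, sub_mul, sub_dot, dot_mul, dot_mul, dot_mul]
      ring

/-- The constants of the backward analysis: `γ`, `γt` are the backward vectors of the original
and the perturbed network, `Bm` an a priori bound for the latter. -/
structure BwdHyp (L : ℕ) (V U : ℕ → Fin m → Fin m → ℝ) (g gt : ℕ → Fin m → ℝ) (b : Fin m → ℝ)
    (γ γt : ℕ → Fin m → ℝ) (κ κB Γ ω E Bm : ℝ) : Prop where
  hγ : ∀ a ≤ L, ∀ v, dot (γ a) v = dot b (layerProd V (fun i => signOf (g i)) a L v)
  hγt : ∀ a ≤ L, ∀ v, dot (γt a) v =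
    dot b (layerProd (fun i => V i + U i) (fun i => signOf (gt i)) a L v)
  hκB : 0 ≤ κB
  hΓ : 0 ≤ Γ
  hBm0 : 0 ≤ Bm
  hBm : κB + (κ * (2 * (Γ * Real.sqrt E + L * (L * ω * κ * Bm))) + L * ω * κ * Bm) ≤ Bm

section backward

variable {b : Fin m → ℝ} {γ γt : ℕ → Fin m → ℝ} {κB Γ Bm : ℝ}

/-- The part `(D̃_i - D_i) γ̃_i` of the perturbed backward vector living on flipped coordinates. -/
def bwdErr (g gt γt : ℕ → Fin m → ℝ) (i : ℕ) : Fin m → ℝ :=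
  (signOf (gt i) - signOf (g i)) * γt i

lemma BwdHyp.expand (HD : BwdHyp L V U g gt b γ γt κ κB Γ ω E Bm) {l : ℕ} (hl : l ≤ L)
    (v : Fin m → ℝ) :
    dot (γt l) v = dot (γ l) v + ∑ i ∈ Finset.Ico l L,
      (dot (bwdErr g gt γt (i + 1))
          (mulVec (V (i + 1)) (layerProd V (fun i => signOf (g i)) l i v)) +
        dot (γt (i + 1)) (signOf (gt (i + 1)) *
          mulVec (U (i + 1)) (layerProd V (fun i => signOf (g i)) l i v))) := by
  rw [bwd_telescope (s := fun i => signOf (g i)) (st := fun i => signOf (gt i)) (V := V) (U := U)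
    (L := L) (fun p hp v => ?_) hl le_rfl v]
  · rw [HD.hγt L le_rfl, HD.hγ l hl, layerProd_of_le _ _ le_rfl]; rfl
  · rw [HD.hγt p (by omega), HD.hγt (p + 1) (by omega), layerProd_peel _ _ hp]

/-- Per-layer conclusion of the backward analysis. -/
structure BwdOK (L : ℕ) (g gt γ γt : ℕ → Fin m → ℝ) (κ η t ω E Γ Bm : ℝ) (sc : ℕ → ℕ)
    (i : ℕ) : Prop where
  err : l2 (bwdErr g gt γt i) ≤ Γ * layWt η t sc i + L * ω * κ * Bm +
    (2 * (Γ * Real.sqrt E + L * (L * ω * κ * Bm))) / (4 * L) +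
    layWt η t sc i * (2 * (Γ * Real.sqrt E + L * (L * ω * κ * Bm)))
  diff : l2 (γt i - γ i) ≤
    κ * (2 * (Γ * Real.sqrt E + L * (L * ω * κ * Bm))) + L * ω * κ * Bm
  bd : l2 (γt i) ≤ Bm

/-- Summing the per-layer bounds over the layers already treated closes the recursion. -/
lemma bwd_sums (H : PertHyp L V U g h gt ht κ η t N ω τ E n sc)
    (HD : BwdHyp L V U g gt b γ γt κ κB Γ ω E Bm) {l : ℕ}
    (ih : ∀ i ∈ Finset.Icc (l + 1) L, BwdOK L g gt γ γt κ η t ω E Γ Bm sc i) :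
    ∑ i ∈ Finset.Icc (l + 1) L, l2 (bwdErr g gt γt i) ≤
      2 * (Γ * Real.sqrt E + L * (L * ω * κ * Bm)) ∧
    ∑ i ∈ Finset.Icc (l + 1) L, layWt η t sc i * l2 (bwdErr g gt γt i) ≤
      (2 * (Γ * Real.sqrt E + L * (L * ω * κ * Bm))) / (4 * L) := by
  have hω := H.ω0
  have hκ := H.κ1
  have hB := HD.hBm0
  have hL' : (0 : ℝ) < L := by exact_mod_cast H.hL
  have key := closing_step (s := Finset.Icc (l + 1) L) (X := fun i => l2 (bwdErr g gt γt i))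
    (ε := layWt η t sc) (L := L) (E := E) (Γ := Γ) (ρ := L * ω * κ * Bm)
    (y := 2 * (Γ * Real.sqrt E + L * (L * ω * κ * Bm))) H.hL (by simp)
    (fun j _ => layWt_nonneg H.η0 sc j)
    (le_trans (mul_le_mul_of_nonneg_left (Finset.sum_le_sum_of_subset_of_nonneg
      (Finset.Icc_subset_Icc (by omega) le_rfl)
      fun _ _ _ => sq_nonneg _) hL'.le) H.hE) H.E0 H.E1 HD.hΓ (by positivity) rfl
    (fun j hj => (ih j hj).err)
  exact ⟨key.1, key.2.2⟩

/-- One layer of the backward induction, run from the output towards the input: the error on the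
flipped coordinates is tested against itself, which is a sparse vector. -/
lemma bwd_step (H : PertHyp L V U g h gt ht κ η t N ω τ E n sc)
    (HB : RegB L V g b κB Γ η t N)
    (HD : BwdHyp L V U g gt b γ γt κ κB Γ ω E Bm) {l : ℕ} (hl1 : 1 ≤ l) (hl : l ≤ L)
    (ih : ∀ i ∈ Finset.Icc (l + 1) L, BwdOK L g gt γ γt κ η t ω E Γ Bm sc i) :
    BwdOK L g gt γ γt κ η t ω E Γ Bm sc l := by
  have hω := H.ω0
  have hκ := H.κ1
  have hη := H.η0
  have ht0 := H.t0
  have hB0 := HD.hBm0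
  have hΓ := HD.hΓ
  have hκ0 : 0 ≤ κ := by linarith
  have hall := H.fwd_all le_rfl
  obtain ⟨hY, hZ⟩ := bwd_sums H HD ih
  set y := 2 * (Γ * Real.sqrt E + L * (L * ω * κ * Bm)) with hy
  -- The sums over `Ico l L` with shifted index are sums over the later layers.
  have hshift : ∀ f : ℕ → ℝ, ∑ i ∈ Finset.Ico l L, f (i + 1) = ∑ i ∈ Finset.Icc (l + 1) L, f i := by
    intro f
    rw [Finset.sum_Ico_add' f l L 1]
    exact Finset.sum_congr (by ext; simp) fun i _ => rfl
  have hmem : ∀ i ∈ Finset.Ico l L, i + 1 ∈ Finset.Icc (l + 1) L := fun i hi => by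
    rw [Finset.mem_Ico] at hi; rw [Finset.mem_Icc]; omega
  -- The contribution of the weight perturbation.
  have hpert : ∀ v, ∀ i ∈ Finset.Ico l L, |dot (γt (i + 1)) (signOf (gt (i + 1)) *
      mulVec (U (i + 1)) (layerProd V (fun i => signOf (g i)) l i v))| ≤
      ω * κ * Bm * l2 v := fun v i hi => by
    have hi' := Finset.mem_Ico.1 hi
    refine (abs_dot_le _ _).trans ?_
    have h1 : l2 (signOf (gt (i + 1)) *
        mulVec (U (i + 1)) (layerProd V (fun i => signOf (g i)) l i v)) ≤ ω * (κ * l2 v) :=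
      (l2_mul_le (signOf_abs_le _) _).trans ((H.hU (i + 1)
        (Finset.mem_Icc.2 ⟨by omega, by omega⟩) _).trans
        (mul_le_mul_of_nonneg_left (H.layerProd_le (by omega) v) hω))
    calc _ ≤ Bm * (ω * (κ * l2 v)) := mul_le_mul (ih _ (hmem i hi)).bd h1 (l2_nonneg _) hB0
      _ = _ := by ring
  have hpertS : ∀ v, |∑ i ∈ Finset.Ico l L, dot (γt (i + 1)) (signOf (gt (i + 1)) *
      mulVec (U (i + 1)) (layerProd V (fun i => signOf (g i)) l i v))| ≤
      L * ω * κ * Bm * l2 v := fun v => by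
    refine (Finset.abs_sum_le_sum_abs _ _).trans ((Finset.sum_le_sum (hpert v)).trans ?_)
    rw [Finset.sum_const, Nat.card_Ico, nsmul_eq_mul]
    have : ((L - l : ℕ) : ℝ) ≤ L := by exact_mod_cast Nat.sub_le _ _
    have hv := l2_nonneg v
    calc _ ≤ (L : ℝ) * (ω * κ * Bm * l2 v) := by gcongr
      _ = _ := by ring
  have hdiff : l2 (γt l - γ l) ≤ κ * y + L * ω * κ * Bm := by
    refine l2_le_of_dot (by positivity) fun v => ?_
    rw [sub_dot, HD.expand hl, add_sub_cancel_left, Finset.sum_add_distrib]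
    refine (abs_add_le _ _).trans ?_
    rw [add_mul]
    refine add_le_add ?_ (hpertS v)
    refine (Finset.abs_sum_le_sum_abs _ _).trans ?_
    have h1 : ∀ i ∈ Finset.Ico l L, |dot (bwdErr g gt γt (i + 1))
        (mulVec (V (i + 1)) (layerProd V (fun i => signOf (g i)) l i v))| ≤
        l2 (bwdErr g gt γt (i + 1)) * (κ * l2 v) := fun i hi => by
      have hi' := Finset.mem_Ico.1 hi
      exact (abs_dot_le _ _).trans (mul_le_mul_of_nonneg_left
        (H.reg.op _ _ _ hi'.1 hi'.2) (l2_nonneg _))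
    refine (Finset.sum_le_sum h1).trans ?_
    rw [← Finset.sum_mul, hshift (fun i => l2 (bwdErr g gt γt i))]
    have hv := l2_nonneg v
    calc _ ≤ y * (κ * l2 v) := by gcongr
      _ = _ := by ring
  refine ⟨?_, hdiff, ?_⟩
  · set f := bwdErr g gt γt l with hf
    rcases eq_or_ne f 0 with h0 | h0
    · rw [h0, l2_zero]
      have := layWt_nonneg (t := t) hη sc l
      positivity
    have hpos := l2_pos h0
    set u := (signOf (gt l) - signOf (g l)) * f with hu
    have hul : l2 u ≤ l2 f := l2_mul_le (signDiff_abs_le _ _) _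
    have hl' : l ∈ Finset.Icc 1 L := Finset.mem_Icc.2 ⟨hl1, hl⟩
    have hsupp : ∀ k, k ∉ flipSet (g l) (gt l) → u k = 0 := signDiff_supp _ _ _
    have hc : ((flipSet (g l) (gt l)).card : ℝ) ≤ sc l := by exact_mod_cast (hall l hl').card
    have h1 : l2 f ^ 2 = dot (γt l) u := by
      rw [hu, dot_mul, ← dot_self]; rfl
    have h2 : |dot (γ l) u| ≤ Γ * layWt η t sc l * l2 f := by
      rw [HD.hγ l hl]
      refine (HB.sp l u _ hl hsupp ?_).trans ?_
      · linarith [H.hN l hl' l hl', (Nat.cast_nonneg (sc l) : (0 : ℝ) ≤ sc l)]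
      · rw [layWt]
        have := l2_nonneg u
        gcongr
    have h3 : |∑ i ∈ Finset.Ico l L, dot (bwdErr g gt γt (i + 1))
        (mulVec (V (i + 1)) (layerProd V (fun i => signOf (g i)) l i u))| ≤
        (y / (4 * L) + layWt η t sc l * y) * l2 f := by
      have h4 : ∀ i ∈ Finset.Ico l L, |dot (bwdErr g gt γt (i + 1))
          (mulVec (V (i + 1)) (layerProd V (fun i => signOf (g i)) l i u))| ≤
          (layWt η t sc (i + 1) * l2 (bwdErr g gt γt (i + 1)) +
            layWt η t sc l * l2 (bwdErr g gt γt (i + 1))) * l2 f := fun i hi => by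
        have hi' := Finset.mem_Ico.1 hi
        have hi1 : i + 1 ∈ Finset.Icc 1 L := Finset.mem_Icc.2 ⟨by omega, by omega⟩
        have hc' : ((flipSet (g (i + 1)) (gt (i + 1))).card : ℝ) ≤ sc (i + 1) := by
          exact_mod_cast (hall _ hi1).card
        refine (H.reg.sp l i _ u (flipSet (g (i + 1)) (gt (i + 1))) (flipSet (g l) (gt l))
          hi'.1 hi'.2 (show ∀ k, k ∉ _ → bwdErr g gt γt (i + 1) k = 0 from signDiff_supp _ _ _)
          hsupp ?_).trans ?_
        · linarith [H.hN (i + 1) hi1 l hl']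
        · have h5 : η * Real.sqrt ((flipSet (g (i + 1)) (gt (i + 1))).card +
              (flipSet (g l) (gt l)).card + t) ≤ layWt η t sc (i + 1) + layWt η t sc l := by
            unfold layWt
            rw [← mul_add]
            refine mul_le_mul_of_nonneg_left (le_trans (Real.sqrt_le_sqrt ?_)
              ((sqrt_add_three_le (a := sc (i + 1)) (b := sc l) (Nat.cast_nonneg _)
              (Nat.cast_nonneg _) ht0).trans ?_)) hη
            · linarith
            · gcongr; linarith
          have h6 := l2_nonneg (bwdErr g gt γt (i + 1))
          have h7 := layWt_nonneg (t := t) hη sc l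
          have h8 := layWt_nonneg (t := t) hη sc (i + 1)
          have h9 := l2_nonneg u
          calc _ ≤ (layWt η t sc (i + 1) + layWt η t sc l) *
                (l2 (bwdErr g gt γt (i + 1)) * l2 f) := by gcongr
            _ = _ := by ring
      refine (Finset.abs_sum_le_sum_abs _ _).trans ((Finset.sum_le_sum h4).trans ?_)
      rw [← Finset.sum_mul, Finset.sum_add_distrib, ← Finset.mul_sum,
        hshift (fun i => layWt η t sc i * l2 (bwdErr g gt γt i)),
        hshift (fun i => l2 (bwdErr g gt γt i))]
      have h7 := layWt_nonneg (t := t) hη sc l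
      gcongr
    have h5 := hpertS u
    have h6 : dot (γt l) u ≤ Γ * layWt η t sc l * l2 f +
        ((y / (4 * L) + layWt η t sc l * y) * l2 f + L * ω * κ * Bm * l2 f) := by
      rw [HD.expand hl, Finset.sum_add_distrib]
      refine add_le_add ((le_abs_self _).trans h2) (add_le_add ((le_abs_self _).trans h3)
        ((le_abs_self _).trans (h5.trans ?_)))
      gcongr
    rw [← h1] at h6
    refine le_of_mul_le_mul_right ?_ hpos
    calc l2 f * l2 f = l2 f ^ 2 := by ring
      _ ≤ _ := h6
      _ = _ := by ring
  · have h1 : l2 (γ l) ≤ κB := l2_le_of_dot HD.hκB fun v => by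
      rw [HD.hγ l hl]; exact HB.op l v hl
    have h2 := l2_add_le (γt l - γ l) (γ l)
    rw [sub_add_cancel] at h2
    linarith [HD.hBm]

lemma bwd_all (H : PertHyp L V U g h gt ht κ η t N ω τ E n sc)
    (HB : RegB L V g b κB Γ η t N)
    (HD : BwdHyp L V U g gt b γ γt κ κB Γ ω E Bm) (r : ℕ) :
    ∀ l, 1 ≤ l → l ≤ L → L ≤ l + r → BwdOK L g gt γ γt κ η t ω E Γ Bm sc l := by
  induction r with
  | zero =>
    intro l h1 h2 h3
    refine bwd_step H HB HD h1 h2 fun i hi => ?_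
    rw [Finset.mem_Icc] at hi; omega
  | succ r ih =>
    intro l h1 h2 h3
    refine bwd_step H HB HD h1 h2 fun i hi => ?_
    rw [Finset.mem_Icc] at hi
    exact ih i (by omega) hi.2 (by omega)

/-- Change of the gradient block of layer `l`. -/
lemma grad_block_diff (H : PertHyp L V U g h gt ht κ η t N ω τ E n sc)
    (HB : RegB L V g b κB Γ η t N)
    (HD : BwdHyp L V U g gt b γ γt κ κB Γ ω E Bm) {l : ℕ} (hl1 : 1 ≤ l) (hl : l ≤ L) :
    frob (outer (signOf (gt l) * γt l) (ht (l - 1)) - outer (signOf (g l) * γ l) (h (l - 1))) ≤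
      ((κ + 1) * (2 * (Γ * Real.sqrt E + L * (L * ω * κ * Bm))) + L * ω * κ * Bm) * 3 +
        κB * ((1 + 2 * L * κ) * (3 * ω * L * κ)) := by
  have hω := H.ω0
  have hκ := H.κ1
  have hB0 := HD.hBm0
  have hΓ := HD.hΓ
  have hall := H.fwd_all le_rfl
  have hb := bwd_all H HB HD L
  have h1 : outer (signOf (gt l) * γt l) (ht (l - 1)) - outer (signOf (g l) * γ l) (h (l - 1)) =
      outer (signOf (g l) * (γt l - γ l) + bwdErr g gt γt l) (ht (l - 1)) +
        outer (signOf (g l) * γ l) (ht (l - 1) - h (l - 1)) := by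
    funext i j
    simp only [outer, bwdErr, Pi.sub_apply, Pi.add_apply, Pi.mul_apply]; ring
  obtain ⟨h2, h3⟩ := H.fwd_h_le le_rfl hall (i := l - 1) (by omega)
  rw [h1]
  refine (frob_add_le _ _).trans ?_
  rw [frob_outer, frob_outer]
  have hγ : l2 (γ l) ≤ κB := l2_le_of_dot HD.hκB fun v => by
    rw [HD.hγ l hl]; exact HB.op l v hl
  have hsum := (bwd_sums H HD (l := 0) (fun i hi => hb i (Finset.mem_Icc.1 hi).1
    (Finset.mem_Icc.1 hi).2 (by omega))).1
  have h4 : l2 (bwdErr g gt γt l) ≤ 2 * (Γ * Real.sqrt E + L * (L * ω * κ * Bm)) :=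
    (Finset.single_le_sum (f := fun i => l2 (bwdErr g gt γt i)) (fun i _ => l2_nonneg _)
      (Finset.mem_Icc.2 ⟨by omega, hl⟩)).trans hsum
  have h5 : l2 (signOf (g l) * (γt l - γ l) + bwdErr g gt γt l) ≤
      (κ + 1) * (2 * (Γ * Real.sqrt E + L * (L * ω * κ * Bm))) + L * ω * κ * Bm := by
    refine (l2_add_le _ _).trans ?_
    have := (l2_mul_le (signOf_abs_le (g l)) (γt l - γ l)).trans (hb l hl1 hl (by omega)).diff
    linarith
  refine add_le_add (mul_le_mul h5 h3 (l2_nonneg _) (by positivity))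
    (mul_le_mul ((l2_mul_le (signOf_abs_le _) _).trans hγ) h2 (l2_nonneg _) HD.hκB)

end backward

end forward

/-! ### Deterministic consequence of a good initialization -/

lemma Wat_succ (W : Fin L → Fin m → Fin m → ℝ) {i : ℕ} (hi : i < L) :
    Wat W (i + 1) = W ⟨i, hi⟩ := by
  rw [Wat, dif_pos ⟨by omega, by omega⟩]; rfl

lemma isNet_seq (A : Fin m → Fin 𝔡 → ℝ) (W : Fin L → Fin m → Fin m → ℝ) (x : Fin 𝔡 → ℝ) :
    IsNet L (Wat W) (gseq A W x) (hseq A W x) where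
  hg _ _ := rfl
  hh i hi := by rw [hseq, if_pos (by omega)]; rfl

/-- The event on which the perturbation analysis applies: activations of constant size, few
pre-activations near the kink, regular layer products, and output rows that are not killed by the
last sign pattern. -/
structure GoodInit (x : Fin 𝔡 → ℝ) (Λ t τ : ℝ) (A : Fin m → Fin 𝔡 → ℝ)
    (W : Fin L → Fin m → Fin m → ℝ) (B : Fin d → Fin m → ℝ) : Prop where
  hlo : ∀ i ≤ L, 1 / 2 ≤ l2 (hseq A W x i)
  hhi : ∀ i ≤ L, l2 (hseq A W x i) ≤ 2
  near : ∑ i ∈ Finset.Icc 1 L, ((nearSet τ (gseq A W x i)).card : ℝ) ≤ 100 * L * t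
  reg : RegV L (Wat W) (gseq A W x) (5000 * Real.sqrt L) (40 * Real.sqrt (Λ / m)) t
    (m / (400 * L * Λ))
  regB : ∀ j, RegB L (Wat W) (gseq A W x) (B j) (50 * Real.sqrt (m / d)) (Real.sqrt (m / d))
    (40 * Real.sqrt (Λ / m)) t (m / (400 * L * Λ))
  last : ∀ j, Real.sqrt (m / d) / 5 ≤ l2 (signOf (gseq A W x L) * B j)

section deterministic

variable {x : Fin 𝔡 → ℝ} {Λ θ : ℝ} {A : Fin m → Fin 𝔡 → ℝ} {W : Fin L → Fin m → Fin m → ℝ}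
  {B : Fin d → Fin m → ℝ}

/-- The numerical hypotheses, with `θ = ω^{1/3}` and `Λ = log m`. -/
structure NumHyp (m d L : ℕ) (Λ θ : ℝ) : Prop where
  hL : 2 ≤ L
  hm : 0 < m
  hd : 0 < d
  hΛ : 1 ≤ Λ
  hθ : 0 < θ
  h2 : 10 ^ 10 * (Real.sqrt L ^ 3 * θ) * Λ ≤ 1
  hmL : 10 ^ 12 * (L * Λ) ≤ m

/-- The bound `E` for `L ∑ᵢ η² (sc i + t)`, the squared weights in the perturbation recursions. -/
def EE (L : ℕ) (Λ θ : ℝ) : ℝ := (2 * 10 ^ 6 * Real.sqrt L ^ 3 * θ * Real.sqrt Λ) ^ 2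

lemma NumHyp.sqrtL (H : NumHyp m d L Λ θ) : 1 ≤ Real.sqrt L := by
  rw [Real.one_le_sqrt]; exact_mod_cast H.hL.trans' (by norm_num)

lemma NumHyp.sqrtΛ (H : NumHyp m d L Λ θ) : 1 ≤ Real.sqrt Λ := by
  rw [Real.one_le_sqrt]; exact H.hΛ

lemma NumHyp.small (H : NumHyp m d L Λ θ) :
    10 ^ 10 * (Real.sqrt L ^ 3 * θ) * Real.sqrt Λ ≤ 1 ∧ 10 ^ 10 * (Real.sqrt L ^ 3 * θ) ≤ 1 ∧
    10 ^ 10 * (Real.sqrt L * θ) ≤ 1 := by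
  have h1 := H.sqrtL
  have h2 := H.sqrtΛ
  have h3 : Real.sqrt Λ ^ 2 = Λ := Real.sq_sqrt (by linarith [H.hΛ])
  have h4 := H.hθ
  have h5 := H.h2
  have h6 : Real.sqrt Λ ≤ Λ := by nlinarith
  have h7 : 0 ≤ 10 ^ 10 * (Real.sqrt L ^ 3 * θ) := by positivity
  have h8 : Real.sqrt L ≤ Real.sqrt L ^ 3 := by nlinarith [sq_nonneg (Real.sqrt L)]
  have h9 : Real.sqrt L * θ ≤ Real.sqrt L ^ 3 * θ := by gcongr
  have h10 : 10 ^ 10 * (Real.sqrt L ^ 3 * θ) ≤ 1 := by nlinarith [H.hΛ]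
  exact ⟨by nlinarith, h10, by linarith⟩

lemma NumHyp.EE_le (H : NumHyp m d L Λ θ) : EE L Λ θ ≤ 1 / 16 := by
  have h1 := H.small.1
  have h2 : 0 ≤ Real.sqrt L ^ 3 * θ * Real.sqrt Λ := by have := H.hθ; positivity
  unfold EE
  have h3 : 2 * 10 ^ 6 * Real.sqrt L ^ 3 * θ * Real.sqrt Λ ≤ 1 / 4 := by nlinarith
  have h4 : 0 ≤ 2 * 10 ^ 6 * Real.sqrt L ^ 3 * θ * Real.sqrt Λ := by
    have := H.hθ; positivity
  calc _ ≤ (1 / 4 : ℝ) ^ 2 := by gcongr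
    _ = _ := by norm_num

/-- A good initialization satisfies the hypotheses of the perturbation analysis for every `W'` of
spectral size at most `ω = θ³`. The number `n` of allowed flips away from the kink is a large multiple
of `t = m θ² L`, and the kink threshold is `τ = θ² L / √m`. -/
lemma GoodInit.pertHyp (H : NumHyp m d L Λ θ)
    (G : GoodInit x Λ (m * θ ^ 2 * L) (θ ^ 2 * L / Real.sqrt m) A W B)
    {W' : Fin L → Fin m → Fin m → ℝ} (hW' : ∀ ℓ, spec (W' ℓ) ≤ θ ^ 3) :
    PertHyp L (Wat W) (Wat W') (gseq A W x) (hseq A W x)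
      (gseq A (fun ℓ => W ℓ + W' ℓ) x) (hseq A (fun ℓ => W ℓ + W' ℓ) x)
      (5000 * Real.sqrt L) (40 * Real.sqrt (Λ / m)) (m * θ ^ 2 * L) (m / (400 * L * Λ))
      (θ ^ 3) (θ ^ 2 * L / Real.sqrt m) (EE L Λ θ) ⌊2025000000 * (m * θ ^ 2 * L)⌋₊
      (fun i => (nearSet (θ ^ 2 * L / Real.sqrt m) (gseq A W x i)).card +
        ⌊2025000000 * (m * θ ^ 2 * L)⌋₊) := by
  have hθ := H.hθ
  have hr1 := H.sqrtL
  have hq1 := H.sqrtΛ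
  have hΛ := H.hΛ
  have hm : (0 : ℝ) < m := by exact_mod_cast H.hm
  have hLpos : (0 : ℝ) < L := by have := H.hL; exact_mod_cast (by omega : 0 < L)
  have hrr : Real.sqrt L ^ 2 = L := Real.sq_sqrt hLpos.le
  have hqq : Real.sqrt Λ ^ 2 = Λ := Real.sq_sqrt (by linarith)
  have hmm : Real.sqrt m ^ 2 = m := Real.sq_sqrt hm.le
  have hsm : 0 < Real.sqrt m := Real.sqrt_pos.2 hm
  obtain ⟨hs1, hs2, hs3⟩ := H.small
  set t := (m : ℝ) * θ ^ 2 * L with ht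
  have ht0 : 0 < t := by positivity
  set n := ⌊2025000000 * t⌋₊ with hn
  have hn1 : (n : ℝ) ≤ 2025000000 * t := Nat.floor_le (by positivity)
  have hn2 : 2025000000 * t < n + 1 := Nat.lt_floor_add_one _
  set τ := θ ^ 2 * L / Real.sqrt m with hτ
  set sc : ℕ → ℕ := fun i => (nearSet τ (gseq A W x i)).card + n with hsc
  have hnear : ∀ i ∈ Finset.Icc 1 L, ((nearSet τ (gseq A W x i)).card : ℝ) ≤ 100 * L * t :=
    fun i hi => (Finset.single_le_sum (f := fun i => ((nearSet τ (gseq A W x i)).card : ℝ))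
      (fun _ _ => Nat.cast_nonneg _) hi).trans G.near
  have hL1 : (1 : ℝ) ≤ L := by nlinarith
  have htL : t ≤ L * t := by nlinarith
  have hscle : ∀ i ∈ Finset.Icc 1 L, (sc i : ℝ) ≤ 2025000100 * (L * t) := fun i hi => by
    have := hnear i hi
    simp only [hsc]; push_cast; nlinarith
  -- `L t` is a tiny fraction of the sparsity budget.
  have hbud : 10 ^ 10 * (L * t) ≤ m / (400 * L * Λ) / 2 := by
    rw [le_div_iff₀ (by norm_num), le_div_iff₀ (by positivity)]
    have h1 : (10 ^ 10 * (Real.sqrt L ^ 3 * θ) * Real.sqrt Λ) ^ 2 ≤ 1 :=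
      pow_le_one₀ (by positivity) hs1
    have h2 : (L : ℝ) ^ 3 * θ ^ 2 * Λ * 10 ^ 20 ≤ 1 := by
      calc _ = (10 ^ 10 * (Real.sqrt L ^ 3 * θ) * Real.sqrt Λ) ^ 2 := by
            nth_rewrite 1 [← hrr, ← hqq]; ring
        _ ≤ 1 := h1
    rw [ht]
    calc _ = (L : ℝ) ^ 3 * θ ^ 2 * Λ * 10 ^ 20 * m * (8 / 10 ^ 8) := by ring
      _ ≤ 1 * m * (8 / 10 ^ 8) := by gcongr
      _ ≤ m := by linarith
  have hbud1 : 1 ≤ m / (400 * L * Λ) / 2 := by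
    rw [le_div_iff₀ (by norm_num), le_div_iff₀ (by positivity)]
    have := H.hmL
    have : 0 < L * Λ := by positivity
    linarith
  have hLt : 0 < L * t := by positivity
  refine
    { hL := by have := H.hL; omega
      net := isNet_seq A W x
      net' := ?_
      h0 := rfl
      reg := G.reg
      hU := fun i hi v => ?_
      hh := G.hhi
      κ1 := by linarith
      η0 := by positivity
      t0 := ht0.le
      ω0 := by positivity
      τ0 := by positivity
      E0 := sq_nonneg _
      E1 := H.EE_le
      hsc := fun i => rfl
      hn := ?_
      hηy := ?_
      hE := ?_
      hG := ?_
      hN := fun i hi j hj => ?_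
      hN' := fun i hi => ?_ }
  · have h := isNet_seq A (fun ℓ => W ℓ + W' ℓ) x
    refine ⟨fun i hi => ?_, h.hh⟩
    rw [h.hg i hi, Wat_succ _ hi, Wat_succ _ hi, Wat_succ _ hi]
  · rw [Finset.mem_Icc] at hi
    obtain ⟨i, rfl⟩ : ∃ i', i = i' + 1 := ⟨i - 1, by omega⟩
    rw [Wat_succ _ (by omega)]
    exact (l2_mulVec_le_spec _ _).trans (mul_le_mul_of_nonneg_right (hW' _) (l2_nonneg _))
  · have h1 : τ ^ 2 = θ ^ 4 * L ^ 2 / m := by rw [hτ, div_pow, hmm]; ring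
    have h2 : 9 * (3 * θ ^ 3 * L * (5000 * Real.sqrt L)) ^ 2 = τ ^ 2 * (2025000000 * t) := by
      rw [h1, ht]
      field_simp
      rw [hrr]; ring
    rw [h2]
    have : 0 < τ := by positivity
    gcongr
  · rw [Real.sqrt_div (by linarith), hτ]
    have h1 : 40 * (Real.sqrt Λ / Real.sqrt m) * (2 * L * (3 * θ ^ 3 * L * (5000 * Real.sqrt L))) =
        θ ^ 2 * L / Real.sqrt m * (1200000 * (Real.sqrt L ^ 3 * θ) * Real.sqrt Λ) := by
      field_simp
      rw [hrr]; ring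
    rw [h1]
    have h2 : 1200000 * (Real.sqrt L ^ 3 * θ) * Real.sqrt Λ ≤ 1 / 2 := by nlinarith
    calc _ ≤ θ ^ 2 * L / Real.sqrt m * (1 / 2) := by gcongr
      _ = _ := by ring
  · have h1 : ∑ i ∈ Finset.Icc 1 L, layWt (40 * Real.sqrt (Λ / m)) t sc i ^ 2 =
        1600 * (Λ / m) * ∑ i ∈ Finset.Icc 1 L,
          (((nearSet τ (gseq A W x i)).card : ℝ) + (n + t)) := by
      rw [Finset.mul_sum]
      refine Finset.sum_congr rfl fun i _ => ?_
      rw [layWt, mul_pow, mul_pow, Real.sq_sqrt (by positivity), Real.sq_sqrt (by positivity)]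
      simp only [hsc]; push_cast; ring
    have h2 : ∑ i ∈ Finset.Icc 1 L, (((nearSet τ (gseq A W x i)).card : ℝ) + (n + t)) ≤
        2500000000 * (L * t) := by
      rw [Finset.sum_add_distrib, Finset.sum_const, Nat.card_Icc, Nat.add_sub_cancel, nsmul_eq_mul]
      have := G.near
      have : (L : ℝ) * (n + t) ≤ L * (2025000001 * t) := by gcongr; linarith
      linarith
    rw [h1]
    calc _ ≤ L * (1600 * (Λ / m) * (2500000000 * (L * t))) := by gcongr
      _ = EE L Λ θ := by
        rw [EE, ht]
        simp only [mul_pow]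
        rw [hqq, show (Real.sqrt L ^ 3) ^ 2 = (Real.sqrt L ^ 2) ^ 3 by ring, hrr]
        field_simp; ring
  · set r := Real.sqrt L with hr
    have h1 : (1 : ℝ) + 2 * L * (5000 * r) ≤ 10001 * r ^ 3 := by
      rw [← hrr]; nlinarith [pow_le_pow_left₀ zero_le_one hr1 3]
    calc (1 + 2 * L * (5000 * r)) * (3 * θ ^ 3 * L * (5000 * r))
        ≤ 10001 * r ^ 3 * (3 * θ ^ 3 * L * (5000 * r)) := by gcongr
      _ = 150015000 * (r ^ 3 * θ) ^ 2 * θ := by rw [← hrr]; ring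
      _ ≤ 1 := by
        have h2 : r ^ 3 * θ ≤ 1 / 10 ^ 10 := by linarith
        have h4 : r * θ ≤ 1 / 10 ^ 10 := by linarith
        have h3 : θ ≤ 1 / 10 ^ 10 := by nlinarith
        calc _ ≤ 150015000 * (1 / 10 ^ 10 : ℝ) ^ 2 * (1 / 10 ^ 10) := by gcongr
          _ ≤ 1 := by norm_num
  · linarith [hscle i hi, hscle j hj]
  · linarith [hscle i hi]

lemma dot_backVec (B : Fin d → Fin m → ℝ) (A : Fin m → Fin 𝔡 → ℝ)
    (W : Fin L → Fin m → Fin m → ℝ) (x : Fin 𝔡 → ℝ) (j : Fin d) (l : ℕ) (v : Fin m → ℝ) :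
    dot (mulVec (transpose (backMat B A W x (l + 1))) (basisVec d j)) v =
      dot (B j) (layerProd (Wat W) (fun i => signOf (gseq A W x i)) l L v) := by
  rw [dot_transpose, backMat, mulVec_mmul, prodDW, mulVec_chainProd _ _ _ le_rfl]
  simp [dot, basisVec, mulVec]

lemma mulVec_sub' {p q : ℕ} (M : Fin p → Fin q → ℝ) (u v) :
    mulVec M (u - v) = mulVec M u - mulVec M v := (mvL M).map_sub u v

/-- On the good event, part (b): the output is linear in the perturbation up to the remainder. -/
lemma GoodInit.output (H : NumHyp m d L Λ θ)
    (G : GoodInit x Λ (m * θ ^ 2 * L) (θ ^ 2 * L / Real.sqrt m) A W B)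
    {W' : Fin L → Fin m → Fin m → ℝ} (hW' : ∀ ℓ, spec (W' ℓ) ≤ θ ^ 3) (j : Fin d) :
    |mulVec B (hseq A (fun ℓ => W ℓ + W' ℓ) x L) j - mulVec B (hseq A W x L) j -
      ∑ ℓ : Fin L, innerF (gradW B A W x (basisVec d j) ((ℓ : ℕ) + 1)) (W' ℓ)| ≤
      10 ^ 30 * ((L : ℝ) ^ 3 * θ ^ 4 * Real.sqrt Λ * Real.sqrt (m / d)) := by
  have P := G.pertHyp H hW'
  have hθ := H.hθ
  have hr1 := H.sqrtL
  have hq1 := H.sqrtΛ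
  have key := P.output_remainder (by positivity) (Real.sqrt_nonneg _) (G.regB j)
  have hsum : ∑ ℓ : Fin L, innerF (gradW B A W x (basisVec d j) ((ℓ : ℕ) + 1)) (W' ℓ) =
      ∑ i ∈ Finset.Icc 1 L, dot (B j) (layerProd (Wat W) (fun i => signOf (gseq A W x i)) i L
        (signOf (gseq A W x i) * mulVec (Wat W' i) (hseq A W x (i - 1)))) := by
    have h1 : ∀ ℓ : Fin L, innerF (gradW B A W x (basisVec d j) ((ℓ : ℕ) + 1)) (W' ℓ) =
        (fun i => dot (B j) (layerProd (Wat W) (fun i => signOf (gseq A W x i)) (i + 1) L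
        (signOf (gseq A W x (i + 1)) * mulVec (Wat W' (i + 1)) (hseq A W x i)))) (ℓ : ℕ) := by
      intro ℓ
      simp only
      rw [gradW, innerF_outer, mulVec_diagMat, ← dot_mul, dot_backVec, Wat_succ _ ℓ.2,
        Nat.add_sub_cancel]
    rw [Finset.sum_congr rfl fun ℓ _ => h1 ℓ, Fin.sum_univ_eq_sum_range
      (fun i => dot (B j) (layerProd (Wat W) (fun i => signOf (gseq A W x i)) (i + 1) L
        (signOf (gseq A W x (i + 1)) * mulVec (Wat W' (i + 1)) (hseq A W x i)))) L,
      Finset.range_eq_Ico]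
    refine Eq.trans ?_ ((Finset.sum_Ico_add' (fun i => dot (B j) (layerProd (Wat W)
        (fun i => signOf (gseq A W x i)) i L
        (signOf (gseq A W x i) * mulVec (Wat W' i) (hseq A W x (i - 1))))) 0 L 1).trans
        (Finset.sum_congr (by ext; simp; try omega) fun _ _ => rfl))
    rfl
  rw [hsum]
  refine key.trans ?_
  have hLpos : (0 : ℝ) < L := by have := H.hL; exact_mod_cast (by omega : 0 < L)
  have hrr : Real.sqrt L ^ 2 = L := Real.sq_sqrt hLpos.le
  obtain ⟨hs1, hs2, hs3⟩ := H.small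
  have hE : Real.sqrt (EE L Λ θ) = 2 * 10 ^ 6 * Real.sqrt L ^ 3 * θ * Real.sqrt Λ :=
    Real.sqrt_sq (by positivity)
  rw [hE]
  have hΓ : 0 ≤ Real.sqrt ((m : ℝ) / d) := Real.sqrt_nonneg _
  generalize Real.sqrt ((m : ℝ) / d) = Γ at *
  generalize Real.sqrt Λ = q at *
  set r := Real.sqrt L with hr
  have h1 : (1 : ℝ) + 2 * L * (5000 * r) ≤ 10001 * r ^ 3 := by
    rw [← hrr]; nlinarith [pow_le_pow_left₀ zero_le_one hr1 3]
  have h2 : (r * θ) ^ 2 ≤ 1 := pow_le_one₀ (by positivity) (by linarith)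
  have hq0 : 0 ≤ q := by linarith
  calc _ ≤ L * (50 * Γ * (θ ^ 3 * (10001 * r ^ 3 * (3 * θ ^ 3 * L * (5000 * r))))) +
        Γ * (2 * (2 * 10 ^ 6 * r ^ 3 * θ * q) * (3 * θ ^ 3 * L * (5000 * r))) := by gcongr
    _ = 7500750000 * (r ^ 6 * θ ^ 4 * Γ) * (r * θ) ^ 2 * 1 +
        60000000000 * (r ^ 6 * θ ^ 4 * q * Γ) := by rw [← hrr]; ring
    _ ≤ 7500750000 * (r ^ 6 * θ ^ 4 * Γ) * 1 * q + 60000000000 * (r ^ 6 * θ ^ 4 * q * Γ) := by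
        gcongr
    _ = 67500750000 * (r ^ 6 * θ ^ 4 * q * Γ) := by ring
    _ ≤ 10 ^ 30 * (r ^ 6 * θ ^ 4 * q * Γ) := by gcongr; norm_num
    _ = _ := by rw [← hrr]; ring

/-- On the good event, part (a): the gradient is stable relative to its own size. -/
lemma GoodInit.gradient (H : NumHyp m d L Λ θ)
    (G : GoodInit x Λ (m * θ ^ 2 * L) (θ ^ 2 * L / Real.sqrt m) A W B)
    {W' : Fin L → Fin m → Fin m → ℝ} (hW' : ∀ ℓ, spec (W' ℓ) ≤ θ ^ 3) (j : Fin d) :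
    Real.sqrt (∑ ℓ : Fin L,
      frob (gradW B A (fun ℓ' => W ℓ' + W' ℓ') x (basisVec d j) ((ℓ : ℕ) + 1) -
        gradW B A W x (basisVec d j) ((ℓ : ℕ) + 1)) ^ 2) ≤
      10 ^ 30 * Real.sqrt Λ * θ * (L : ℝ) ^ 3 * Real.sqrt (∑ ℓ : Fin L,
        frob (gradW B A W x (basisVec d j) ((ℓ : ℕ) + 1)) ^ 2) := by
  have P := G.pertHyp H hW'
  have hθ := H.hθ
  have hr1 := H.sqrtL
  have hq1 := H.sqrtΛ
  have hL2 := H.hL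
  have hLpos : (0 : ℝ) < L := by exact_mod_cast (by omega : 0 < L)
  have hrr : Real.sqrt L ^ 2 = L := Real.sq_sqrt hLpos.le
  obtain ⟨hs1, hs2, hs3⟩ := H.small
  have hE : Real.sqrt (EE L Λ θ) = 2 * 10 ^ 6 * Real.sqrt L ^ 3 * θ * Real.sqrt Λ :=
    Real.sqrt_sq (by positivity)
  have hΓ : 0 ≤ Real.sqrt ((m : ℝ) / d) := Real.sqrt_nonneg _
  have hlast : Real.sqrt ((m : ℝ) / d) / 10 ≤ Real.sqrt (∑ ℓ : Fin L,
      frob (gradW B A W x (basisVec d j) ((ℓ : ℕ) + 1)) ^ 2) := by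
    refine Real.le_sqrt_of_sq_le (le_trans ?_ (Finset.single_le_sum
      (f := fun ℓ : Fin L => frob (gradW B A W x (basisVec d j) ((ℓ : ℕ) + 1)) ^ 2)
      (fun _ _ => sq_nonneg _) (Finset.mem_univ (⟨L - 1, by omega⟩ : Fin L))))
    simp only
    refine pow_le_pow_left₀ (by positivity) ?_ 2
    rw [Nat.sub_add_cancel (by omega), gradW, frob_outer, mulVec_diagMat]
    have h1 : mulVec (transpose (backMat B A W x (L + 1))) (basisVec d j) = B j := by
      have h2 : ∀ v, dot (mulVec (transpose (backMat B A W x (L + 1))) (basisVec d j)) v =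
          dot (B j) v := fun v => by rw [dot_backVec, layerProd_of_le _ _ le_rfl]
      have h3 : l2 (mulVec (transpose (backMat B A W x (L + 1))) (basisVec d j) - B j) = 0 :=
        le_antisymm (l2_le_of_dot le_rfl fun v => by rw [sub_dot, h2]; simp) (l2_nonneg _)
      exact sub_eq_zero.1 (l2_eq_zero.1 h3)
    rw [h1]
    calc Real.sqrt ((m : ℝ) / d) / 10 = Real.sqrt ((m : ℝ) / d) / 5 * (1 / 2) := by ring
      _ ≤ _ := mul_le_mul (G.last j) (G.hlo _ (by omega)) (by norm_num) (l2_nonneg _)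
  set Γ := Real.sqrt ((m : ℝ) / d) with hΓd
  have HD : BwdHyp L (Wat W) (Wat W') (gseq A W x) (gseq A (fun ℓ => W ℓ + W' ℓ) x) (B j)
      (fun l => mulVec (transpose (backMat B A W x (l + 1))) (basisVec d j))
      (fun l => mulVec (transpose (backMat B A (fun ℓ => W ℓ + W' ℓ) x (l + 1))) (basisVec d j))
      (5000 * Real.sqrt L) (50 * Γ) Γ (θ ^ 3) (EE L Λ θ) (10 ^ 4 * Real.sqrt L * Γ) := by
    refine ⟨fun a _ v => dot_backVec _ _ _ _ _ _ _, fun a _ v => ?_, by positivity, hΓ,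
      by positivity, ?_⟩
    · rw [dot_backVec]
      congr 1
      have hh : ∀ b ≤ L, layerProd (Wat fun ℓ => W ℓ + W' ℓ)
          (fun i => signOf (gseq A (fun ℓ => W ℓ + W' ℓ) x i)) a b v =
          layerProd (fun i => Wat W i + Wat W' i)
          (fun i => signOf (gseq A (fun ℓ => W ℓ + W' ℓ) x i)) a b v := by
        intro b hb
        induction b with
        | zero => rfl
        | succ b ih =>
          rcases Nat.lt_or_ge b a with h1 | h1
          · rw [layerProd_of_le _ _ (by omega), layerProd_of_le _ _ (by omega)]
          · rw [layerProd_succ _ _ h1, layerProd_succ _ _ h1, ih (by omega), Wat_succ _ (by omega),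
              Wat_succ _ (by omega), Wat_succ _ (by omega)]
      exact hh L le_rfl
    · rw [hE]
      generalize Real.sqrt Λ = q at *
      set r := Real.sqrt L with hr
      have h2 : r ^ 3 * θ ≤ 1 / 10 ^ 10 := by linarith
      have h3 : (r * θ) ≤ 1 / 10 ^ 10 := by linarith
      have h4 : r ^ 3 * θ * q ≤ 1 / 10 ^ 10 := by linarith
      have e1 : 50 * Γ + (5000 * r * (2 * (Γ * (2 * 10 ^ 6 * r ^ 3 * θ * q) +
          L * (L * θ ^ 3 * (5000 * r) * (10 ^ 4 * r * Γ)))) +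
          L * θ ^ 3 * (5000 * r) * (10 ^ 4 * r * Γ)) =
          50 * Γ * 1 + 2 * 10 ^ 10 * r * Γ * (r ^ 3 * θ * q) +
          5 * 10 ^ 11 * r * Γ * ((r ^ 3 * θ) * (r ^ 3 * θ) * θ) +
          5 * 10 ^ 7 * r * Γ * ((r ^ 3 * θ) * θ * θ) := by rw [← hrr]; ring
      have hθ1 : θ ≤ 1 / 10 ^ 10 := by nlinarith
      rw [e1]
      calc _ ≤ 50 * Γ * r + 2 * 10 ^ 10 * r * Γ * (1 / 10 ^ 10) +
          5 * 10 ^ 11 * r * Γ * ((1 / 10 ^ 10) * (1 / 10 ^ 10) * (1 / 10 ^ 10)) +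
          5 * 10 ^ 7 * r * Γ * ((1 / 10 ^ 10) * (1 / 10 ^ 10) * (1 / 10 ^ 10)) := by gcongr
        _ = (r * Γ) * (50 + 2 + 5 * 10 ^ 11 / 10 ^ 30 + 5 * 10 ^ 7 / 10 ^ 30) := by ring
        _ ≤ (r * Γ) * 10 ^ 4 := by gcongr; norm_num
        _ = _ := by ring
  set M := ((5000 * Real.sqrt L + 1) * (2 * (Γ * Real.sqrt (EE L Λ θ) +
      L * (L * θ ^ 3 * (5000 * Real.sqrt L) * (10 ^ 4 * Real.sqrt L * Γ)))) +
      L * θ ^ 3 * (5000 * Real.sqrt L) * (10 ^ 4 * Real.sqrt L * Γ)) * 3 +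
      50 * Γ * ((1 + 2 * L * (5000 * Real.sqrt L)) *
        (3 * θ ^ 3 * L * (5000 * Real.sqrt L))) with hM
  have hM0 : 0 ≤ M := by positivity
  have hblock : ∀ ℓ : Fin L,
      frob (gradW B A (fun ℓ' => W ℓ' + W' ℓ') x (basisVec d j) ((ℓ : ℕ) + 1) -
        gradW B A W x (basisVec d j) ((ℓ : ℕ) + 1)) ^ 2 ≤ M ^ 2 := fun ℓ => by
    have h1 := grad_block_diff P (G.regB j) HD (l := (ℓ : ℕ) + 1) (by omega) (by omega)
    refine pow_le_pow_left₀ (Real.sqrt_nonneg _) ?_ 2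
    rw [gradW, gradW, mulVec_diagMat, mulVec_diagMat]
    exact h1
  have hfin : Real.sqrt L * M ≤ 10 ^ 30 * Real.sqrt Λ * θ * (L : ℝ) ^ 3 * (Γ / 10) := by
    rw [hM, hE]
    have hq0 : 0 ≤ Real.sqrt Λ := by linarith
    generalize Real.sqrt Λ = q at *
    set r := Real.sqrt L with hr
    have h1 : (1 : ℝ) + 2 * L * (5000 * r) ≤ 10001 * r ^ 3 := by
      rw [← hrr]; nlinarith [pow_le_pow_left₀ zero_le_one hr1 3]
    have h2 : (r * θ) ^ 2 ≤ 1 := pow_le_one₀ (by positivity) (by linarith)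
    have h3 : θ ^ 2 * r ≤ 1 := by nlinarith
    have h6 : 5000 * r + 1 ≤ 5001 * r := by linarith
    have h7 : θ ^ 2 ≤ 1 := by nlinarith
    calc _ ≤ r * ((5001 * r * (2 * (Γ * (2 * 10 ^ 6 * r ^ 3 * θ * q) +
          L * (L * θ ^ 3 * (5000 * r) * (10 ^ 4 * r * Γ)))) +
          L * θ ^ 3 * (5000 * r) * (10 ^ 4 * r * Γ)) * 3 +
          50 * Γ * (10001 * r ^ 3 * (3 * θ ^ 3 * L * (5000 * r)))) := by gcongr
      _ = Γ * θ * (60012000000 * r ^ 5 * 1 * q + 1500300000000 * r ^ 6 * (r * θ) ^ 2 * 1 +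
          150000000 * r ^ 5 * θ ^ 2 * 1 + 7500750000 * r ^ 6 * (θ ^ 2 * r) * 1) := by
        rw [← hrr]; ring
      _ ≤ Γ * θ * (60012000000 * r ^ 5 * r * q + 1500300000000 * r ^ 6 * 1 * q +
          150000000 * r ^ 5 * r * q + 7500750000 * r ^ 6 * 1 * q) := by
        have h8 : θ ^ 2 ≤ r := by linarith
        gcongr
      _ = 1567962750000 * (r ^ 6 * θ * q * Γ) := by ring
      _ ≤ 10 ^ 29 * (r ^ 6 * θ * q * Γ) := by gcongr; norm_num
      _ = _ := by rw [← hrr]; ring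
  calc _ ≤ Real.sqrt (∑ _ℓ : Fin L, M ^ 2) :=
        Real.sqrt_le_sqrt (Finset.sum_le_sum fun ℓ _ => hblock ℓ)
    _ = Real.sqrt L * M := by
        rw [Finset.sum_const, Finset.card_univ, Fintype.card_fin, nsmul_eq_mul,
          Real.sqrt_mul hLpos.le, Real.sqrt_sq hM0]
    _ ≤ _ := hfin
    _ ≤ _ := by
        refine mul_le_mul_of_nonneg_left hlast ?_
        positivity

end deterministic

/-! ### Product measures and resampling -/

lemma lintegral_pi_prod {ι : Type*} [Fintype ι] {α : ι → Type*} [∀ i, MeasurableSpace (α i)]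
    (μ : ∀ i, Measure (α i)) [∀ i, IsProbabilityMeasure (μ i)] (f : ∀ i, α i → ENNReal)
    (hf : ∀ i, Measurable (f i)) :
    ∫⁻ w, ∏ i, f i (w i) ∂Measure.pi μ = ∏ i, ∫⁻ y, f i y ∂μ i := by
  have h := lintegral_prod_eq_prod_lintegral_of_indepFun (μ := Measure.pi μ) Finset.univ
    (fun i w => f i (w i)) (iIndepFun_pi (X := fun i => f i) fun i => (hf i).aemeasurable)
    (fun i => (hf i).comp (measurable_pi_apply i))
  rw [h]
  refine Finset.prod_congr rfl fun i _ => ?_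
  exact (measurePreserving_eval μ i).lintegral_comp (hf i)

/-- Replacing one coordinate of a product sample by an independent copy preserves the law. -/
lemma map_update_pi {ι : Type*} [Fintype ι] [DecidableEq ι] {α : ι → Type*}
    [∀ i, MeasurableSpace (α i)]
    (μ : ∀ i, Measure (α i)) [∀ i, IsProbabilityMeasure (μ i)] (i : ι) :
    ((Measure.pi μ).prod (μ i)).map (fun p => Function.update p.1 i p.2) = Measure.pi μ := by
  have hmeas : Measurable fun p : (∀ i, α i) × α i => Function.update p.1 i p.2 := by
    refine measurable_pi_iff.2 fun j => ?_
    rcases eq_or_ne j i with rfl | hj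
    · simpa using measurable_snd
    · simp only [Function.update_of_ne hj]; fun_prop
  symm
  refine Measure.pi_eq fun s hs => ?_
  rw [Measure.map_apply hmeas (MeasurableSet.univ_pi hs)]
  have : (fun p : (∀ i, α i) × α i => Function.update p.1 i p.2) ⁻¹' Set.univ.pi s =
      (Set.univ.pi (Function.update s i Set.univ)) ×ˢ s i := by
    ext ⟨p, y⟩
    simp only [Set.mem_preimage, Set.mem_pi, Set.mem_univ, true_implies, Set.mem_prod]
    constructor
    · intro h
      refine ⟨fun j => ?_, by simpa using h i⟩
      rcases eq_or_ne j i with rfl | hj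
      · simp
      · simpa [hj] using h j
    · rintro ⟨h, hy⟩ j
      rcases eq_or_ne j i with rfl | hj
      · simpa
      · simpa [hj] using h j
  rw [this, Measure.prod_prod, Measure.pi_pi, ← Finset.prod_erase_mul _ _ (Finset.mem_univ i),
    ← Finset.prod_erase_mul _ (fun j => μ j (s j)) (Finset.mem_univ i)]
  simp only [Function.update_self, measure_univ, mul_one]
  congr 1
  exact Finset.prod_congr rfl fun j hj => by rw [Function.update_of_ne (Finset.ne_of_mem_erase hj)]

/-- Conditioning on all coordinates but `i`: a bound on the integral over coordinate `i`
integrates to a bound on the whole integral. No measurability is required. -/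
lemma lintegral_resample_le {ι : Type*} [Fintype ι] [DecidableEq ι] {α : ι → Type*}
    [∀ i, MeasurableSpace (α i)]
    (μ : ∀ i, Measure (α i)) [∀ i, IsProbabilityMeasure (μ i)] (i : ι) (f G : (∀ i, α i) → ENNReal)
    (h : ∀ w, ∫⁻ y, f (Function.update w i y) ∂μ i ≤ G w) :
    ∫⁻ w, f w ∂Measure.pi μ ≤ ∫⁻ w, G w ∂Measure.pi μ := by
  conv_lhs => rw [← map_update_pi μ i]
  exact (lintegral_map_le _ _).trans ((lintegral_prod_le _).trans (lintegral_mono h))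

/-! ### Gaussian rows -/

lemma lintegral_exp_gaussian (v : NNReal) (c : ℝ) :
    ∫⁻ y, ENNReal.ofReal (Real.exp (c * y)) ∂gaussianReal 0 v =
      ENNReal.ofReal (Real.exp (v * c ^ 2 / 2)) := by
  rw [← ofReal_integral_eq_lintegral_ofReal]
  · have := mgf_gaussianReal (p := gaussianReal 0 v) (X := id) (μ := 0) (v := v) Measure.map_id c
    simp only [mgf, id, zero_mul, zero_add] at this
    rw [this]
  · simpa using integrable_exp_mul_gaussianReal (μ := 0) (v := v) c
  · exact Filter.Eventually.of_forall fun _ => (Real.exp_pos _).le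

lemma lintegral_exp_sq_gaussian {v : NNReal} (hv : v ≠ 0) {c : ℝ} (hc : 2 * c * v < 1) :
    ∫⁻ y, ENNReal.ofReal (Real.exp (c * y ^ 2)) ∂gaussianReal 0 v =
      ENNReal.ofReal (1 / Real.sqrt (1 - 2 * c * v)) := by
  have hv0 : (0 : ℝ) < v := by positivity
  have ha : 0 < 1 - 2 * c * v := by linarith
  let v' : NNReal := ⟨v / (1 - 2 * c * v), by positivity⟩
  have hv'c : (v' : ℝ) = v / (1 - 2 * c * v) := rfl
  have hv' : v' ≠ 0 := by
    intro h
    have : (v' : ℝ) = 0 := by rw [h]; rfl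
    rw [hv'c] at this
    exact absurd this (by positivity)
  rw [gaussianReal_of_var_ne_zero _ hv, lintegral_withDensity_eq_lintegral_mul _
    (measurable_gaussianPDF _ _) (by fun_prop)]
  have hpt : ∀ y : ℝ, (gaussianPDF 0 v * fun y => ENNReal.ofReal (Real.exp (c * y ^ 2))) y =
      ENNReal.ofReal (1 / Real.sqrt (1 - 2 * c * v)) * gaussianPDF 0 v' y := by
    intro y
    simp only [Pi.mul_apply, gaussianPDF, gaussianPDFReal]
    rw [← ENNReal.ofReal_mul (by positivity), ← ENNReal.ofReal_mul (by positivity)]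
    congr 1
    rw [hv'c, mul_assoc, ← Real.exp_add, ← mul_assoc]
    congr 1
    · rw [show 2 * Real.pi * (v / (1 - 2 * c * v)) = (2 * Real.pi * v) / (1 - 2 * c * v) by ring,
        Real.sqrt_div (by positivity)]
      have : Real.sqrt (1 - 2 * c * v) ≠ 0 := by positivity
      generalize Real.sqrt (1 - 2 * c * v) = r at *
      field_simp
    · congr 1
      field_simp
      ring
  rw [lintegral_congr hpt, lintegral_const_mul _ (measurable_gaussianPDF _ _),
    lintegral_gaussianPDF_eq_one _ hv', mul_one]

/-- The law of a row with i.i.d. `N(0, v)` entries. -/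
abbrev gaussRow (q : ℕ) (v : NNReal) : Measure (Fin q → ℝ) :=
  Measure.pi fun _ => gaussianReal 0 v

lemma measurable_dot {q : ℕ} (z : Fin q → ℝ) : Measurable fun w : Fin q → ℝ => dot w z := by
  unfold dot; fun_prop

lemma map_dot_gaussRow {q : ℕ} (v : NNReal) (z : Fin q → ℝ) {σ : NNReal}
    (hσ : (σ : ℝ) = v * l2 z ^ 2) :
    (gaussRow q v).map (fun w => dot w z) = gaussianReal 0 σ := by
  have : IsProbabilityMeasure ((gaussRow q v).map (fun w => dot w z)) :=
    Measure.isProbabilityMeasure_map (measurable_dot z).aemeasurable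
  refine Measure.ext_of_charFun (funext fun s => ?_)
  rw [charFun_gaussianReal, charFun_apply_real, integral_map (measurable_dot z).aemeasurable
    (by fun_prop)]
  have h1 : ∀ w : Fin q → ℝ, Complex.exp (s * (dot w z : ℝ) * Complex.I) =
      ∏ k, Complex.exp ((s * z k : ℝ) * (w k : ℝ) * Complex.I) := by
    intro w
    rw [← Complex.exp_sum]
    congr 1
    rw [dot]; push_cast
    rw [Finset.mul_sum, Finset.sum_mul]
    exact Finset.sum_congr rfl fun k _ => by ring
  simp_rw [h1]
  rw [integral_fintype_prod_eq_prod (𝕜 := ℂ)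
    (f := fun k (y : ℝ) => Complex.exp ((s * z k : ℝ) * (y : ℝ) * Complex.I))]
  simp_rw [← charFun_apply_real, charFun_gaussianReal]
  rw [← Complex.exp_sum]
  congr 1
  have h2 : ((σ : ℝ) : ℂ) = v * ∑ k, (z k : ℂ) ^ 2 := by
    rw [hσ, l2_sq]; push_cast; rfl
  rw [h2]
  push_cast
  simp only [mul_zero, zero_mul, zero_sub, Finset.sum_neg_distrib]
  rw [Finset.mul_sum, Finset.sum_mul, Finset.sum_div]
  congr 1
  exact Finset.sum_congr rfl fun k _ => by ring

/-! ### One random layer -/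

instance (p q : ℕ) (v : NNReal) : IsProbabilityMeasure (gaussMat p q v) := by
  unfold gaussMat; infer_instance

lemma gaussMat_eq (p q : ℕ) (v : NNReal) : gaussMat p q v = Measure.pi fun _ => gaussRow q v := rfl

lemma measurePreserving_neg_gaussRow (q : ℕ) (v : NNReal) :
    MeasurePreserving (fun w : Fin q → ℝ => -w) (gaussRow q v) (gaussRow q v) := by
  have h : MeasurePreserving (fun y : ℝ => -y) (gaussianReal 0 v) (gaussianReal 0 v) :=
    ⟨measurable_neg, by rw [gaussianReal_map_neg, neg_zero]⟩
  exact measurePreserving_pi _ _ fun _ => h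

lemma exists_var (v : NNReal) {q : ℕ} (z : Fin q → ℝ) : ∃ σ : NNReal, (σ : ℝ) = v * l2 z ^ 2 :=
  ⟨⟨v * l2 z ^ 2, by positivity⟩, rfl⟩

lemma var_ne_zero {v σ : NNReal} (hv : v ≠ 0) {q : ℕ} {z : Fin q → ℝ} (hz : z ≠ 0)
    (hσ : (σ : ℝ) = v * l2 z ^ 2) : σ ≠ 0 := by
  rintro rfl
  have h1 := l2_pos hz
  have h2 : (0 : ℝ) < v := by positivity
  have : (0 : ℝ) < v * l2 z ^ 2 := by positivity
  rw [← hσ] at this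
  simp at this

lemma ae_dot_ne_zero {q : ℕ} {v : NNReal} (hv : v ≠ 0) {h : Fin q → ℝ} (hh : h ≠ 0) :
    ∀ᵐ w ∂gaussRow q v, dot w h ≠ 0 := by
  obtain ⟨σ, hσ⟩ := exists_var v h
  have := nullSingletonClass_gaussianReal (μ := 0) (var_ne_zero hv hh hσ)
  have h0 : (gaussRow q v).map (fun w => dot w h) {0} = 0 := by
    rw [map_dot_gaussRow v h hσ]; exact measure_singleton 0
  rw [Measure.map_apply (measurable_dot h) (measurableSet_singleton 0)] at h0
  rw [ae_iff]
  simpa [Set.preimage] using h0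

/-- A Gaussian row falls on either side of the hyperplane `h^⊥` with probability one half,
independently of every even function of the row. -/
lemma lintegral_half {q : ℕ} {v : NNReal} (hv : v ≠ 0) {h : Fin q → ℝ} (hh : h ≠ 0)
    {F : (Fin q → ℝ) → ENNReal} (hF : Measurable F) (hev : ∀ w, F (-w) = F w) :
    2 * ∫⁻ w, (if 0 ≤ dot w h then F w else 1) ∂gaussRow q v = ∫⁻ w, F w ∂gaussRow q v + 1 := by
  have hm : Measurable fun w : Fin q → ℝ => if 0 ≤ dot w h then F w else 1 :=
    Measurable.ite (measurableSet_le measurable_const (measurable_dot h)) hF measurable_const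
  have h1 := (measurePreserving_neg_gaussRow q v).lintegral_comp hm
  have h2 : 2 * ∫⁻ w, (if 0 ≤ dot w h then F w else 1) ∂gaussRow q v =
      ∫⁻ w, ((if 0 ≤ dot w h then F w else 1) + (if 0 ≤ dot (-w) h then F (-w) else 1))
        ∂gaussRow q v := by
    rw [lintegral_add_left hm, h1, two_mul]
  rw [h2]
  have h3 : ∫⁻ w, F w ∂gaussRow q v + 1 = ∫⁻ w, (F w + 1) ∂gaussRow q v := by
    rw [lintegral_add_left hF]; simp
  rw [h3]
  refine lintegral_congr_ae ?_
  filter_upwards [ae_dot_ne_zero hv hh] with w hw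
  have hn : dot (-w) h = -dot w h := by simp [dot]
  rw [hev, hn]
  rcases lt_or_gt_of_ne hw with h' | h'
  · rw [if_neg (by linarith), if_pos (by linarith), add_comm]
  · rw [if_pos h'.le, if_neg (by linarith)]

lemma lintegral_exp_dot_sq {q : ℕ} {v : NNReal} (hv : v ≠ 0) (z : Fin q → ℝ) {c : ℝ}
    (hc : 2 * c * (v * l2 z ^ 2) < 1) :
    ∫⁻ w, ENNReal.ofReal (Real.exp (c * dot w z ^ 2)) ∂gaussRow q v =
      ENNReal.ofReal (1 / Real.sqrt (1 - 2 * c * (v * l2 z ^ 2))) := by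
  rcases eq_or_ne z 0 with rfl | hz
  · simp
  obtain ⟨σ, hσ⟩ := exists_var v z
  rw [← hσ] at hc ⊢
  rw [← lintegral_exp_sq_gaussian (var_ne_zero hv hz hσ) hc, ← map_dot_gaussRow v z hσ,
    lintegral_map (by fun_prop) (measurable_dot z)]

lemma lintegral_row_exp {q : ℕ} {v : NNReal} (hv : v ≠ 0) {h : Fin q → ℝ} (hh : h ≠ 0)
    (z : Fin q → ℝ) {c : ℝ} (hc : 2 * c * (v * l2 z ^ 2) < 1) :
    ∫⁻ w, (if 0 ≤ dot w h then ENNReal.ofReal (Real.exp (c * dot w z ^ 2)) else 1) ∂gaussRow q v =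
      ENNReal.ofReal ((1 + 1 / Real.sqrt (1 - 2 * c * (v * l2 z ^ 2))) / 2) := by
  have h1 := lintegral_half hv hh (F := fun w => ENNReal.ofReal (Real.exp (c * dot w z ^ 2)))
    (by have := measurable_dot z; fun_prop) (fun w => by simp [dot])
  rw [lintegral_exp_dot_sq hv z hc] at h1
  have h2 : (2 : ENNReal) * ENNReal.ofReal ((1 + 1 / Real.sqrt (1 - 2 * c * (v * l2 z ^ 2))) / 2) =
      ENNReal.ofReal (1 / Real.sqrt (1 - 2 * c * (v * l2 z ^ 2))) + 1 := by
    rw [show (2 : ENNReal) = ENNReal.ofReal 2 by simp, ← ENNReal.ofReal_mul (by norm_num),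
      ← ENNReal.ofReal_one, ← ENNReal.ofReal_add (by positivity) (by norm_num)]
    congr 1; ring
  rw [← h2] at h1
  exact (ENNReal.mul_right_inj (by norm_num) (by norm_num)).1 h1

lemma half_inv_sqrt_le {y : ℝ} (hy : |y| ≤ 1 / 2) :
    (1 + 1 / Real.sqrt (1 - y)) / 2 ≤ Real.exp (y / 4 + y ^ 2 / 2) := by
  obtain ⟨h1, h2⟩ := abs_le.1 hy
  have hpos : 0 < 1 - y := by linarith
  have hp : 0 < 1 + y / 2 + y ^ 2 := by nlinarith
  have : 1 / Real.sqrt (1 - y) ≤ 1 + y / 2 + y ^ 2 := by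
    rw [div_le_iff₀ (Real.sqrt_pos.2 hpos)]
    have h3 : 1 ≤ ((1 + y / 2 + y ^ 2) * Real.sqrt (1 - y)) ^ 2 := by
      rw [mul_pow, Real.sq_sqrt hpos.le]
      have : (1 + y / 2 + y ^ 2) ^ 2 * (1 - y) = 1 + y ^ 2 * (5 / 4 * (1 - y) - y ^ 3) := by ring
      rw [this]
      have h4 : y ^ 3 ≤ 1 / 8 := by
        nlinarith [mul_nonneg (sub_nonneg.2 h2) (by nlinarith : (0:ℝ) ≤ y ^ 2 + y / 2 + 1 / 4)]
      nlinarith [mul_nonneg (sq_nonneg y) (by linarith : (0:ℝ) ≤ 5 / 4 * (1 - y) - y ^ 3)]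
    have h5 : 0 ≤ (1 + y / 2 + y ^ 2) * Real.sqrt (1 - y) := by positivity
    nlinarith
  have h6 := Real.add_one_le_exp (y / 4 + y ^ 2 / 2)
  linarith

lemma l2_layer_sq {p q : ℕ} (Y : Fin p → Fin q → ℝ) (h z : Fin q → ℝ) :
    l2 (signOf (mulVec Y h) * mulVec Y z) ^ 2 =
      ∑ k, if 0 ≤ dot (Y k) h then dot (Y k) z ^ 2 else 0 := by
  rw [l2_sq]
  refine Finset.sum_congr rfl fun k _ => ?_
  change ((if 0 ≤ dot (Y k) h then (1 : ℝ) else 0) * dot (Y k) z) ^ 2 = _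
  split_ifs <;> simp

lemma ofReal_exp_sum {ι : Type*} (s : Finset ι) (f : ι → ℝ) :
    ENNReal.ofReal (Real.exp (∑ k ∈ s, f k)) = ∏ k ∈ s, ENNReal.ofReal (Real.exp (f k)) := by
  rw [Real.exp_sum, ENNReal.ofReal_prod_of_nonneg fun _ _ => (Real.exp_pos _).le]

lemma coe_two_div (m : ℕ) : ((2 / m : NNReal) : ℝ) = 2 / m := by simp

lemma two_div_ne_zero {m : ℕ} (hm : 0 < m) : (2 / m : NNReal) ≠ 0 := by
  have : (m : NNReal) ≠ 0 := by positivity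
  positivity

/-- Exponential moments of the squared norm ratio of one random ReLU layer. -/
lemma layer_exp {q : ℕ} (hm : 0 < m) {h z : Fin q → ℝ} (hh : h ≠ 0) (hz : z ≠ 0) {x : ℝ}
    (hx : |x| ≤ m / 8) :
    ∫⁻ Y, ENNReal.ofReal (Real.exp
        (x * (l2 (signOf (mulVec Y h) * mulVec Y z) ^ 2 / l2 z ^ 2 - 1))) ∂gaussMat m q (2 / m) ≤
      ENNReal.ofReal (Real.exp (8 * x ^ 2 / m)) := by
  have hm' : (0 : ℝ) < m := by exact_mod_cast hm
  have hz' := l2_pos hz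
  set c := x / l2 z ^ 2 with hcdef
  have hY : 2 * c * ((2 / m : NNReal) * l2 z ^ 2) = 4 * x / m := by
    rw [hcdef, coe_two_div]; field_simp; ring
  have hyabs : |4 * x / m| ≤ 1 / 2 := by
    rw [abs_div, abs_mul, abs_of_pos hm', abs_of_pos (by norm_num : (0:ℝ) < 4),
      div_le_iff₀ hm']
    linarith
  have hpt : ∀ Y : Fin m → Fin q → ℝ, ENNReal.ofReal (Real.exp
        (x * (l2 (signOf (mulVec Y h) * mulVec Y z) ^ 2 / l2 z ^ 2 - 1))) =
      ENNReal.ofReal (Real.exp (-x)) * ∏ k, (if 0 ≤ dot (Y k) h then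
        ENNReal.ofReal (Real.exp (c * dot (Y k) z ^ 2)) else 1) := by
    intro Y
    rw [l2_layer_sq, show ∀ s : ℝ, x * (s / l2 z ^ 2 - 1) = -x + c * s by
      intro s; rw [hcdef]; ring, Real.exp_add, ENNReal.ofReal_mul (Real.exp_pos _).le,
      Finset.mul_sum, ofReal_exp_sum]
    congr 1
    refine Finset.prod_congr rfl fun k _ => ?_
    split_ifs <;> simp
  rw [lintegral_congr hpt]
  have hmeas : Measurable fun w : Fin q → ℝ => if 0 ≤ dot w h then
      ENNReal.ofReal (Real.exp (c * dot w z ^ 2)) else 1 := by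
    have := measurable_dot z
    exact Measurable.ite (measurableSet_le measurable_const (measurable_dot h)) (by fun_prop)
      measurable_const
  have hlt : 2 * c * ((2 / m : NNReal) * l2 z ^ 2) < 1 := by
    rw [hY]; linarith [(abs_le.1 hyabs).2]
  rw [gaussMat_eq, lintegral_const_mul', lintegral_pi_prod _ (fun _ w => if 0 ≤ dot w h then
        ENNReal.ofReal (Real.exp (c * dot w z ^ 2)) else 1) (fun _ => hmeas)]
  swap
  · exact ENNReal.ofReal_ne_top
  rw [Finset.prod_const, lintegral_row_exp (two_div_ne_zero hm) hh z hlt, Finset.card_univ,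
    Fintype.card_fin, hY, ← ENNReal.ofReal_pow (by positivity),
    ← ENNReal.ofReal_mul (Real.exp_pos _).le]
  refine ENNReal.ofReal_le_ofReal ?_
  calc Real.exp (-x) * ((1 + 1 / Real.sqrt (1 - 4 * x / m)) / 2) ^ m
      ≤ Real.exp (-x) * Real.exp (4 * x / m / 4 + (4 * x / m) ^ 2 / 2) ^ m := by
        gcongr; exact half_inv_sqrt_le hyabs
    _ = Real.exp (8 * x ^ 2 / m) := by
        rw [← Real.exp_nat_mul, ← Real.exp_add]; congr 1; field_simp; ring

/-- Power moments of one random ReLU layer. -/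
lemma layer_rpow {q : ℕ} (hm : 0 < m) {h : Fin q → ℝ} (hh : h ≠ 0) (z : Fin q → ℝ) {x : ℝ}
    (hx0 : 0 < x) (hx : x ≤ m / 8) :
    ∫⁻ Y, ENNReal.ofReal ((l2 (signOf (mulVec Y h) * mulVec Y z) ^ 2) ^ x)
        ∂gaussMat m q (2 / m) ≤
      ENNReal.ofReal (Real.exp (8 * x ^ 2 / m)) * ENNReal.ofReal ((l2 z ^ 2) ^ x) := by
  rcases eq_or_ne z 0 with rfl | hz
  · have : ∀ Y : Fin m → Fin q → ℝ,
        ENNReal.ofReal ((l2 (signOf (mulVec Y h) * mulVec Y 0) ^ 2) ^ x) = 0 := by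
      intro Y
      rw [l2_layer_sq]; simp [Real.zero_rpow hx0.ne']
    simp [this]
  have hz' := l2_pos hz
  refine le_trans ?_ (mul_le_mul_left (layer_exp hm hh hz (by rwa [abs_of_pos hx0])) _)
  rw [← lintegral_mul_const' _ _ ENNReal.ofReal_ne_top]
  refine lintegral_mono fun Y => ?_
  dsimp only
  rw [← ENNReal.ofReal_mul (Real.exp_pos _).le]
  refine ENNReal.ofReal_le_ofReal ?_
  set s := l2 (signOf (mulVec Y h) * mulVec Y z) ^ 2
  have hs : 0 ≤ s := by positivity
  have h1 : s = s / l2 z ^ 2 * l2 z ^ 2 := by field_simp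
  calc s ^ x = (s / l2 z ^ 2) ^ x * (l2 z ^ 2) ^ x := by
        conv_lhs => rw [h1]
        rw [Real.mul_rpow (by positivity) (by positivity)]
    _ ≤ _ := by
        gcongr
        rw [mul_comm x, Real.exp_mul]
        refine Real.rpow_le_rpow (by positivity) ?_ hx0.le
        linarith [Real.add_one_le_exp (s / l2 z ^ 2 - 1)]

/-- Chernoff's bound with the measurability of the event assumed instead of that of the weight. -/
lemma measure_le_lintegral {Ω : Type*} [MeasurableSpace Ω] {μ : Measure Ω} {S : Set Ω}
    (hS : MeasurableSet S) {f : Ω → ENNReal} (h : ∀ ω ∈ S, 1 ≤ f ω) : μ S ≤ ∫⁻ ω, f ω ∂μ := by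
  rw [← lintegral_indicator_one hS]
  refine lintegral_mono fun ω => ?_
  by_cases hω : ω ∈ S
  · simpa [hω] using h ω hω
  · simp [hω]

lemma measurable_mulVec {p q : ℕ} (z : Fin q → ℝ) :
    Measurable fun Y : Fin p → Fin q → ℝ => mulVec Y z := by
  unfold mulVec; fun_prop

lemma measurable_l2 {p : ℕ} : Measurable (l2 : (Fin p → ℝ) → ℝ) := by
  unfold l2; fun_prop

lemma measurable_relu {p : ℕ} : Measurable (relu : (Fin p → ℝ) → Fin p → ℝ) := by
  unfold relu; fun_prop

/-- Concentration of the norm through one random ReLU layer. -/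
lemma layer_tail {q : ℕ} (hm : 0 < m) {h : Fin q → ℝ} (hh : h ≠ 0) {δ : ℝ} (hδ0 : 0 < δ)
    (hδ : δ ≤ 1) :
    gaussMat m q (2 / m) {Y | δ * l2 h ^ 2 < |l2 (relu (mulVec Y h)) ^ 2 - l2 h ^ 2|} ≤
      ENNReal.ofReal (2 * Real.exp (-(m * δ ^ 2 / 32))) := by
  have hm' : (0 : ℝ) < m := by exact_mod_cast hm
  have hz' := l2_pos hh
  have hmeas : Measurable fun Y : Fin m → Fin q → ℝ => l2 (relu (mulVec Y h)) :=
    measurable_l2.comp (measurable_relu.comp (measurable_mulVec h))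
  have hS : MeasurableSet {Y : Fin m → Fin q → ℝ |
      δ * l2 h ^ 2 < |l2 (relu (mulVec Y h)) ^ 2 - l2 h ^ 2|} :=
    measurableSet_lt measurable_const ((hmeas.pow_const 2).sub_const _).abs
  set x : ℝ := m * δ / 16 with hx
  have hxle : |x| ≤ m / 8 := by
    rw [abs_of_pos (by positivity), hx]; nlinarith
  have key : ∀ ε : ℝ, |ε| = x → ∫⁻ Y, ENNReal.ofReal (Real.exp (-(x * δ)) * Real.exp
      (ε * (l2 (signOf (mulVec Y h) * mulVec Y h) ^ 2 / l2 h ^ 2 - 1)))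
        ∂gaussMat m q (2 / m) ≤ ENNReal.ofReal (Real.exp (-(m * δ ^ 2 / 32))) := by
    intro ε hε
    simp_rw [ENNReal.ofReal_mul (Real.exp_pos _).le]
    rw [lintegral_const_mul' _ _ ENNReal.ofReal_ne_top]
    refine (mul_le_mul_right (layer_exp hm hh hh (by rw [hε, ← abs_of_pos (by positivity : 0 < x)]
                                                     exact hxle)) _).trans ?_
    rw [← ENNReal.ofReal_mul (Real.exp_pos _).le, ← Real.exp_add]
    refine ENNReal.ofReal_le_ofReal (Real.exp_le_exp.2 (le_of_eq ?_))
    rw [← sq_abs ε, hε, hx]; field_simp; ring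
  have hx0 : 0 < x := by positivity
  have h2 : ENNReal.ofReal (2 * Real.exp (-(m * δ ^ 2 / 32))) =
      ENNReal.ofReal (Real.exp (-(m * δ ^ 2 / 32))) +
        ENNReal.ofReal (Real.exp (-(m * δ ^ 2 / 32))) := by
    rw [← ENNReal.ofReal_add (Real.exp_pos _).le (Real.exp_pos _).le, two_mul]
  rw [h2]
  refine le_trans ?_ (add_le_add (key x (abs_of_pos hx0)) (key (-x) (by rw [abs_neg, abs_of_pos hx0])))
  refine le_trans (measure_le_lintegral hS (f := fun Y => ENNReal.ofReal (Real.exp (-(x * δ)) *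
      Real.exp (x * (l2 (signOf (mulVec Y h) * mulVec Y h) ^ 2 / l2 h ^ 2 - 1))) +
      ENNReal.ofReal (Real.exp (-(x * δ)) *
      Real.exp (-x * (l2 (signOf (mulVec Y h) * mulVec Y h) ^ 2 / l2 h ^ 2 - 1)))) ?_) ?_
  · intro Y hY
    simp only [Set.mem_ofPred_eq] at hY
    rw [← relu_eq, ← Real.exp_add, ← Real.exp_add]
    rcases lt_abs.1 hY with h' | h'
    · refine le_trans ?_ le_self_add
      rw [ENNReal.one_le_ofReal, Real.one_le_exp_iff]
      have : δ ≤ l2 (relu (mulVec Y h)) ^ 2 / l2 h ^ 2 - 1 := by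
        rw [le_sub_iff_add_le, le_div_iff₀ (by positivity)]; nlinarith
      nlinarith
    · refine le_trans ?_ le_add_self
      rw [ENNReal.one_le_ofReal, Real.one_le_exp_iff]
      have : l2 (relu (mulVec Y h)) ^ 2 / l2 h ^ 2 ≤ 1 - δ := by
        rw [div_le_iff₀ (by positivity)]; nlinarith
      nlinarith
  · refine le_of_eq (lintegral_add_left ?_ _)
    simp_rw [← relu_eq]
    fun_prop

lemma measurable_nearSet_card {p : ℕ} (a : ℝ) :
    Measurable fun g : Fin p → ℝ => ((nearSet a g).card : ℝ) := by
  have : (fun g : Fin p → ℝ => ((nearSet a g).card : ℝ)) =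
      fun g => ∑ k, if |g k| ≤ a then (1 : ℝ) else 0 := by
    funext g; simp [nearSet]
  rw [this]
  refine Finset.measurable_sum _ fun k _ => ?_
  exact Measurable.ite (measurableSet_le (measurable_pi_apply k).abs measurable_const)
    measurable_const measurable_const

lemma gaussianReal_near_le {σ : NNReal} (hσ : σ ≠ 0) (a : ℝ) :
    gaussianReal 0 σ (Set.Icc (-a) a) ≤ ENNReal.ofReal (2 * a / Real.sqrt (2 * Real.pi * σ)) := by
  have hσ' : (0 : ℝ) < σ := by positivity
  rw [gaussianReal_apply _ hσ]
  calc ∫⁻ y in Set.Icc (-a) a, gaussianPDF 0 σ y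
      ≤ ∫⁻ _ in Set.Icc (-a) a, ENNReal.ofReal ((Real.sqrt (2 * Real.pi * σ))⁻¹) := by
        refine lintegral_mono fun y => ENNReal.ofReal_le_ofReal ?_
        unfold gaussianPDFReal
        refine mul_le_of_le_one_right (by positivity) (Real.exp_le_one_iff.2 ?_)
        exact div_nonpos_of_nonpos_of_nonneg (by nlinarith) (by positivity)
    _ = _ := by
        rw [setLIntegral_const, Real.volume_Icc, ← ENNReal.ofReal_mul (by positivity)]
        congr 1; ring

lemma exp_four_le : Real.exp 4 ≤ 55 := by
  have h := Real.exp_one_lt_d9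
  have : Real.exp 4 = Real.exp 1 ^ 4 := by rw [← Real.exp_nat_mul]; norm_num
  rw [this]
  calc Real.exp 1 ^ 4 ≤ 2.7182818286 ^ 4 := by gcongr
    _ ≤ 55 := by norm_num

/-- Exponential moment of the number of pre-activations near the kink in one layer. -/
lemma layer_count {q : ℕ} (hm : 0 < m) {h : Fin q → ℝ} (hh : h ≠ 0) {τ : ℝ} (hτ : 0 ≤ τ) :
    ∫⁻ Y, ENNReal.ofReal (Real.exp (4 * (nearSet (2 * τ * l2 h) (mulVec Y h)).card))
        ∂gaussMat m q (2 / m) ≤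
      ENNReal.ofReal (Real.exp (110 * (m * (τ * Real.sqrt m)))) := by
  have hm' : (0 : ℝ) < m := by exact_mod_cast hm
  have hz' := l2_pos hh
  set a := 2 * τ * l2 h with ha
  have hS : MeasurableSet {w : Fin q → ℝ | |dot w h| ≤ a} :=
    measurableSet_le (measurable_dot h).abs measurable_const
  have hpt : ∀ Y : Fin m → Fin q → ℝ,
      ENNReal.ofReal (Real.exp (4 * (nearSet a (mulVec Y h)).card)) ≤
        ∏ k, (1 + {w : Fin q → ℝ | |dot w h| ≤ a}.indicator
          (fun _ => ENNReal.ofReal (Real.exp 4)) (Y k)) := by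
    intro Y
    have : (4 : ℝ) * (nearSet a (mulVec Y h)).card = ∑ k, if |dot (Y k) h| ≤ a then (4 : ℝ) else 0 := by
      rw [← Finset.sum_filter, Finset.sum_const, nsmul_eq_mul, mul_comm]; rfl
    rw [this, ofReal_exp_sum]
    refine Finset.prod_le_prod' fun k _ => ?_
    by_cases hk : |dot (Y k) h| ≤ a
    · rw [if_pos hk, Set.indicator_of_mem (by exact hk)]; exact le_add_self
    · rw [if_neg hk]; simp
  refine (lintegral_mono hpt).trans ?_
  have hmeas : Measurable fun w : Fin q → ℝ => 1 + {w : Fin q → ℝ | |dot w h| ≤ a}.indicator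
      (fun _ => ENNReal.ofReal (Real.exp 4)) w :=
    (measurable_const.indicator hS).const_add _
  rw [gaussMat_eq, lintegral_pi_prod _ (fun _ w => 1 + {w : Fin q → ℝ | |dot w h| ≤ a}.indicator
      (fun _ => ENNReal.ofReal (Real.exp 4)) w) fun _ => hmeas, Finset.prod_const,
    Finset.card_univ, Fintype.card_fin]
  obtain ⟨σ, hσ⟩ := exists_var (2 / m : NNReal) h
  have hσ0 := var_ne_zero (two_div_ne_zero hm) hh hσ
  have hprob : gaussRow q (2 / m) {w : Fin q → ℝ | |dot w h| ≤ a} ≤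
      ENNReal.ofReal (2 * (τ * Real.sqrt m)) := by
    have h1 : {w : Fin q → ℝ | |dot w h| ≤ a} = (fun w => dot w h) ⁻¹' Set.Icc (-a) a := by
      ext w; simp [abs_le]
    rw [h1, ← Measure.map_apply (measurable_dot h) measurableSet_Icc, map_dot_gaussRow _ h hσ]
    refine (gaussianReal_near_le hσ0 a).trans (ENNReal.ofReal_le_ofReal ?_)
    rw [hσ, coe_two_div]
    have h2 : 2 * l2 h / Real.sqrt m ≤ Real.sqrt (2 * Real.pi * (2 / m * l2 h ^ 2)) := by
      refine Real.le_sqrt_of_sq_le ?_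
      rw [div_pow, Real.sq_sqrt hm'.le, div_le_iff₀ hm']
      have h3 : 2 * Real.pi * (2 / m * l2 h ^ 2) * m = Real.pi * (4 * l2 h ^ 2) := by
        field_simp; ring
      rw [h3]
      nlinarith [Real.pi_gt_three, sq_nonneg (l2 h)]
    have hs : 0 < Real.sqrt m := Real.sqrt_pos.2 hm'
    have h4 : 0 < 2 * l2 h / Real.sqrt m := by positivity
    rw [div_le_iff₀ (h4.trans_le h2)]
    calc 2 * a = 2 * (τ * Real.sqrt m) * (2 * l2 h / Real.sqrt m) := by rw [ha]; field_simp
      _ ≤ _ := by gcongr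
  have hrow : ∫⁻ w, (1 + {w : Fin q → ℝ | |dot w h| ≤ a}.indicator
      (fun _ => ENNReal.ofReal (Real.exp 4)) w) ∂gaussRow q (2 / m) ≤
      ENNReal.ofReal (Real.exp (110 * (τ * Real.sqrt m))) := by
    rw [lintegral_add_left measurable_const, lintegral_indicator_const hS]
    simp only [lintegral_const, measure_univ, mul_one]
    refine (add_le_add_right (mul_le_mul_right hprob _) _).trans ?_
    rw [← ENNReal.ofReal_mul (Real.exp_pos _).le, ← ENNReal.ofReal_one,
      ← ENNReal.ofReal_add zero_le_one (by positivity)]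
    refine ENNReal.ofReal_le_ofReal ?_
    have h5 := Real.add_one_le_exp (110 * (τ * Real.sqrt m))
    have h6 : 0 ≤ τ * Real.sqrt m := by positivity
    nlinarith [exp_four_le]
  refine (pow_le_pow_left₀ (by positivity) hrow m).trans (le_of_eq ?_)
  rw [← ENNReal.ofReal_pow (Real.exp_pos _).le, ← Real.exp_nat_mul]
  congr 2; ring

lemma lintegral_exp_bilin {p q : ℕ} (v : NNReal) (u : Fin p → ℝ) (z : Fin q → ℝ) (c : ℝ) :
    ∫⁻ Y, ENNReal.ofReal (Real.exp (c * dot u (mulVec Y z))) ∂gaussMat p q v =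
      ENNReal.ofReal (Real.exp (v * l2 u ^ 2 * l2 z ^ 2 * c ^ 2 / 2)) := by
  have hrow : ∀ (c : ℝ), ∫⁻ w, ENNReal.ofReal (Real.exp (c * dot w z)) ∂gaussRow q v =
      ENNReal.ofReal (Real.exp (v * l2 z ^ 2 * c ^ 2 / 2)) := by
    intro c
    obtain ⟨σ, hσ⟩ := exists_var v z
    rw [← hσ, ← lintegral_exp_gaussian, ← map_dot_gaussRow v z hσ,
      lintegral_map (by fun_prop) (measurable_dot z)]
  have hpt : ∀ Y : Fin p → Fin q → ℝ, ENNReal.ofReal (Real.exp (c * dot u (mulVec Y z))) =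
      ∏ k, ENNReal.ofReal (Real.exp (c * u k * dot (Y k) z)) := by
    intro Y
    rw [← ofReal_exp_sum, dot, Finset.mul_sum]
    congr 2
    exact Finset.sum_congr rfl fun k _ => by rw [mulVec_eq_dot]; ring
  rw [lintegral_congr hpt, gaussMat_eq, lintegral_pi_prod _
    (fun k w => ENNReal.ofReal (Real.exp (c * u k * dot w z)))
    (fun k => by have := measurable_dot z; fun_prop)]
  simp_rw [hrow]
  rw [← ofReal_exp_sum, l2_sq u]
  congr 2
  rw [Finset.mul_sum, Finset.sum_mul, Finset.sum_mul, Finset.sum_div]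
  exact Finset.sum_congr rfl fun k _ => by ring

lemma measurableSet_bilin {p q : ℕ} (u : Fin p → ℝ) (z : Fin q → ℝ) (ρ : ℝ) :
    MeasurableSet {Y : Fin p → Fin q → ℝ | ρ < |dot u (mulVec Y z)|} := by
  refine measurableSet_lt measurable_const (Measurable.abs ?_)
  simp_rw [dot_comm u]
  exact (measurable_dot u).comp (measurable_mulVec z)

/-- Gaussian tail of a bilinear form in a Gaussian matrix, converted into a power of `‖z‖` by
`exp (-s) ≤ exp (-X) (X / s)^X`. -/
lemma bilin_tail {p q : ℕ} {v : NNReal} (hv : v ≠ 0) (u : Fin p → ℝ) (z : Fin q → ℝ)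
    {ρ X n : ℝ} (hρ : 0 ≤ ρ) (hX : 0 < X) (hn : 0 < n)
    (hXn : X * n * (2 * v * l2 u ^ 2) ≤ ρ ^ 2) :
    gaussMat p q v {Y | ρ < |dot u (mulVec Y z)|} ≤
      ENNReal.ofReal (2 * Real.exp (-X) * n ^ (-X)) * ENNReal.ofReal ((l2 z ^ 2) ^ X) := by
  rcases eq_or_ne z 0 with rfl | hz
  · have : {Y : Fin p → Fin q → ℝ | ρ < |dot u (mulVec Y 0)|} = ∅ := by
      ext Y; simp [show mulVec Y (0 : Fin q → ℝ) = 0 by funext i; simp [mulVec], hρ]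
    rw [this]; simp
  rcases eq_or_ne u 0 with rfl | hu
  · have : {Y : Fin p → Fin q → ℝ | ρ < |dot 0 (mulVec Y z)|} = ∅ := by
      ext Y; simp [hρ]
    rw [this]; simp
  have hz' := l2_pos hz
  have hu' := l2_pos hu
  have hv' : (0 : ℝ) < v := by positivity
  set σ := v * l2 u ^ 2 * l2 z ^ 2 with hσ
  have hσ0 : 0 < σ := by positivity
  set c := ρ / σ with hc
  have hc0 : 0 ≤ c := by positivity
  refine (measure_le_lintegral (measurableSet_bilin u z ρ) (f := fun Y =>
    ENNReal.ofReal (Real.exp (-(c * ρ))) *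
      (ENNReal.ofReal (Real.exp (c * dot u (mulVec Y z))) +
        ENNReal.ofReal (Real.exp (-c * dot u (mulVec Y z))))) ?_).trans ?_
  · intro Y hY
    simp only [Set.mem_ofPred_eq] at hY
    rw [← ENNReal.ofReal_add (Real.exp_pos _).le (Real.exp_pos _).le,
      ← ENNReal.ofReal_mul (Real.exp_pos _).le, ENNReal.one_le_ofReal, mul_add, ← Real.exp_add,
      ← Real.exp_add]
    rcases lt_abs.1 hY with h' | h'
    · have : 1 ≤ Real.exp (-(c * ρ) + c * dot u (mulVec Y z)) := by
        rw [Real.one_le_exp_iff]; nlinarith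
      linarith [Real.exp_pos (-(c * ρ) + -c * dot u (mulVec Y z))]
    · have : 1 ≤ Real.exp (-(c * ρ) + -c * dot u (mulVec Y z)) := by
        rw [Real.one_le_exp_iff]; nlinarith
      linarith [Real.exp_pos (-(c * ρ) + c * dot u (mulVec Y z))]
  · have hm1 : Measurable fun Y : Fin p → Fin q → ℝ => dot u (mulVec Y z) := by
      simp_rw [dot_comm u]
      exact (measurable_dot u).comp (measurable_mulVec z)
    rw [lintegral_const_mul' _ _ ENNReal.ofReal_ne_top, lintegral_add_left (by fun_prop),
      lintegral_exp_bilin, lintegral_exp_bilin, ← hσ,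
      ← ENNReal.ofReal_add (Real.exp_pos _).le (Real.exp_pos _).le,
      ← ENNReal.ofReal_mul (Real.exp_pos _).le, ← ENNReal.ofReal_mul (by positivity), neg_sq]
    refine ENNReal.ofReal_le_ofReal ?_
    have h1 : Real.exp (-(c * ρ)) * (Real.exp (σ * c ^ 2 / 2) + Real.exp (σ * c ^ 2 / 2)) =
        2 * Real.exp (-(ρ ^ 2 / (2 * σ))) := by
      rw [← two_mul, mul_left_comm, ← Real.exp_add]
      congr 2
      rw [hc]; field_simp; ring
    rw [h1, mul_assoc, mul_assoc]
    refine mul_le_mul_of_nonneg_left ?_ (by norm_num)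
    set s := n / l2 z ^ 2 with hs
    have hs0 : 0 < s := by positivity
    have h2 : X * s ≤ ρ ^ 2 / (2 * σ) := by
      rw [le_div_iff₀ (by positivity)]
      refine le_trans (le_of_eq ?_) hXn
      rw [hs, hσ]; field_simp
    have h3 : n ^ (-X) * (l2 z ^ 2) ^ X = Real.exp (-(X * Real.log s)) := by
      rw [hs, Real.log_div hn.ne' (by positivity), Real.rpow_def_of_pos hn,
        Real.rpow_def_of_pos (by positivity), ← Real.exp_add]
      congr 1; ring
    rw [h3, ← Real.exp_add]
    refine Real.exp_le_exp.2 ?_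
    nlinarith [Real.log_le_sub_one_of_pos hs0]

lemma coe_one_div (d : ℕ) : ((1 / d : NNReal) : ℝ) = 1 / d := by simp

lemma one_div_ne_zero' {d : ℕ} (hd : 0 < d) : (1 / d : NNReal) ≠ 0 := by
  have : (d : NNReal) ≠ 0 := by positivity
  positivity

/-- Laplace transform of the norm of an output row restricted to the active neurons. -/
lemma row_active {p : ℕ} (hd : 0 < d) (j : Fin d) (g : Fin p → ℝ) :
    ∫⁻ B, ENNReal.ofReal (Real.exp (-(4 * d) * l2 (signOf g * B j) ^ 2)) ∂gaussMat d p (1 / d) =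
      ∏ k, if 0 ≤ g k then ENNReal.ofReal (1 / 3) else 1 := by
  have hd' : (0 : ℝ) < d := by exact_mod_cast hd
  have hpt : ∀ b : Fin p → ℝ, ENNReal.ofReal (Real.exp (-(4 * d) * l2 (signOf g * b) ^ 2)) =
      ∏ k, ENNReal.ofReal (Real.exp (if 0 ≤ g k then -(4 * d) * b k ^ 2 else 0)) := by
    intro b
    rw [← ofReal_exp_sum, l2_sq, Finset.mul_sum]
    congr 2
    refine Finset.sum_congr rfl fun k _ => ?_
    simp only [Pi.mul_apply, signOf]
    split_ifs <;> simp
  have hmeas : Measurable fun b : Fin p → ℝ =>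
      ENNReal.ofReal (Real.exp (-(4 * d) * l2 (signOf g * b) ^ 2)) := by
    have : Measurable fun b : Fin p → ℝ => l2 (signOf g * b) :=
      measurable_l2.comp (by fun_prop)
    fun_prop
  rw [gaussMat_eq, (measurePreserving_eval (fun _ : Fin d => gaussRow p (1 / d)) j).lintegral_comp
    hmeas, lintegral_congr hpt, lintegral_pi_prod _ (fun k y => ENNReal.ofReal (Real.exp
      (if 0 ≤ g k then -(4 * d) * y ^ 2 else 0)))]
  · refine Finset.prod_congr rfl fun k _ => ?_
    by_cases hk : 0 ≤ g k
    · simp only [if_pos hk]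
      rw [lintegral_exp_sq_gaussian (one_div_ne_zero' hd) (by rw [coe_one_div]; field_simp; norm_num)]
      rw [coe_one_div, show 1 - 2 * (-(4 * d)) * (1 / d) = (3 : ℝ) ^ 2 by field_simp; norm_num,
        Real.sqrt_sq (by norm_num)]
    · simp [hk]
  · intro k
    split_ifs <;> fun_prop

/-- Each neuron of a random layer is active with probability one half, independently of the others. -/
lemma lintegral_active {q : ℕ} (hm : 0 < m) {h : Fin q → ℝ} (hh : h ≠ 0) :
    ∫⁻ Y, ∏ k, (if 0 ≤ mulVec Y h k then ENNReal.ofReal (1 / 3) else 1) ∂gaussMat m q (2 / m) =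
      ENNReal.ofReal ((2 / 3) ^ m) := by
  have h1 := lintegral_half (two_div_ne_zero hm) hh (F := fun _ => ENNReal.ofReal (1 / 3))
    measurable_const fun _ => rfl
  have h2 : ∫⁻ w, (if 0 ≤ dot w h then ENNReal.ofReal (1 / 3) else 1) ∂gaussRow q (2 / m) =
      ENNReal.ofReal (2 / 3) := by
    refine (ENNReal.mul_right_inj (a := 2) (by norm_num) (by norm_num)).1 (h1.trans ?_)
    rw [show (2 : ENNReal) = ENNReal.ofReal 2 by simp, ← ENNReal.ofReal_mul (by norm_num)]
    simp only [lintegral_const, measure_univ, mul_one]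
    rw [← ENNReal.ofReal_one, ← ENNReal.ofReal_add (by norm_num) (by norm_num)]
    norm_num
  have := lintegral_pi_prod (fun _ : Fin m => gaussRow q (2 / m))
    (fun _ w => if 0 ≤ dot w h then ENNReal.ofReal (1 / 3) else 1) (fun _ =>
      Measurable.ite (measurableSet_le measurable_const (measurable_dot h)) measurable_const
        measurable_const)
  rw [Finset.prod_const, h2, Finset.card_univ, Fintype.card_fin,
    ← ENNReal.ofReal_pow (by norm_num)] at this
  exact this

/-! ### The randomly initialised network, layer by layer -/

/-- The layer product `D_b W_b ⋯ D_{a+1} W_{a+1} v` of the random network, set to `0` as soon as an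
activation vanishes (an event that is excluded later, but whose exclusion would break the
independence of the layers). -/
def safeProd (A : Fin m → Fin 𝔡 → ℝ) (W : Fin L → Fin m → Fin m → ℝ) (x : Fin 𝔡 → ℝ)
    (v : Fin m → ℝ) (a : ℕ) : ℕ → Fin m → ℝ
  | 0 => v
  | b + 1 =>
      if a ≤ b then
        if hseq A W x b = 0 then 0
        else signOf (gseq A W x (b + 1)) * mulVec (Wat W (b + 1)) (safeProd A W x v a b)
      else v

lemma mulVec_zero {p q : ℕ} (M : Fin p → Fin q → ℝ) : mulVec M 0 = 0 := by
  funext i; simp [mulVec]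

lemma safeProd_zero (A : Fin m → Fin 𝔡 → ℝ) (W : Fin L → Fin m → Fin m → ℝ) (x : Fin 𝔡 → ℝ)
    (a b : ℕ) : safeProd A W x 0 a b = 0 := by
  induction b with
  | zero => rfl
  | succ b ih => rw [safeProd, ih]; split_ifs <;> simp [mulVec_zero]

lemma safeProd_eq {A : Fin m → Fin 𝔡 → ℝ} {W : Fin L → Fin m → Fin m → ℝ} {x : Fin 𝔡 → ℝ}
    (v : Fin m → ℝ) (a : ℕ) {b : ℕ} (h : ∀ i < b, hseq A W x i ≠ 0) :
    safeProd A W x v a b = layerProd (Wat W) (fun i => signOf (gseq A W x i)) a b v := by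
  induction b with
  | zero => rw [layerProd_of_le _ _ (Nat.zero_le _)]; rfl
  | succ b ih =>
    rw [safeProd]
    split_ifs with h1 h2
    · exact absurd h2 (h b (by omega))
    · rw [layerProd_succ _ _ h1, ih fun i hi => h i (by omega)]
    · rw [layerProd_of_le _ _ (by omega)]

lemma Wat_update_self (W : Fin L → Fin m → Fin m → ℝ) (i : Fin L) (Y : Fin m → Fin m → ℝ) :
    Wat (Function.update W i Y) (i + 1) = Y := by
  rw [Wat_succ _ i.2]; simp

lemma Wat_update_of_ne (W : Fin L → Fin m → Fin m → ℝ) (i : Fin L) (Y : Fin m → Fin m → ℝ)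
    {ℓ : ℕ} (h : ℓ ≠ i + 1) : Wat (Function.update W i Y) ℓ = Wat W ℓ := by
  unfold Wat
  split_ifs with h'
  · rw [Function.update_of_ne]
    intro e
    have := congrArg Fin.val e
    simp only at this
    omega
  · rfl

lemma hseq_update (A : Fin m → Fin 𝔡 → ℝ) (W : Fin L → Fin m → Fin m → ℝ) (x : Fin 𝔡 → ℝ)
    (i : Fin L) (Y : Fin m → Fin m → ℝ) {j : ℕ} (hj : j ≤ i) :
    hseq A (Function.update W i Y) x j = hseq A W x j := by
  induction j with
  | zero => rfl
  | succ j ih => rw [hseq, hseq, ih (by omega), Wat_update_of_ne _ _ _ (by omega)]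

lemma gseq_update (A : Fin m → Fin 𝔡 → ℝ) (W : Fin L → Fin m → Fin m → ℝ) (x : Fin 𝔡 → ℝ)
    (i : Fin L) (Y : Fin m → Fin m → ℝ) {j : ℕ} (hj : j ≤ i) :
    gseq A (Function.update W i Y) x j = gseq A W x j := by
  cases j with
  | zero => rfl
  | succ j => rw [gseq, gseq, hseq_update _ _ _ _ _ (by omega), Wat_update_of_ne _ _ _ (by omega)]

lemma gseq_update_succ (A : Fin m → Fin 𝔡 → ℝ) (W : Fin L → Fin m → Fin m → ℝ) (x : Fin 𝔡 → ℝ)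
    (i : Fin L) (Y : Fin m → Fin m → ℝ) :
    gseq A (Function.update W i Y) x (i + 1) = mulVec Y (hseq A W x i) := by
  rw [gseq, hseq_update _ _ _ _ _ le_rfl, Wat_update_self]

lemma safeProd_update (A : Fin m → Fin 𝔡 → ℝ) (W : Fin L → Fin m → Fin m → ℝ) (x : Fin 𝔡 → ℝ)
    (v : Fin m → ℝ) (a : ℕ) (i : Fin L) (Y : Fin m → Fin m → ℝ) {j : ℕ} (hj : j ≤ i) :
    safeProd A (Function.update W i Y) x v a j = safeProd A W x v a j := by
  induction j with
  | zero => rfl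
  | succ j ih =>
    rw [safeProd, safeProd, ih (by omega), Wat_update_of_ne _ _ _ (by omega),
      hseq_update _ _ _ _ _ (by omega), gseq_update _ _ _ _ _ hj]

/-- The law of the hidden weights. -/
abbrev piW (m L : ℕ) : Measure (Fin L → Fin m → Fin m → ℝ) :=
  Measure.pi fun _ : Fin L => gaussMat m m (2 / m)

/-- The sample space of initialisations. -/
abbrev Init (𝔡 m d L : ℕ) : Type :=
  (Fin m → Fin 𝔡 → ℝ) × (Fin L → Fin m → Fin m → ℝ) × (Fin d → Fin m → ℝ)

instance : IsProbabilityMeasure (initMeasure 𝔡 m d L) := by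
  unfold initMeasure; infer_instance

section measurability

variable {Ω : Type*} [MeasurableSpace Ω]

lemma meas_mulVec {p q : ℕ} {M : Ω → Fin p → Fin q → ℝ} {f : Ω → Fin q → ℝ} (hM : Measurable M)
    (hf : Measurable f) : Measurable fun ω => mulVec (M ω) (f ω) := by
  unfold mulVec
  refine measurable_pi_iff.2 fun i => Finset.measurable_sum _ fun j _ => ?_
  exact ((measurable_pi_iff.1 ((measurable_pi_iff.1 hM) i)) j).mul ((measurable_pi_iff.1 hf) j)

lemma meas_dot {p : ℕ} {f g : Ω → Fin p → ℝ} (hf : Measurable f) (hg : Measurable g) :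
    Measurable fun ω => dot (f ω) (g ω) := by
  unfold dot
  refine Finset.measurable_sum _ fun j _ => ?_
  exact ((measurable_pi_iff.1 hf) j).mul ((measurable_pi_iff.1 hg) j)

lemma meas_signOf {p : ℕ} : Measurable (signOf : (Fin p → ℝ) → Fin p → ℝ) := by
  unfold signOf
  refine measurable_pi_iff.2 fun k => ?_
  exact Measurable.ite (measurableSet_le measurable_const (measurable_pi_apply k))
    measurable_const measurable_const

lemma meas_Wat (ℓ : ℕ) : Measurable fun z : Init 𝔡 m d L => Wat z.2.1 ℓ := by
  unfold Wat
  split_ifs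
  · fun_prop
  · exact measurable_const

lemma meas_hseq (x : Fin 𝔡 → ℝ) (i : ℕ) :
    Measurable fun z : Init 𝔡 m d L => hseq z.1 z.2.1 x i := by
  induction i with
  | zero => exact measurable_relu.comp (meas_mulVec measurable_fst measurable_const)
  | succ i ih =>
    unfold hseq
    split_ifs
    · exact measurable_relu.comp (meas_mulVec (meas_Wat _) ih)
    · exact ih

lemma meas_gseq (x : Fin 𝔡 → ℝ) (i : ℕ) :
    Measurable fun z : Init 𝔡 m d L => gseq z.1 z.2.1 x i := by
  cases i with
  | zero => exact meas_mulVec measurable_fst measurable_const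
  | succ i => exact meas_mulVec (meas_Wat _) (meas_hseq x i)

lemma measSet_hseq (x : Fin 𝔡 → ℝ) (i : ℕ) :
    MeasurableSet {z : Init 𝔡 m d L | hseq z.1 z.2.1 x i = 0} :=
  measurableSet_eq_fun (meas_hseq x i) measurable_const

lemma meas_safeProd (x : Fin 𝔡 → ℝ) (v : Fin m → ℝ) (a b : ℕ) :
    Measurable fun z : Init 𝔡 m d L => safeProd z.1 z.2.1 x v a b := by
  induction b with
  | zero => exact measurable_const
  | succ b ih =>
    unfold safeProd
    by_cases hab : a ≤ b
    · simp only [if_pos hab]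
      refine Measurable.ite (measSet_hseq x b) measurable_const ?_
      exact (meas_signOf.comp (meas_gseq x _)).mul (meas_mulVec (meas_Wat _) ih)
    · simp only [if_neg hab]; exact measurable_const

end measurability

/-- Chernoff's bound on the sample space, integrating the output weights innermost. -/
lemma init_le {S : Set (Init 𝔡 m d L)} (hS : MeasurableSet S)
    (f : (Fin m → Fin 𝔡 → ℝ) → (Fin L → Fin m → Fin m → ℝ) → (Fin d → Fin m → ℝ) → ENNReal)
    (h1 : ∀ z ∈ S, 1 ≤ f z.1 z.2.1 z.2.2) {p : ENNReal}
    (h : ∀ A, ∫⁻ W, ∫⁻ B, f A W B ∂gaussMat d m (1 / d) ∂piW m L ≤ p) :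
    initMeasure 𝔡 m d L S ≤ p := by
  refine (measure_le_lintegral hS (f := fun z => f z.1 z.2.1 z.2.2) h1).trans ?_
  unfold initMeasure
  refine (lintegral_prod_le _).trans ?_
  refine (lintegral_mono (g := fun _ => p) fun A => (lintegral_prod_le _).trans (h A)).trans ?_
  simp

lemma init_B_le {S : Set (Init 𝔡 m d L)} (hS : MeasurableSet S)
    (G : (Fin m → Fin 𝔡 → ℝ) → (Fin L → Fin m → Fin m → ℝ) → ENNReal)
    (h : ∀ A W, gaussMat d m (1 / d) {B | (A, W, B) ∈ S} ≤ G A W) {p : ENNReal}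
    (hp : ∀ A, ∫⁻ W, G A W ∂piW m L ≤ p) : initMeasure 𝔡 m d L S ≤ p := by
  refine init_le hS (fun A W B => {B | (A, W, B) ∈ S}.indicator 1 B) ?_ fun A => ?_
  · intro z hz
    have : z.2.2 ∈ {B | (z.1, z.2.1, B) ∈ S} := hz
    rw [Set.indicator_of_mem this]; simp
  · exact (lintegral_mono fun W => (lintegral_indicator_one_le _).trans (h A W)).trans (hp A)

/-- An event about `(A, W)` is controlled through the conditional law of one layer. -/
lemma init_layer_le {E : (Fin m → Fin 𝔡 → ℝ) → (Fin L → Fin m → Fin m → ℝ) → Prop}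
    (hS : MeasurableSet {z : Init 𝔡 m d L | E z.1 z.2.1}) (i : Fin L)
    (G : (Fin m → Fin 𝔡 → ℝ) → (Fin L → Fin m → Fin m → ℝ) → ENNReal)
    (h : ∀ A W, gaussMat m m (2 / m) {Y | E A (Function.update W i Y)} ≤ G A W) {p : ENNReal}
    (hp : ∀ A, ∫⁻ W, G A W ∂piW m L ≤ p) :
    initMeasure 𝔡 m d L {z | E z.1 z.2.1} ≤ p := by
  refine init_le hS (fun A W _ => {W | E A W}.indicator 1 W) ?_ fun A => ?_
  · intro z hz
    have : z.2.1 ∈ {W | E z.1 W} := hz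
    rw [Set.indicator_of_mem this]; simp
  · simp only [lintegral_const, measure_univ, mul_one]
    refine (lintegral_resample_le _ i _ (G A) fun W => ?_).trans (hp A)
    exact (lintegral_indicator_one_le {Y | E A (Function.update W i Y)}).trans (h A W)

/-- Power moments of the random layer products. -/
lemma safeProd_moment (hm : 0 < m) (A : Fin m → Fin 𝔡 → ℝ) (x : Fin 𝔡 → ℝ) (v : Fin m → ℝ)
    (a : ℕ) {b : ℕ} (hb : b ≤ L) {X : ℝ} (hX0 : 0 < X) (hX : X ≤ m / 8) :
    ∫⁻ W, ENNReal.ofReal ((l2 (safeProd A W x v a b) ^ 2) ^ X) ∂piW m L ≤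
      ENNReal.ofReal (Real.exp (b * (8 * X ^ 2 / m))) * ENNReal.ofReal ((l2 v ^ 2) ^ X) := by
  induction b with
  | zero => simp [safeProd]
  | succ b ih =>
    by_cases hab : a ≤ b
    · refine (lintegral_resample_le _ ⟨b, by omega⟩ _ (fun W =>
        ENNReal.ofReal (Real.exp (8 * X ^ 2 / m)) *
          ENNReal.ofReal ((l2 (safeProd A W x v a b) ^ 2) ^ X)) fun W => ?_).trans ?_
      · have h1 : ∀ Y, safeProd A (Function.update W ⟨b, by omega⟩ Y) x v a (b + 1) =
            if hseq A W x b = 0 then 0 else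
              signOf (mulVec Y (hseq A W x b)) * mulVec Y (safeProd A W x v a b) := by
          intro Y
          rw [safeProd, if_pos hab, hseq_update _ _ _ _ _ le_rfl,
            safeProd_update _ _ _ _ _ _ _ le_rfl]
          have h2 := gseq_update_succ A W x ⟨b, by omega⟩ Y
          have h3 := Wat_update_self W ⟨b, by omega⟩ Y
          simp only at h2 h3
          rw [h2, h3]
        simp_rw [h1]
        split_ifs with h0
        · simp [Real.zero_rpow hX0.ne']
        · exact layer_rpow hm h0 _ hX0 hX
      · rw [lintegral_const_mul' _ _ ENNReal.ofReal_ne_top]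
        refine (mul_le_mul_right (ih (by omega)) _).trans (le_of_eq ?_)
        rw [← mul_assoc, ← ENNReal.ofReal_mul (Real.exp_pos _).le, ← Real.exp_add]
        congr 3; push_cast; ring
    · have h1 : ∀ W : Fin L → Fin m → Fin m → ℝ, safeProd A W x v a (b + 1) = v := fun W => by
        rw [safeProd, if_neg hab]
      simp_rw [h1]
      simp only [lintegral_const, measure_univ, mul_one]
      refine le_mul_of_one_le_left (by positivity) ?_
      rw [ENNReal.one_le_ofReal, Real.one_le_exp_iff]
      positivity

/-- The numerical step shared by the tail bounds: moments of order `r² m / 4` cost at most half of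
the Gaussian exponent. -/
lemma tail_moment (hm : 0 < m) (hL : 0 < L) (A : Fin m → Fin 𝔡 → ℝ) (x : Fin 𝔡 → ℝ)
    {v : Fin m → ℝ} (hv : v ≠ 0) (a : ℕ) {b : ℕ} (hb : b ≤ L) {r : ℝ} (hr : 0 < r)
    (hr2 : r ^ 2 ≤ 1 / (4 * L)) :
    ∫⁻ W, ENNReal.ofReal (2 * Real.exp (-(r ^ 2 * m / 4)) * (l2 v ^ 2) ^ (-(r ^ 2 * m / 4))) *
      ENNReal.ofReal ((l2 (safeProd A W x v a b) ^ 2) ^ (r ^ 2 * m / 4)) ∂piW m L ≤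
      ENNReal.ofReal (2 * Real.exp (-(r ^ 2 * m / 8))) := by
  have hm' : (0 : ℝ) < m := by exact_mod_cast hm
  have hL' : (1 : ℝ) ≤ L := by exact_mod_cast hL
  have hv' := l2_pos hv
  set X := r ^ 2 * m / 4 with hX
  have hX0 : 0 < X := by positivity
  have h4 : r ^ 2 * (4 * L) ≤ 1 := by rwa [le_div_iff₀ (by positivity)] at hr2
  have hr1 : r ^ 2 ≤ 1 / 4 := by nlinarith [sq_nonneg r]
  rw [lintegral_const_mul' _ _ ENNReal.ofReal_ne_top]
  refine (mul_le_mul_right (safeProd_moment hm A x v a hb hX0 (by rw [hX]; nlinarith)) _).trans ?_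
  rw [← ENNReal.ofReal_mul (Real.exp_pos _).le, ← ENNReal.ofReal_mul (by positivity)]
  refine ENNReal.ofReal_le_ofReal ?_
  have h1 : (l2 v ^ 2) ^ (-X) * (l2 v ^ 2) ^ X = 1 := by
    rw [← Real.rpow_add (by positivity)]; simp
  calc 2 * Real.exp (-X) * (l2 v ^ 2) ^ (-X) * (Real.exp (b * (8 * X ^ 2 / m)) * (l2 v ^ 2) ^ X)
      = 2 * (Real.exp (-X) * Real.exp (b * (8 * X ^ 2 / m))) *
          ((l2 v ^ 2) ^ (-X) * (l2 v ^ 2) ^ X) := by ring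
    _ = 2 * Real.exp (-X + b * (8 * X ^ 2 / m)) := by rw [h1, mul_one, Real.exp_add]
    _ ≤ _ := by
        refine mul_le_mul_of_nonneg_left (Real.exp_le_exp.2 ?_) (by norm_num)
        have hbL : (b : ℝ) ≤ L := by exact_mod_cast hb
        have h5 : (b : ℝ) * (8 * X ^ 2 / m) ≤ X / 2 := by
          have : (b : ℝ) * (8 * X ^ 2 / m) = b * r ^ 2 * 2 * X := by rw [hX]; field_simp; ring
          rw [this]
          have : (b : ℝ) * r ^ 2 ≤ 1 / 4 := by nlinarith [sq_nonneg r]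
          nlinarith
        have h6 : r ^ 2 * m / 8 = X / 2 := by rw [hX]; ring
        rw [h6]; linarith

lemma meas_bilin (x : Fin 𝔡 → ℝ) (u v : Fin m → ℝ) (a b : ℕ) (ρ : ℝ) :
    MeasurableSet {z : Init 𝔡 m d L |
      ρ < |dot u (mulVec (Wat z.2.1 (b + 1)) (safeProd z.1 z.2.1 x v a b))|} :=
  measurableSet_lt measurable_const
    (meas_dot measurable_const (meas_mulVec (meas_Wat _) (meas_safeProd x v a b))).abs

/-- Sub-Gaussian tail of a bilinear form in a layer product. The Gaussian tail of the last layer is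
conditional on the earlier ones, whose norm growth is controlled by its power moments. -/
lemma tail_W (hm : 0 < m) (hL : 0 < L) (x : Fin 𝔡 → ℝ) (u v : Fin m → ℝ) (a : ℕ) {b : ℕ}
    (hb : b < L) {r : ℝ} (hr : 0 < r) (hr2 : r ^ 2 ≤ 1 / (4 * L)) :
    initMeasure 𝔡 m d L {z | r * (l2 u * l2 v) <
      |dot u (mulVec (Wat z.2.1 (b + 1)) (safeProd z.1 z.2.1 x v a b))|} ≤
      ENNReal.ofReal (2 * Real.exp (-(r ^ 2 * m / 8))) := by
  have hm' : (0 : ℝ) < m := by exact_mod_cast hm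
  rcases eq_or_ne v 0 with rfl | hv
  · have : {z : Init 𝔡 m d L | r * (l2 u * l2 (0 : Fin m → ℝ)) <
      |dot u (mulVec (Wat z.2.1 (b + 1)) (safeProd z.1 z.2.1 x 0 a b))|} = ∅ := by
      ext z; simp [safeProd_zero, mulVec_zero]
    rw [this]; simp
  have hv' := l2_pos hv
  refine init_layer_le (E := fun A W => r * (l2 u * l2 v) <
      |dot u (mulVec (Wat W (b + 1)) (safeProd A W x v a b))|) (meas_bilin x u v a b _) ⟨b, hb⟩
    (fun A W => ENNReal.ofReal (2 * Real.exp (-(r ^ 2 * m / 4)) *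
      (l2 v ^ 2) ^ (-(r ^ 2 * m / 4))) *
      ENNReal.ofReal ((l2 (safeProd A W x v a b) ^ 2) ^ (r ^ 2 * m / 4))) ?_
    fun A => tail_moment hm hL A x hv a hb.le hr hr2
  intro A W
  have h1 : ∀ Y, mulVec (Wat (Function.update W ⟨b, hb⟩ Y) (b + 1))
      (safeProd A (Function.update W ⟨b, hb⟩ Y) x v a b) = mulVec Y (safeProd A W x v a b) := by
    intro Y
    have h3 := Wat_update_self W ⟨b, hb⟩ Y
    simp only at h3
    rw [h3, safeProd_update _ _ _ _ _ _ _ le_rfl]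
  simp_rw [h1]
  refine bilin_tail (two_div_ne_zero hm) u _ (by have := l2_nonneg u; positivity) (by positivity)
    (by positivity) (le_of_eq ?_)
  rw [coe_two_div]; field_simp; ring

lemma mulVec_eq_dot_basis (B : Fin d → Fin m → ℝ) (j : Fin d) (w : Fin m → ℝ) :
    dot (B j) w = dot (basisVec d j) (mulVec B w) := by
  simp [dot, basisVec, mulVec]

lemma l2_basis (j : Fin d) : l2 (basisVec d j) = 1 := by
  simp [l2, basisVec]

lemma meas_outB (x : Fin 𝔡 → ℝ) (j : Fin d) (v : Fin m → ℝ) (a : ℕ) (ρ : ℝ) :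
    MeasurableSet {z : Init 𝔡 m d L | ρ < |dot (z.2.2 j) (safeProd z.1 z.2.1 x v a L)|} :=
  measurableSet_lt measurable_const (meas_dot (by fun_prop) (meas_safeProd x v a L)).abs

/-- The analogue of `tail_W` with an output row in place of the last layer. -/
lemma tail_B (hm : 0 < m) (hL : 0 < L) (hd : 0 < d) (x : Fin 𝔡 → ℝ) (j : Fin d) (v : Fin m → ℝ)
    (a : ℕ) {r : ℝ} (hr : 0 < r) (hr2 : r ^ 2 ≤ 1 / (4 * L)) :
    initMeasure 𝔡 m d L {z | r * Real.sqrt (m / d) * l2 v <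
      |dot (z.2.2 j) (safeProd z.1 z.2.1 x v a L)|} ≤
      ENNReal.ofReal (2 * Real.exp (-(r ^ 2 * m / 8))) := by
  have hm' : (0 : ℝ) < m := by exact_mod_cast hm
  have hd' : (0 : ℝ) < d := by exact_mod_cast hd
  rcases eq_or_ne v 0 with rfl | hv
  · have : {z : Init 𝔡 m d L | r * Real.sqrt (m / d) * l2 (0 : Fin m → ℝ) <
      |dot (z.2.2 j) (safeProd z.1 z.2.1 x 0 a L)|} = ∅ := by
      ext z; simp [safeProd_zero]
    rw [this]; simp
  have hv' := l2_pos hv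
  refine init_B_le (meas_outB x j v a _) (fun A W => ENNReal.ofReal (2 *
      Real.exp (-(r ^ 2 * m / 4)) * (l2 v ^ 2) ^ (-(r ^ 2 * m / 4))) *
      ENNReal.ofReal ((l2 (safeProd A W x v a L) ^ 2) ^ (r ^ 2 * m / 4))) ?_
    fun A => tail_moment hm hL A x hv a le_rfl hr hr2
  intro A W
  have h0 : {B | (A, W, B) ∈ {z : Init 𝔡 m d L | r * Real.sqrt (m / d) * l2 v <
      |dot (z.2.2 j) (safeProd z.1 z.2.1 x v a L)|}} = {B | r * Real.sqrt (m / d) * l2 v <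
      |dot (basisVec d j) (mulVec B (safeProd A W x v a L))|} := by
    ext B
    change _ < |dot (B j) _| ↔ _
    rw [mulVec_eq_dot_basis]
    rfl
  rw [h0]
  refine bilin_tail (one_div_ne_zero' hd) _ _ (by positivity) (by positivity)
    (by positivity) ?_
  rw [coe_one_div, l2_basis, mul_pow, mul_pow, Real.sq_sqrt (by positivity)]
  have h1 : r ^ 2 * m / 4 * l2 v ^ 2 * (2 * (1 / d) * 1 ^ 2) =
    1 / 2 * (r ^ 2 * (m / d) * l2 v ^ 2) := by field_simp; ring
  rw [h1]
  have : 0 ≤ r ^ 2 * (m / d) * l2 v ^ 2 := by positivity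
  linarith

lemma measure_iUnion_le_card {Ω ι : Type*} [MeasurableSpace Ω] [Fintype ι] (μ : Measure Ω)
    (E : ι → Set Ω) {p : ℝ} (h : ∀ i, μ (E i) ≤ ENNReal.ofReal p) :
    μ (⋃ i, E i) ≤ ENNReal.ofReal (Fintype.card ι * p) := by
  refine (measure_iUnion_fintype_le _ _).trans ((Finset.sum_le_sum fun i _ => h i).trans ?_)
  rw [Finset.sum_const, Finset.card_univ, ENNReal.ofReal_mul (by positivity),
    ENNReal.ofReal_natCast, nsmul_eq_mul]

/-! ### Activations of constant size -/

lemma size_zero (hm : 0 < m) {x : Fin 𝔡 → ℝ} (hx : l2 x = 1) {δ : ℝ} (hδ0 : 0 < δ) (hδ : δ ≤ 1) :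
    initMeasure 𝔡 m d L {z | δ < |l2 (hseq z.1 z.2.1 x 0) ^ 2 - 1|} ≤
      ENNReal.ofReal (2 * Real.exp (-(m * δ ^ 2 / 32))) := by
  have hx0 : x ≠ 0 := by rintro rfl; simp at hx
  have h1 : {z : Init 𝔡 m d L | δ < |l2 (hseq z.1 z.2.1 x 0) ^ 2 - 1|} =
      {Y | δ * l2 x ^ 2 < |l2 (relu (mulVec Y x)) ^ 2 - l2 x ^ 2|} ×ˢ Set.univ := by
    ext z; simp [hx, hseq]
  have h2 := layer_tail hm hx0 hδ0 hδ
  rw [h1]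
  unfold initMeasure
  rw [Measure.prod_prod, measure_univ, mul_one]
  exact h2

lemma size_succ (hm : 0 < m) (x : Fin 𝔡 → ℝ) {i : ℕ} (hi : i < L) {δ : ℝ} (hδ0 : 0 < δ)
    (hδ : δ ≤ 1) :
    initMeasure 𝔡 m d L {z | hseq z.1 z.2.1 x i ≠ 0 ∧ δ * l2 (hseq z.1 z.2.1 x i) ^ 2 <
      |l2 (hseq z.1 z.2.1 x (i + 1)) ^ 2 - l2 (hseq z.1 z.2.1 x i) ^ 2|} ≤
      ENNReal.ofReal (2 * Real.exp (-(m * δ ^ 2 / 32))) := by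
  refine init_layer_le (E := fun A W => hseq A W x i ≠ 0 ∧ δ * l2 (hseq A W x i) ^ 2 <
      |l2 (hseq A W x (i + 1)) ^ 2 - l2 (hseq A W x i) ^ 2|) ?_ ⟨i, hi⟩
    (fun _ _ => ENNReal.ofReal (2 * Real.exp (-(m * δ ^ 2 / 32)))) ?_ (fun A => by simp)
  · have h1 : ∀ i, Measurable fun z : Init 𝔡 m d L => l2 (hseq z.1 z.2.1 x i) ^ 2 :=
      fun i => (measurable_l2.comp (meas_hseq x i)).pow_const 2
    exact (measSet_hseq x i).compl.inter
      (measurableSet_lt ((h1 i).const_mul δ) (((h1 (i + 1)).sub (h1 i)).abs))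
  · intro A W
    by_cases h0 : hseq A W x i = 0
    · have : {Y | hseq A (Function.update W ⟨i, hi⟩ Y) x i ≠ 0 ∧
          δ * l2 (hseq A (Function.update W ⟨i, hi⟩ Y) x i) ^ 2 <
          |l2 (hseq A (Function.update W ⟨i, hi⟩ Y) x (i + 1)) ^ 2 -
            l2 (hseq A (Function.update W ⟨i, hi⟩ Y) x i) ^ 2|} = ∅ := by
        ext Y; simp [hseq_update A W x ⟨i, hi⟩ Y (j := i) le_rfl, h0]
      rw [this]; simp
    · refine (measure_mono ?_).trans (layer_tail (δ := δ) hm h0 hδ0 hδ)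
      rintro Y ⟨-, hY⟩
      have h3 := Wat_update_self W ⟨i, hi⟩ Y
      simp only at h3
      rw [hseq, if_pos (show i + 1 ≤ L from hi), hseq_update A W x ⟨i, hi⟩ Y (j := i) le_rfl,
        h3] at hY
      exact hY

/-- All activations have norm in `[1/2, 2]` with overwhelming probability: each layer multiplies the
squared norm by a factor `1 ± 1/(4L)`. -/
lemma size_event (hm : 0 < m) (hL : 2 ≤ L) {x : Fin 𝔡 → ℝ} (hx : l2 x = 1) :
    initMeasure 𝔡 m d L {z | ¬ ∀ i ≤ L, 1 / 2 ≤ l2 (hseq z.1 z.2.1 x i) ∧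
      l2 (hseq z.1 z.2.1 x i) ≤ 2} ≤
      ENNReal.ofReal ((L + 1) * (2 * Real.exp (-(m / (512 * L ^ 2))))) := by
  have hL' : (2 : ℝ) ≤ L := by exact_mod_cast hL
  set δ : ℝ := 1 / (4 * L) with hδd
  have hδ0 : 0 < δ := by positivity
  have hδL : δ * L = 1 / 4 := by rw [hδd]; field_simp
  have hδ : δ ≤ 1 := by nlinarith
  have hexp : (m : ℝ) * δ ^ 2 / 32 = m / (512 * L ^ 2) := by rw [hδd]; field_simp; norm_num
  set E : Fin L → Set (Init 𝔡 m d L) := fun i =>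
    {z | hseq z.1 z.2.1 x i ≠ 0 ∧ δ * l2 (hseq z.1 z.2.1 x i) ^ 2 <
      |l2 (hseq z.1 z.2.1 x (i + 1)) ^ 2 - l2 (hseq z.1 z.2.1 x i) ^ 2|} with hE
  have hsub : {z : Init 𝔡 m d L | ¬ ∀ i ≤ L, 1 / 2 ≤ l2 (hseq z.1 z.2.1 x i) ∧
      l2 (hseq z.1 z.2.1 x i) ≤ 2} ⊆
      {z | δ < |l2 (hseq z.1 z.2.1 x 0) ^ 2 - 1|} ∪ ⋃ i, E i := by
    intro z hz
    by_contra hcon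
    rw [Set.mem_union, not_or, Set.mem_iUnion, not_exists] at hcon
    obtain ⟨h0, h1⟩ := hcon
    refine hz ?_
    simp only [Set.mem_ofPred_eq, not_lt] at h0
    have key : ∀ i ≤ L, (1 - δ) ^ (i + 1) ≤ l2 (hseq z.1 z.2.1 x i) ^ 2 ∧
        l2 (hseq z.1 z.2.1 x i) ^ 2 ≤ (1 + δ) ^ (i + 1) := by
      intro i
      induction i with
      | zero =>
        intro _
        rw [abs_le] at h0
        constructor <;> simp only [zero_add, pow_one] <;> linarith
      | succ i ih =>
        intro hi
        obtain ⟨ih1, ih2⟩ := ih (by omega)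
        have hpos : 0 < (1 - δ) ^ (i + 1) := pow_pos (by nlinarith) _
        have hne : hseq z.1 z.2.1 x i ≠ 0 := by
          intro h; rw [h, l2_zero] at ih1; norm_num at ih1; linarith
        have h2 := h1 ⟨i, hi⟩
        simp only [hE, Set.mem_ofPred_eq, not_and, not_lt] at h2
        have h3 := abs_le.1 (h2 hne)
        have hδ1 : 0 ≤ 1 - δ := by linarith
        constructor
        · calc (1 - δ) ^ (i + 1 + 1) = (1 - δ) * (1 - δ) ^ (i + 1) := by ring
            _ ≤ (1 - δ) * l2 (hseq z.1 z.2.1 x i) ^ 2 := by gcongr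
            _ ≤ _ := by linarith [h3.1]
        · calc _ ≤ (1 + δ) * l2 (hseq z.1 z.2.1 x i) ^ 2 := by linarith [h3.2]
            _ ≤ (1 + δ) * (1 + δ) ^ (i + 1) := by gcongr
            _ = _ := by ring
    intro i hi
    obtain ⟨k1, k2⟩ := key i hi
    have hi' : (i : ℝ) ≤ L := by exact_mod_cast hi
    have hn := l2_nonneg (hseq z.1 z.2.1 x i)
    have hiδ : ((i + 1 : ℕ) : ℝ) * δ ≤ 3 / 8 := by push_cast; nlinarith
    constructor
    · have h5 := one_add_mul_le_pow (a := -δ) (by linarith) (i + 1)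
      have : (1 / 2 : ℝ) ^ 2 ≤ l2 (hseq z.1 z.2.1 x i) ^ 2 := by
        refine le_trans ?_ k1
        rw [sub_eq_add_neg]
        refine le_trans ?_ h5
        linarith
      exact (sq_le_sq₀ (by norm_num) hn).1 this
    · have h5 : (1 + δ) ^ (i + 1) ≤ Real.exp 1 := by
        calc (1 + δ) ^ (i + 1) ≤ Real.exp δ ^ (i + 1) :=
              pow_le_pow_left₀ (by linarith) (by linarith [Real.add_one_le_exp δ]) _
          _ = Real.exp ((i + 1 : ℕ) * δ) := by rw [Real.exp_nat_mul]
          _ ≤ _ := Real.exp_le_exp.2 (by linarith)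
      have : l2 (hseq z.1 z.2.1 x i) ^ 2 ≤ 2 ^ 2 := by
        linarith [Real.exp_one_lt_d9]
      exact (sq_le_sq₀ hn (by norm_num)).1 this
  refine (measure_mono hsub).trans ((measure_union_le _ _).trans ?_)
  have hp : 0 ≤ 2 * Real.exp (-(m * δ ^ 2 / 32)) := by positivity
  have h2 : initMeasure 𝔡 m d L (⋃ i, E i) ≤
      ENNReal.ofReal (L * (2 * Real.exp (-(m * δ ^ 2 / 32)))) := by
    have := measure_iUnion_le_card (initMeasure 𝔡 m d L) E fun i => size_succ hm x i.2 hδ0 hδ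
    rwa [Fintype.card_fin] at this
  refine (add_le_add (size_zero hm hx hδ0 hδ) h2).trans ?_
  rw [← ENNReal.ofReal_add hp (by positivity), hexp]
  exact ENNReal.ofReal_le_ofReal (by linarith)

/-! ### Few pre-activations near the kink -/

/-- The number of coordinates of `g_{i+1}` within `2 τ ‖h_i‖` of the kink (`0` if `h_i = 0`). -/
def kinkCount (τ : ℝ) (A : Fin m → Fin 𝔡 → ℝ) (W : Fin L → Fin m → Fin m → ℝ) (x : Fin 𝔡 → ℝ)
    (i : ℕ) : ℕ :=
  if hseq A W x i = 0 then 0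
  else (nearSet (2 * τ * l2 (hseq A W x i)) (gseq A W x (i + 1))).card

lemma meas_kinkCount (τ : ℝ) (x : Fin 𝔡 → ℝ) (i : ℕ) :
    Measurable fun z : Init 𝔡 m d L => (kinkCount τ z.1 z.2.1 x i : ℝ) := by
  have h1 : ∀ z : Init 𝔡 m d L, (kinkCount τ z.1 z.2.1 x i : ℝ) =
      if hseq z.1 z.2.1 x i = 0 then 0 else ∑ k,
        if |gseq z.1 z.2.1 x (i + 1) k| ≤ 2 * τ * l2 (hseq z.1 z.2.1 x i) then (1 : ℝ) else 0 := by
    intro z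
    unfold kinkCount nearSet
    split_ifs
    · simp
    · simp
  simp_rw [h1]
  refine Measurable.ite (measSet_hseq x i) measurable_const
    (Finset.measurable_sum _ fun k _ => Measurable.ite ?_ measurable_const measurable_const)
  exact measurableSet_le ((measurable_pi_iff.1 (meas_gseq x (i + 1))) k).abs
    ((measurable_l2.comp (meas_hseq x i)).const_mul _)

/-- The layerwise exponential moments multiply, since layer `i + 1` is independent of `h_i`. -/
lemma kink_moment (hm : 0 < m) {τ : ℝ} (hτ : 0 ≤ τ) (A : Fin m → Fin 𝔡 → ℝ) (x : Fin 𝔡 → ℝ)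
    {b : ℕ} (hb : b ≤ L) :
    ∫⁻ W, ENNReal.ofReal (Real.exp (4 * ∑ i ∈ Finset.range b, (kinkCount τ A W x i : ℝ)))
      ∂piW m L ≤ ENNReal.ofReal (Real.exp (b * (110 * (m * (τ * Real.sqrt m))))) := by
  induction b with
  | zero => simp
  | succ b ih =>
    refine (lintegral_resample_le _ ⟨b, by omega⟩ _ (fun W =>
      ENNReal.ofReal (Real.exp (4 * ∑ i ∈ Finset.range b, (kinkCount τ A W x i : ℝ))) *
        ENNReal.ofReal (Real.exp (110 * (m * (τ * Real.sqrt m))))) fun W => ?_).trans ?_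
    · have h1 : ∀ Y, ENNReal.ofReal (Real.exp (4 * ∑ i ∈ Finset.range (b + 1),
          (kinkCount τ A (Function.update W ⟨b, by omega⟩ Y) x i : ℝ))) =
          ENNReal.ofReal (Real.exp (4 * ∑ i ∈ Finset.range b, (kinkCount τ A W x i : ℝ))) *
          ENNReal.ofReal (Real.exp (4 * (kinkCount τ A
            (Function.update W ⟨b, by omega⟩ Y) x b : ℝ))) := by
        intro Y
        have hs : ∑ i ∈ Finset.range b,
            (kinkCount τ A (Function.update W ⟨b, by omega⟩ Y) x i : ℝ) =
            ∑ i ∈ Finset.range b, (kinkCount τ A W x i : ℝ) := by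
          refine Finset.sum_congr rfl fun i hi => ?_
          have hi := Finset.mem_range.1 hi
          unfold kinkCount
          rw [hseq_update _ _ _ _ _ (by simp only; omega),
            gseq_update _ _ _ _ _ (by simp only; omega)]
        rw [← ENNReal.ofReal_mul (Real.exp_pos _).le, ← Real.exp_add, ← mul_add,
          Finset.sum_range_succ, hs]
      simp_rw [h1]
      rw [lintegral_const_mul' _ _ ENNReal.ofReal_ne_top]
      refine mul_le_mul_right ?_ _
      by_cases h0 : hseq A W x b = 0
      · have h2 : ∀ Y, kinkCount τ A (Function.update W ⟨b, by omega⟩ Y) x b = 0 := by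
          intro Y
          unfold kinkCount
          rw [if_pos (by rw [hseq_update _ _ _ _ _ (by simp only; omega), h0])]
        simp only [h2, Nat.cast_zero, mul_zero, Real.exp_zero, lintegral_const, measure_univ,
          mul_one]
        exact ENNReal.ofReal_le_ofReal (Real.one_le_exp (by positivity))
      · have h2 : ∀ Y, kinkCount τ A (Function.update W ⟨b, by omega⟩ Y) x b =
            (nearSet (2 * τ * l2 (hseq A W x b)) (mulVec Y (hseq A W x b))).card := by
          intro Y
          unfold kinkCount
          have h3 := gseq_update_succ A W x ⟨b, by omega⟩ Y
          simp only at h3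
          rw [hseq_update _ _ _ _ _ (by simp only; omega), if_neg h0, h3]
        simp_rw [h2]
        exact layer_count hm h0 hτ
    · rw [lintegral_mul_const' _ _ ENNReal.ofReal_ne_top]
      refine (mul_le_mul_left (ih (by omega)) _).trans (le_of_eq ?_)
      rw [← ENNReal.ofReal_mul (Real.exp_pos _).le, ← Real.exp_add]
      congr 2; push_cast; ring

/-- Chernoff's bound for the total number of pre-activations near the kink. -/
lemma kink_event (hm : 0 < m) (hL : 2 ≤ L) {τ t : ℝ} (hτ : 0 ≤ τ) (x : Fin 𝔡 → ℝ)
    (ht : m * (τ * Real.sqrt m) = t) :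
    initMeasure 𝔡 m d L {z | 1 + 100 * L * t ≤
      2 * ∑ i ∈ Finset.range L, (kinkCount τ z.1 z.2.1 x i : ℝ)} ≤
      ENNReal.ofReal (Real.exp (-(2 + t))) := by
  have hL' : (2 : ℝ) ≤ L := by exact_mod_cast hL
  have ht0 : 0 ≤ t := by rw [← ht]; positivity
  refine init_le (measurableSet_le measurable_const
      ((Finset.measurable_sum _ fun i _ => meas_kinkCount τ x i).const_mul 2))
    (fun A W _ => ENNReal.ofReal (Real.exp (-(2 * (1 + 100 * L * t)))) *
      ENNReal.ofReal (Real.exp (4 * ∑ i ∈ Finset.range L, (kinkCount τ A W x i : ℝ)))) ?_ ?_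
  · intro z hz
    simp only [Set.mem_ofPred_eq] at hz
    rw [← ENNReal.ofReal_mul (Real.exp_pos _).le, ← Real.exp_add, ENNReal.one_le_ofReal]
    exact Real.one_le_exp (by linarith)
  · intro A
    simp only [lintegral_const, measure_univ, mul_one]
    rw [lintegral_const_mul' _ _ ENNReal.ofReal_ne_top]
    refine (mul_le_mul_right (kink_moment hm hτ A x le_rfl) _).trans ?_
    rw [← ENNReal.ofReal_mul (Real.exp_pos _).le, ← Real.exp_add, ht]
    refine ENNReal.ofReal_le_ofReal (Real.exp_le_exp.2 ?_)
    nlinarith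

/-- Off the previous event and with activations of norm at least `1/2`, the near sets are small. -/
lemma near_of_kink {τ t : ℝ} (hτ : 0 ≤ τ) (ht : 0 ≤ t) {A : Fin m → Fin 𝔡 → ℝ}
    {W : Fin L → Fin m → Fin m → ℝ} {x : Fin 𝔡 → ℝ}
    (hlo : ∀ i ≤ L, 1 / 2 ≤ l2 (hseq A W x i))
    (h : ¬ 1 + 100 * L * t ≤ 2 * ∑ i ∈ Finset.range L, (kinkCount τ A W x i : ℝ)) :
    ∑ i ∈ Finset.Icc 1 L, ((nearSet τ (gseq A W x i)).card : ℝ) ≤ 100 * L * t := by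
  have h1 : ∑ i ∈ Finset.Icc 1 L, ((nearSet τ (gseq A W x i)).card : ℝ) =
      ∑ i ∈ Finset.range L, ((nearSet τ (gseq A W x (i + 1))).card : ℝ) := by
    rw [Finset.range_eq_Ico, Finset.sum_Ico_add' (fun i => ((nearSet τ (gseq A W x i)).card : ℝ))]
    rfl
  have h2 : ∑ i ∈ Finset.range L, (nearSet τ (gseq A W x (i + 1))).card ≤
      ∑ i ∈ Finset.range L, kinkCount τ A W x i := by
    refine Finset.sum_le_sum fun i hi => ?_
    have hl := hlo i (Finset.mem_range.1 hi).le
    unfold kinkCount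
    rw [if_neg (by intro h; rw [h, l2_zero] at hl; norm_num at hl)]
    refine Finset.card_le_card fun k hk => ?_
    simp only [nearSet, Finset.mem_filter, Finset.mem_univ, true_and] at hk ⊢
    nlinarith
  rw [h1]
  by_contra hc
  push Not at hc
  -- the left side is an integer exceeding `100 L t ≥ 0`, hence at least `1`
  have h3 : 0 < ∑ i ∈ Finset.range L, (nearSet τ (gseq A W x (i + 1))).card := by
    have : (0 : ℝ) < ∑ i ∈ Finset.range L, ((nearSet τ (gseq A W x (i + 1))).card : ℝ) :=
      lt_of_le_of_lt (by positivity) hc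
    exact_mod_cast this
  have h4 : (1 : ℝ) ≤ ∑ i ∈ Finset.range L, ((nearSet τ (gseq A W x (i + 1))).card : ℝ) := by
    exact_mod_cast h3
  have h5 : ∑ i ∈ Finset.range L, ((nearSet τ (gseq A W x (i + 1))).card : ℝ) ≤
      ∑ i ∈ Finset.range L, (kinkCount τ A W x i : ℝ) := by exact_mod_cast h2
  linarith

/-! ### The last sign pattern does not kill an output row -/

/-- About half of the entries of the `j`-th output row survive the last sign pattern, so the
surviving part keeps a constant fraction of the norm `√(m/d)`. -/
lemma last_event (hm : 0 < m) (hL : 2 ≤ L) (hd : 0 < d) (x : Fin 𝔡 → ℝ) (j : Fin d) :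
    initMeasure 𝔡 m d L {z | hseq z.1 z.2.1 x (L - 1) ≠ 0 ∧
      l2 (signOf (gseq z.1 z.2.1 x L) * z.2.2 j) < Real.sqrt (m / d) / 5} ≤
      ENNReal.ofReal (Real.exp (-(m / 5))) := by
  have hd' : (0 : ℝ) < d := by exact_mod_cast hd
  have hjm : Measurable fun z : Init 𝔡 m d L => l2 (signOf (gseq z.1 z.2.1 x L) * z.2.2 j) := by
    refine measurable_l2.comp ((meas_signOf.comp (meas_gseq x L)).mul ?_)
    fun_prop
  refine init_le (S := {z | hseq z.1 z.2.1 x (L - 1) ≠ 0 ∧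
      l2 (signOf (gseq z.1 z.2.1 x L) * z.2.2 j) < Real.sqrt (m / d) / 5})
    ((measSet_hseq x (L - 1)).compl.inter (measurableSet_lt hjm measurable_const))
    (fun A W B => if hseq A W x (L - 1) = 0 then 0 else ENNReal.ofReal (Real.exp (4 * m / 25)) *
      ENNReal.ofReal (Real.exp (-(4 * d) * l2 (signOf (gseq A W x L) * B j) ^ 2))) ?_ ?_
  · rintro z ⟨hz0, hz⟩
    rw [if_neg hz0, ← ENNReal.ofReal_mul (Real.exp_pos _).le, ← Real.exp_add,
      ENNReal.one_le_ofReal]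
    refine Real.one_le_exp ?_
    have h1 : l2 (signOf (gseq z.1 z.2.1 x L) * z.2.2 j) ^ 2 ≤ (Real.sqrt (m / d) / 5) ^ 2 :=
      pow_le_pow_left₀ (l2_nonneg _) hz.le 2
    rw [div_pow, Real.sq_sqrt (by positivity)] at h1
    have h2 : (d : ℝ) * l2 (signOf (gseq z.1 z.2.1 x L) * z.2.2 j) ^ 2 ≤ d * (m / d / 5 ^ 2) := by
      gcongr
    have h3 : (d : ℝ) * (m / d / 5 ^ 2) = m / 25 := by field_simp; norm_num
    linarith
  · intro A
    refine (lintegral_resample_le _ ⟨L - 1, by omega⟩ _ (fun _ => ENNReal.ofReal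
      (Real.exp (4 * m / 25)) * ENNReal.ofReal ((2 / 3) ^ m)) fun W => ?_).trans ?_
    · have hu : ∀ Y, hseq A (Function.update W ⟨L - 1, by omega⟩ Y) x (L - 1) =
          hseq A W x (L - 1) := fun Y => hseq_update _ _ _ _ _ le_rfl
      have hg : ∀ Y, gseq A (Function.update W ⟨L - 1, by omega⟩ Y) x L =
          mulVec Y (hseq A W x (L - 1)) := by
        intro Y
        have := gseq_update_succ A W x ⟨L - 1, by omega⟩ Y
        simp only [Nat.sub_add_cancel (show 1 ≤ L by omega)] at this
        exact this
      simp_rw [hu, hg]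
      by_cases h0 : hseq A W x (L - 1) = 0
      · simp [h0]
      · simp_rw [if_neg h0]
        simp_rw [lintegral_const_mul' _ _ ENNReal.ofReal_ne_top, row_active hd j]
        rw [lintegral_active hm h0]
    · simp only [lintegral_const, measure_univ, mul_one]
      rw [← ENNReal.ofReal_mul (Real.exp_pos _).le]
      refine ENNReal.ofReal_le_ofReal ?_
      have h1 : (2 / 3 : ℝ) ≤ Real.exp (-(36 / 100)) := by
        have := Real.add_one_le_exp (-(9 / 100 : ℝ))
        calc (2 / 3 : ℝ) ≤ (-(9 / 100) + 1) ^ 4 := by norm_num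
          _ ≤ Real.exp (-(9 / 100)) ^ 4 := pow_le_pow_left₀ (by norm_num) this 4
          _ = _ := by rw [← Real.exp_nat_mul]; norm_num
      calc Real.exp (4 * m / 25) * (2 / 3) ^ m
          ≤ Real.exp (4 * m / 25) * Real.exp (-(36 / 100)) ^ m := by gcongr
        _ = Real.exp (-(m / 5)) := by
            rw [← Real.exp_nat_mul, ← Real.exp_add]; congr 1; ring

/-! ### Integer nets -/

/-- Integer vectors supported on `T` with `ℓ₁` norm at most `N`.  Up to scaling they form a
`1/2`-net of the vectors supported on `T` when `N = 4 |T|`. -/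
def netSet {p : ℕ} (T : Finset (Fin p)) (N : ℕ) : Finset (Fin p → ℤ) :=
  (Fintype.piFinset fun k => if k ∈ T then Finset.Icc (-(N : ℤ)) N else {0}).filter
    fun z => ∑ k, (z k).natAbs ≤ N

/-- The real vector with given integer coordinates. -/
def castVec {p : ℕ} (z : Fin p → ℤ) : Fin p → ℝ := fun k => z k

lemma mem_netSet {p : ℕ} {T : Finset (Fin p)} {N : ℕ} {z : Fin p → ℤ}
    (h0 : ∀ k, k ∉ T → z k = 0) (h1 : ∑ k, (z k).natAbs ≤ N) : z ∈ netSet T N := by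
  unfold netSet
  rw [Finset.mem_filter, Fintype.mem_piFinset]
  refine ⟨fun k => ?_, h1⟩
  split_ifs with hk
  · have := (Finset.single_le_sum (f := fun k => (z k).natAbs) (fun _ _ => Nat.zero_le _)
      (Finset.mem_univ k)).trans h1
    rw [Finset.mem_Icc]; omega
  · rw [Finset.mem_singleton]; exact h0 k hk

lemma netSet_mono {p : ℕ} {T T' : Finset (Fin p)} (h : T ⊆ T') (N : ℕ) :
    netSet T N ⊆ netSet T' N := by
  intro z hz
  unfold netSet at hz
  rw [Finset.mem_filter, Fintype.mem_piFinset] at hz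
  refine mem_netSet (fun k hk => ?_) hz.2
  have := hz.1 k
  rw [if_neg fun hT => hk (h hT)] at this
  exact Finset.mem_singleton.1 this

lemma sum_Icc_pow_le {q : ℝ} (hq0 : 0 < q) (hq : q ≤ 1 / 3) (N : ℕ) :
    ∑ c ∈ Finset.Icc (-(N : ℤ)) N, q ^ c.natAbs ≤ 1 + 3 * q - 3 * q ^ (N + 1) := by
  induction N with
  | zero => simp
  | succ N ih =>
    have h1 : Finset.Icc (-((N + 1 : ℕ) : ℤ)) ((N + 1 : ℕ) : ℤ) =
        insert ((N : ℤ) + 1) (insert (-((N : ℤ) + 1)) (Finset.Icc (-(N : ℤ)) N)) := by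
      ext c; simp only [Finset.mem_insert, Finset.mem_Icc]; push_cast; omega
    have h2 : ((N : ℤ) + 1).natAbs = N + 1 := by omega
    have h3 : (-((N : ℤ) + 1)).natAbs = N + 1 := by omega
    rw [h1, Finset.sum_insert (by simp only [Finset.mem_insert, Finset.mem_Icc]; omega),
      Finset.sum_insert (by simp only [Finset.mem_Icc]; omega), h2, h3]
    have h4 : 0 < q ^ (N + 1) := by positivity
    have h5 : q ^ (N + 1 + 1) = q ^ (N + 1) * q := by ring
    rw [h5]
    nlinarith

/-- Chernoff-type count of the net. -/
lemma card_netSet_le {p : ℕ} (T : Finset (Fin p)) (N : ℕ) {q : ℝ} (hq0 : 0 < q) (hq : q ≤ 1 / 3) :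
    ((netSet T N).card : ℝ) * q ^ N ≤ (1 + 3 * q) ^ T.card := by
  have h1 : ((netSet T N).card : ℝ) * q ^ N ≤ ∑ z ∈ netSet T N, ∏ k, q ^ (z k).natAbs := by
    rw [← nsmul_eq_mul, ← Finset.sum_const]
    refine Finset.sum_le_sum fun z hz => ?_
    rw [Finset.prod_pow_eq_pow_sum]
    exact pow_le_pow_of_le_one hq0.le (by linarith) (Finset.mem_filter.1 hz).2
  refine h1.trans ?_
  refine (Finset.sum_le_sum_of_subset_of_nonneg (Finset.filter_subset _ _)
    fun z _ _ => Finset.prod_nonneg fun k _ => by positivity).trans ?_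
  rw [← Finset.prod_univ_sum (fun k => if k ∈ T then Finset.Icc (-(N : ℤ)) N else {0})
    (fun _ c => q ^ c.natAbs)]
  calc ∏ k, ∑ c ∈ (if k ∈ T then Finset.Icc (-(N : ℤ)) N else {0}), q ^ c.natAbs
      ≤ ∏ k, (if k ∈ T then 1 + 3 * q else 1) := by
        refine Finset.prod_le_prod (fun k _ => Finset.sum_nonneg fun c _ => by positivity)
          fun k _ => ?_
        split_ifs
        · refine (sum_Icc_pow_le hq0 hq N).trans ?_
          have : 0 < q ^ (N + 1) := by positivity
          linarith
        · simp
    _ = (1 + 3 * q) ^ T.card := by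
        rw [Finset.prod_ite_mem, Finset.univ_inter, Finset.prod_const]

/-- Sparse nets: all supports at once. -/
lemma card_netSet_univ (hm : 3 ≤ m) (N : ℕ) :
    ((netSet (Finset.univ : Finset (Fin m)) N).card : ℝ) ≤ Real.exp 3 * (m : ℝ) ^ N := by
  have hm' : (3 : ℝ) ≤ m := by exact_mod_cast hm
  have hm0 : (0 : ℝ) < m := by linarith
  have h := card_netSet_le (Finset.univ : Finset (Fin m)) N (q := 1 / m) (by positivity)
    (one_div_le_one_div_of_le (by norm_num) hm')
  have h2 : (1 + 3 * (1 / (m : ℝ))) ^ m ≤ Real.exp 3 := by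
    calc (1 + 3 * (1 / (m : ℝ))) ^ m ≤ Real.exp (3 * (1 / (m : ℝ))) ^ m :=
          pow_le_pow_left₀ (by positivity) (by linarith [Real.add_one_le_exp (3 * (1 / (m : ℝ)))]) _
      _ = Real.exp 3 := by rw [← Real.exp_nat_mul]; congr 1; field_simp
  rw [Finset.card_univ, Fintype.card_fin, one_div_pow] at h
  have h3 : (0 : ℝ) < (m : ℝ) ^ N := by positivity
  rw [mul_one_div, div_le_iff₀ h3] at h
  exact h.trans (by gcongr)

/-- Nets of the vectors supported on a block of size at most `s`. -/
lemma card_netSet_block {p : ℕ} {T : Finset (Fin p)} {s : ℕ} (hs : T.card ≤ s) :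
    ((netSet T (4 * s)).card : ℝ) ≤ Real.exp (6 * s) := by
  have h := card_netSet_le T (4 * s) (q := 1 / 3) (by norm_num) le_rfl
  have h2 : (1 + 3 * (1 / 3 : ℝ)) ^ T.card ≤ 2 ^ s := by
    norm_num
    exact pow_le_pow_right₀ (by norm_num) hs
  rw [one_div_pow, mul_one_div, div_le_iff₀ (by positivity)] at h
  have h3 : ((netSet T (4 * s)).card : ℝ) ≤ 162 ^ s := by
    refine (h.trans (mul_le_mul_of_nonneg_right h2 (by positivity))).trans (le_of_eq ?_)
    rw [pow_mul, ← mul_pow]; norm_num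
  refine h3.trans ?_
  rw [mul_comm, Real.exp_nat_mul]
  refine pow_le_pow_left₀ (by norm_num) ?_ _
  have h4 : (2.7 : ℝ) ≤ Real.exp 1 := by linarith [Real.exp_one_gt_d9]
  calc (162 : ℝ) ≤ 2.7 ^ 6 := by norm_num
    _ ≤ Real.exp 1 ^ 6 := pow_le_pow_left₀ (by norm_num) h4 6
    _ = Real.exp 6 := by rw [← Real.exp_nat_mul]; norm_num

lemma exists_trunc (w : ℝ) : ∃ z : ℤ, |(z : ℝ)| ≤ |w| ∧ |w - z| ≤ 1 := by
  rcases le_total 0 w with h | h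
  · refine ⟨⌊w⌋, ?_, ?_⟩
    · have : (0 : ℝ) ≤ ⌊w⌋ := by exact_mod_cast Int.floor_nonneg.2 h
      rw [abs_of_nonneg this, abs_of_nonneg h]; exact Int.floor_le w
    · rw [abs_le]; constructor <;> linarith [Int.floor_le w, Int.lt_floor_add_one w]
  · refine ⟨⌈w⌉, ?_, ?_⟩
    · have : (⌈w⌉ : ℝ) ≤ 0 := by exact_mod_cast Int.ceil_le.2 (by simpa using h)
      rw [abs_of_nonpos this, abs_of_nonpos h]; linarith [Int.le_ceil w]
    · rw [abs_le]; constructor <;> linarith [Int.le_ceil w, Int.ceil_lt_add_one w]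

/-- The net property: rounding `(2√s / ‖v‖) v` towards zero. -/
lemma exists_net {p : ℕ} {T : Finset (Fin p)} {s : ℕ} (hs0 : 0 < s) (hs : T.card ≤ s)
    (v : Fin p → ℝ) (hv : ∀ k, k ∉ T → v k = 0) :
    ∃ z ∈ netSet T (4 * s), ∃ c : ℝ, 0 ≤ c ∧ l2 (c • castVec z) ≤ l2 v ∧
      l2 (v - c • castVec z) ≤ l2 v / 2 := by
  rcases eq_or_ne v 0 with rfl | hv0
  · exact ⟨0, mem_netSet (fun _ _ => rfl) (by simp), 0, le_rfl, by simp, by simp⟩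
  have hn := l2_pos hv0
  have hs' : (0 : ℝ) < s := by exact_mod_cast hs0
  set c : ℝ := l2 v / (2 * Real.sqrt s) with hc
  have hc0 : 0 < c := by positivity
  choose z hz1 hz2 using fun k => exists_trunc (v k / c)
  have hz0 : ∀ k, k ∉ T → z k = 0 := by
    intro k hk
    have := hz1 k
    rw [hv k hk] at this
    simpa using this
  have hsq : ∀ k, c ^ 2 * (z k : ℝ) ^ 2 ≤ v k ^ 2 := by
    intro k
    have h := sq_le_sq.2 (hz1 k)
    rw [div_pow, le_div_iff₀ (by positivity)] at h
    linarith
  have hc2 : c ^ 2 * (4 * s) = l2 v ^ 2 := by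
    rw [hc, div_pow, mul_pow, Real.sq_sqrt hs'.le]; field_simp; norm_num
  have hsum : c ^ 2 * ∑ k, (z k : ℝ) ^ 2 ≤ c ^ 2 * (4 * s) := by
    rw [hc2, l2_sq, Finset.mul_sum]
    exact Finset.sum_le_sum fun k _ => hsq k
  have hsum2 : ∑ k, (z k : ℝ) ^ 2 ≤ 4 * s := le_of_mul_le_mul_left hsum (by positivity)
  refine ⟨z, mem_netSet hz0 ?_, c, hc0.le, ?_, ?_⟩
  · have h1 : ∀ k, ((z k).natAbs : ℝ) ≤ (z k : ℝ) ^ 2 := by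
      intro k
      have h : (z k).natAbs ≤ (z k).natAbs ^ 2 := Nat.le_self_pow (by norm_num) _
      have h' : (((z k).natAbs ^ 2 : ℕ) : ℝ) = (z k : ℝ) ^ 2 := by
        push_cast
        rw [Nat.cast_natAbs, Int.cast_abs, sq_abs]
      rw [← h']; exact_mod_cast h
    have h2 : ∑ k, ((z k).natAbs : ℝ) ≤ 4 * s := (Finset.sum_le_sum fun k _ => h1 k).trans hsum2
    exact_mod_cast h2
  · refine l2_mono fun k => ?_
    refine sq_le_sq.1 ?_
    simpa [castVec, mul_pow] using hsq k
  · have h1 : l2 (v - c • castVec z) ^ 2 ≤ (l2 v / 2) ^ 2 := by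
      have h2 : ∀ k, (v - c • castVec z) k ^ 2 ≤ if k ∈ T then c ^ 2 else 0 := by
        intro k
        split_ifs with hk
        · have e : (v - c • castVec z) k = c * (v k / c - z k) := by
            simp only [Pi.sub_apply, Pi.smul_apply, castVec, smul_eq_mul]; field_simp
          rw [e, mul_pow]
          have : (v k / c - z k) ^ 2 ≤ 1 := (sq_le_one_iff_abs_le_one _).2 (hz2 k)
          nlinarith [sq_nonneg c]
        · simp [castVec, hv k hk, hz0 k hk]
      rw [l2_sq]
      refine (Finset.sum_le_sum fun k _ => h2 k).trans ?_
      rw [Finset.sum_ite_mem, Finset.univ_inter, Finset.sum_const, nsmul_eq_mul]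
      have hT : (T.card : ℝ) ≤ s := by exact_mod_cast hs
      nlinarith [sq_nonneg c]
    exact (sq_le_sq₀ (l2_nonneg _) (by positivity)).1 h1

lemma exists_functional_bound {p : ℕ} (f : (Fin p → ℝ) →ₗ[ℝ] ℝ) :
    ∃ M, 0 ≤ M ∧ ∀ v, |f v| ≤ M * l2 v := by
  refine ⟨l2 fun k => f (Pi.single k 1), l2_nonneg _, fun v => ?_⟩
  have h : f v = dot (fun k => f (Pi.single k 1)) v := by
    conv_lhs => rw [pi_eq_sum_univ' v]
    rw [map_sum]
    simp only [map_smul, dot, smul_eq_mul]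
    refine Finset.sum_congr rfl fun k _ => ?_
    rw [mul_comm]
  rw [h]; exact abs_dot_le _ _

/-- A linear functional bounded by `r` on the net is bounded by `2 r`. -/
lemma functional_of_net {p : ℕ} (f : (Fin p → ℝ) →ₗ[ℝ] ℝ) {T : Finset (Fin p)} {s : ℕ}
    (hs0 : 0 < s) (hs : T.card ≤ s) {r : ℝ} (hr : 0 ≤ r)
    (h : ∀ z ∈ netSet T (4 * s), |f (castVec z)| ≤ r * l2 (castVec z))
    (v : Fin p → ℝ) (hv : ∀ k, k ∉ T → v k = 0) : |f v| ≤ 2 * r * l2 v := by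
  obtain ⟨M, hM0, hM⟩ := exists_functional_bound f
  have key : ∀ n : ℕ, ∀ v : Fin p → ℝ, (∀ k, k ∉ T → v k = 0) →
      |f v| ≤ (2 * r + M * (1 / 2) ^ n) * l2 v := by
    intro n
    induction n with
    | zero =>
      intro v _
      refine (hM v).trans ?_
      have := l2_nonneg v
      rw [pow_zero, mul_one]
      exact mul_le_mul_of_nonneg_right (by linarith) this
    | succ n ih =>
      intro v hv
      obtain ⟨z, hz, c, hc, h1, h2⟩ := exists_net hs0 hs v hv
      have hz0 : ∀ k, k ∉ T → z k = 0 := by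
        intro k hk
        have := (Fintype.mem_piFinset.1 (Finset.mem_filter.1 hz).1) k
        rw [if_neg hk] at this
        exact Finset.mem_singleton.1 this
      have h3 := ih (v - c • castVec z) (fun k hk => by simp [castVec, hv k hk, hz0 k hk])
      have h4 : |f (c • castVec z)| ≤ r * l2 v := by
        rw [map_smul, smul_eq_mul, abs_mul, abs_of_nonneg hc]
        calc c * |f (castVec z)| ≤ c * (r * l2 (castVec z)) := by gcongr; exact h z hz
          _ = r * l2 (c • castVec z) := by rw [l2_smul, abs_of_nonneg hc]; ring
          _ ≤ _ := by gcongr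
      have h5 : f v = f (c • castVec z) + f (v - c • castVec z) := by rw [← map_add]; congr 1; abel
      rw [h5]
      refine (abs_add_le _ _).trans ?_
      have h6 : (2 * r + M * (1 / 2) ^ n) * l2 (v - c • castVec z) ≤
          (2 * r + M * (1 / 2) ^ n) * (l2 v / 2) := by gcongr
      calc |f (c • castVec z)| + |f (v - c • castVec z)|
          ≤ r * l2 v + (2 * r + M * (1 / 2) ^ n) * (l2 v / 2) := by linarith
        _ = _ := by ring
  have hlim : Filter.Tendsto (fun n : ℕ => (2 * r + M * (1 / 2) ^ n) * l2 v) Filter.atTop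
      (nhds ((2 * r + M * 0) * l2 v)) :=
    ((tendsto_const_nhds.add ((tendsto_pow_atTop_nhds_zero_of_lt_one (by norm_num)
      (by norm_num)).const_mul M)).mul_const _)
  rw [mul_zero, add_zero] at hlim
  exact ge_of_tendsto' hlim fun n => key n v hv

/-- A bilinear form `⟨u, Q v⟩` bounded by `r` on pairs of net points is bounded by `4 r`. -/
lemma bilinear_of_net {p q : ℕ} (Q : (Fin q → ℝ) →ₗ[ℝ] (Fin p → ℝ)) {S : Finset (Fin p)}
    {T : Finset (Fin q)} {n s : ℕ} (hn0 : 0 < n) (hn : S.card ≤ n) (hs0 : 0 < s) (hs : T.card ≤ s)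
    {r : ℝ} (hr : 0 ≤ r)
    (h : ∀ y ∈ netSet S (4 * n), ∀ z ∈ netSet T (4 * s),
      |dot (castVec y) (Q (castVec z))| ≤ r * (l2 (castVec y) * l2 (castVec z)))
    (u : Fin p → ℝ) (v : Fin q → ℝ) (hu : ∀ k, k ∉ S → u k = 0) (hv : ∀ k, k ∉ T → v k = 0) :
    |dot u (Q v)| ≤ 4 * r * (l2 u * l2 v) := by
  let F : (Fin p → ℝ) → (Fin p → ℝ) →ₗ[ℝ] ℝ := fun w =>
    { toFun := fun u => dot w u
      map_add' := fun a b => dot_add _ _ _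
      map_smul' := fun c a => by simp [dot_smul] }
  have h1 : ∀ z ∈ netSet T (4 * s), |dot u (Q (castVec z))| ≤ 2 * r * l2 u * l2 (castVec z) := by
    intro z hz
    have h2 := functional_of_net (F (Q (castVec z))) hn0 hn (r := r * l2 (castVec z))
      (mul_nonneg hr (l2_nonneg _)) (fun y hy => by
        change |dot _ _| ≤ _
        rw [dot_comm]; exact (h y hy z hz).trans (le_of_eq (by ring))) u hu
    change |dot _ _| ≤ _ at h2
    rw [dot_comm] at h2
    exact h2.trans (le_of_eq (by ring))
  have h3 := functional_of_net ((F u).comp Q) hs0 hs (r := 2 * r * l2 u)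
    (by have := l2_nonneg u; positivity) h1 v hv
  change |dot _ _| ≤ _ at h3
  exact h3.trans (le_of_eq (by ring))

/-! ### Union bounds over nets -/

/-- The relations between the parameters that the union bounds need. -/
structure ProbHyp (m d L : ℕ) (Λ t : ℝ) : Prop where
  hL : 2 ≤ L
  hd : 0 < d
  hΛ : Λ = Real.log m
  hΛ2 : 2 ≤ Λ
  hm : 10 ^ 12 * (d * L ^ 2 * Λ) ≤ m
  ht0 : 0 ≤ t
  ht : 10 ^ 6 * (L ^ 2 * t) ≤ m

section probHyp

variable {Λ t : ℝ}

lemma ProbHyp.L2 (H : ProbHyp m d L Λ t) : (2 : ℝ) ≤ L := by exact_mod_cast H.hL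

lemma ProbHyp.d1 (H : ProbHyp m d L Λ t) : (1 : ℝ) ≤ d := by exact_mod_cast H.hd

lemma ProbHyp.mL (H : ProbHyp m d L Λ t) : 10 ^ 12 * (L ^ 2 * Λ) ≤ (m : ℝ) := by
  refine le_trans ?_ H.hm
  have h1 := H.d1
  have h2 := H.hΛ2
  have h3 : (L : ℝ) ^ 2 * Λ ≤ d * (L ^ 2 * Λ) := le_mul_of_one_le_left (by positivity) h1
  linarith

lemma ProbHyp.m_large (H : ProbHyp m d L Λ t) : (10 : ℝ) ^ 12 * L ≤ m := by
  have h1 := H.mL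
  have h2 := H.L2
  have h3 := H.hΛ2
  have : (L : ℝ) ≤ L ^ 2 * Λ := by nlinarith [sq_nonneg (L : ℝ)]
  linarith

lemma ProbHyp.m0 (H : ProbHyp m d L Λ t) : (0 : ℝ) < m := by
  have h1 := H.m_large
  have h2 := H.L2
  linarith

lemma ProbHyp.m_pos (H : ProbHyp m d L Λ t) : 0 < m := by exact_mod_cast H.m0

lemma ProbHyp.exp_Λ (H : ProbHyp m d L Λ t) : Real.exp Λ = m := by
  rw [H.hΛ, Real.exp_log H.m0]

lemma ProbHyp.L_sq_le (H : ProbHyp m d L Λ t) : (L : ℝ) ^ 2 ≤ Real.exp Λ := by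
  rw [H.exp_Λ]
  have h1 := H.mL
  have h3 := H.hΛ2
  nlinarith [sq_nonneg (L : ℝ)]

lemma ProbHyp.L_le (H : ProbHyp m d L Λ t) : (L : ℝ) + 1 ≤ Real.exp Λ := by
  refine le_trans ?_ H.L_sq_le
  nlinarith [H.L2]

lemma ProbHyp.d_le (H : ProbHyp m d L Λ t) : (d : ℝ) ≤ Real.exp Λ := by
  rw [H.exp_Λ]
  refine le_trans ?_ H.hm
  have h1 := H.d1
  have h2 := H.L2
  have h3 := H.hΛ2
  have : (1 : ℝ) ≤ L ^ 2 * Λ := by nlinarith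
  have : (d : ℝ) ≤ d * (L ^ 2 * Λ) := le_mul_of_one_le_right (by linarith) this
  nlinarith

lemma ProbHyp.card_univ (H : ProbHyp m d L Λ t) (n : ℕ) :
    ((netSet (Finset.univ : Finset (Fin m)) (4 * n)).card : ℝ) ≤ Real.exp (3 + 4 * n * Λ) := by
  have h3 : 3 ≤ m := by
    have h1 := H.m_large
    have h2 := H.L2
    have : (3 : ℝ) ≤ m := by linarith
    exact_mod_cast this
  refine (card_netSet_univ h3 _).trans (le_of_eq ?_)
  rw [Real.exp_add, ← H.exp_Λ, ← Real.exp_nat_mul]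
  push_cast
  ring_nf

end probHyp

lemma net_tail_W (hm : 0 < m) (hL : 0 < L) (x : Fin 𝔡 → ℝ) (Z Z' : Finset (Fin m → ℤ)) (a : ℕ)
    {b : ℕ} (hb : b < L) {r : ℝ} (hr : 0 < r) (hr2 : r ^ 2 ≤ 1 / (4 * L)) :
    initMeasure 𝔡 m d L {w | ∃ y ∈ Z, ∃ z ∈ Z', r * (l2 (castVec y) * l2 (castVec z)) <
      |dot (castVec y) (mulVec (Wat w.2.1 (b + 1)) (safeProd w.1 w.2.1 x (castVec z) a b))|} ≤
      ENNReal.ofReal (Z.card * Z'.card * (2 * Real.exp (-(r ^ 2 * m / 8)))) := by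
  have h := measure_iUnion_le_card (ι := ↥(Z ×ˢ Z')) (initMeasure 𝔡 m d L)
    (fun p => {w | r * (l2 (castVec p.1.1) * l2 (castVec p.1.2)) <
      |dot (castVec p.1.1) (mulVec (Wat w.2.1 (b + 1))
        (safeProd w.1 w.2.1 x (castVec p.1.2) a b))|})
    (fun p => tail_W hm hL x _ _ a hb hr hr2)
  rw [Fintype.card_coe, Finset.card_product, Nat.cast_mul] at h
  refine (measure_mono ?_).trans h
  rintro w ⟨y, hy, z, hz, h⟩
  exact Set.mem_iUnion.2 ⟨⟨(y, z), Finset.mem_product.2 ⟨hy, hz⟩⟩, h⟩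

lemma net_tail_B (hm : 0 < m) (hL : 0 < L) (hd : 0 < d) (x : Fin 𝔡 → ℝ) (j : Fin d)
    (Z : Finset (Fin m → ℤ)) (a : ℕ) {r : ℝ} (hr : 0 < r) (hr2 : r ^ 2 ≤ 1 / (4 * L)) :
    initMeasure 𝔡 m d L {w | ∃ z ∈ Z, r * Real.sqrt (m / d) * l2 (castVec z) <
      |dot (w.2.2 j) (safeProd w.1 w.2.1 x (castVec z) a L)|} ≤
      ENNReal.ofReal (Z.card * (2 * Real.exp (-(r ^ 2 * m / 8)))) := by
  have h := measure_iUnion_le_card (ι := ↥Z) (initMeasure 𝔡 m d L)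
    (fun p => {w | r * Real.sqrt (m / d) * l2 (castVec p.1) <
      |dot (w.2.2 j) (safeProd w.1 w.2.1 x (castVec p.1) a L)|})
    (fun p => tail_B hm hL hd x j _ a hr hr2)
  rw [Fintype.card_coe] at h
  refine (measure_mono ?_).trans h
  rintro w ⟨z, hz, h⟩
  exact Set.mem_iUnion.2 ⟨⟨z, hz⟩, h⟩

section bounds

variable {A : Fin m → Fin 𝔡 → ℝ} {W : Fin L → Fin m → Fin m → ℝ} {x : Fin 𝔡 → ℝ}

/-- Off the net event, the bilinear form of a layer product is bounded on supported vectors. -/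
lemma bilin_of_net_event (hne : ∀ i ≤ L, hseq A W x i ≠ 0) {a b : ℕ} (hb : b < L)
    {S T : Finset (Fin m)} {n s : ℕ} (hn0 : 0 < n) (hn : S.card ≤ n) (hs0 : 0 < s)
    (hs : T.card ≤ s) {Z Z' : Finset (Fin m → ℤ)} (hZ : netSet S (4 * n) ⊆ Z)
    (hZ' : netSet T (4 * s) ⊆ Z') {r : ℝ} (hr : 0 ≤ r)
    (h : ¬ ∃ y ∈ Z, ∃ z ∈ Z', r * (l2 (castVec y) * l2 (castVec z)) <
      |dot (castVec y) (mulVec (Wat W (b + 1)) (safeProd A W x (castVec z) a b))|)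
    (u v : Fin m → ℝ) (hu : ∀ k, k ∉ S → u k = 0) (hv : ∀ k, k ∉ T → v k = 0) :
    |dot u (mulVec (Wat W (b + 1)) (layerProd (Wat W) (fun i => signOf (gseq A W x i)) a b v))| ≤
      4 * r * (l2 u * l2 v) := by
  refine bilinear_of_net ((mvL (Wat W (b + 1))).comp
    (layerProd (Wat W) (fun i => signOf (gseq A W x i)) a b)) hn0 hn hs0 hs hr ?_ u v hu hv
  intro y hy z hz
  push Not at h
  have := h y (hZ hy) z (hZ' hz)
  rwa [safeProd_eq _ _ fun i hi => hne i (by omega)] at this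

lemma functional_of_net_event (hne : ∀ i ≤ L, hseq A W x i ≠ 0) {a : ℕ} (β : Fin m → ℝ)
    {T : Finset (Fin m)} {s : ℕ} (hs0 : 0 < s)
    (hs : T.card ≤ s) {Z : Finset (Fin m → ℤ)} (hZ : netSet T (4 * s) ⊆ Z) {r : ℝ} (hr : 0 ≤ r)
    (h : ¬ ∃ z ∈ Z, r * l2 (castVec z) < |dot β (safeProd A W x (castVec z) a L)|)
    (v : Fin m → ℝ) (hv : ∀ k, k ∉ T → v k = 0) :
    |dot β (layerProd (Wat W) (fun i => signOf (gseq A W x i)) a L v)| ≤ 2 * r * l2 v := by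
  let F : (Fin m → ℝ) →ₗ[ℝ] ℝ :=
    { toFun := fun u => dot β u
      map_add' := fun a b => dot_add _ _ _
      map_smul' := fun c a => by simp [dot_smul] }
  refine functional_of_net (F.comp (layerProd (Wat W) (fun i => signOf (gseq A W x i)) a L))
    hs0 hs hr ?_ v hv
  intro z hz
  push Not at h
  have := h z (hZ hz)
  rwa [safeProd_eq _ _ fun i hi => hne i (by omega)] at this

end bounds

/-- Sparse bilinear forms of the layer products.  The sparsity costs `4 (n + s) log m` in the
exponent (size of the nets), against a gain of `12.5 (n + s + t) log m`. -/
lemma sparse_event_W {Λ t : ℝ} (H : ProbHyp m d L Λ t) (x : Fin 𝔡 → ℝ) :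
    ∃ E : Set (Init 𝔡 m d L), initMeasure 𝔡 m d L E ≤ ENNReal.ofReal (Real.exp (-(3 + t))) ∧
      ∀ w ∉ E, (∀ i ≤ L, hseq w.1 w.2.1 x i ≠ 0) →
      ∀ a b (u v : Fin m → ℝ) (S S' : Finset (Fin m)), a ≤ b → b < L →
        (∀ k, k ∉ S → u k = 0) → (∀ k, k ∉ S' → v k = 0) →
        (S.card : ℝ) + S'.card + t ≤ m / (400 * L * Λ) →
        |dot u (mulVec (Wat w.2.1 (b + 1)) (layerProd (Wat w.2.1)
          (fun i => signOf (gseq w.1 w.2.1 x i)) a b v))| ≤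
        40 * Real.sqrt (Λ / m) * Real.sqrt (S.card + S'.card + t) * (l2 u * l2 v) := by
  have hm := H.m_pos
  have hm0 := H.m0
  have hL2 := H.L2
  have hΛ2 := H.hΛ2
  have ht0 := H.ht0
  set U : ℕ → Finset (Fin m → ℤ) := fun n => netSet Finset.univ (4 * n) with hU
  set R : ℕ → ℕ → ℝ := fun n s => 10 * (Real.sqrt (Λ / m) * Real.sqrt (n + s + t)) with hR
  have hR2 : ∀ n s, R n s ^ 2 = 100 * (n + s + t) * Λ / m := by
    intro n s
    rw [hR]; simp only
    rw [mul_pow, mul_pow, Real.sq_sqrt (by positivity), Real.sq_sqrt (by positivity)]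
    ring
  classical
  set E : (Fin L × Fin L) × Fin m × Fin m → Set (Init 𝔡 m d L) := fun p =>
    if ((p.2.1 + 1 : ℕ) : ℝ) + (p.2.2 + 1 : ℕ) + t ≤ m / (400 * L * Λ) then
      {w | ∃ y ∈ U (p.2.1 + 1), ∃ z ∈ U (p.2.2 + 1),
        R (p.2.1 + 1) (p.2.2 + 1) * (l2 (castVec y) * l2 (castVec z)) <
          |dot (castVec y) (mulVec (Wat w.2.1 (p.1.2 + 1))
            (safeProd w.1 w.2.1 x (castVec z) p.1.1 p.1.2))|}
    else ∅ with hE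
  refine ⟨⋃ p, E p, ?_, ?_⟩
  · have hp : ∀ p, initMeasure 𝔡 m d L (E p) ≤ ENNReal.ofReal (Real.exp (7 - 17 * Λ - t)) := by
      intro p
      rw [hE]; simp only
      split_ifs with hc
      · set n := (p.2.1 : ℕ) + 1 with hn
        set s := (p.2.2 : ℕ) + 1 with hs
        have hn1 : (1 : ℝ) ≤ n := by rw [hn]; push_cast; linarith [(p.2.1 : ℕ).cast_nonneg (α := ℝ)]
        have hs1 : (1 : ℝ) ≤ s := by rw [hs]; push_cast; linarith [(p.2.2 : ℕ).cast_nonneg (α := ℝ)]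
        refine (net_tail_W hm (by linarith [H.hL]) x _ _ _ p.1.2.2 (r := R n s) ?_ ?_).trans ?_
        · rw [hR]; positivity
        · rw [hR2, div_le_div_iff₀ hm0 (by positivity)]
          rw [le_div_iff₀ (by positivity)] at hc
          nlinarith
        · refine ENNReal.ofReal_le_ofReal ?_
          have e1 : (R n s) ^ 2 * m / 8 = 25 / 2 * (n + s + t) * Λ := by
            rw [hR2]; field_simp; norm_num
          rw [e1]
          have h2 : (2 : ℝ) ≤ Real.exp 1 := by linarith [Real.exp_one_gt_d9]
          calc ((U n).card : ℝ) * (U s).card * (2 * Real.exp (-(25 / 2 * (n + s + t) * Λ)))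
              ≤ Real.exp (3 + 4 * n * Λ) * Real.exp (3 + 4 * s * Λ) *
                (Real.exp 1 * Real.exp (-(25 / 2 * (n + s + t) * Λ))) := by
                gcongr
                · exact H.card_univ n
                · exact H.card_univ s
            _ = Real.exp (7 - (17 / 2 * (n + s) * Λ + 25 / 2 * t * Λ)) := by
                rw [← Real.exp_add, ← Real.exp_add, ← Real.exp_add]; congr 1; ring
            _ ≤ _ := by
                refine Real.exp_le_exp.2 ?_
                have h3 : 2 * Λ ≤ (n + s) * Λ := by nlinarith
                have h4 : t ≤ t * Λ := by nlinarith
                linarith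
      · simp
    refine (measure_iUnion_le_card _ _ hp).trans (ENNReal.ofReal_le_ofReal ?_)
    simp only [Fintype.card_prod, Fintype.card_fin]
    push_cast
    calc (L : ℝ) * L * (m * m) * Real.exp (7 - 17 * Λ - t)
        = L ^ 2 * (m * m) * Real.exp (7 - 17 * Λ - t) := by ring
      _ ≤ Real.exp Λ * (Real.exp Λ * Real.exp Λ) * Real.exp (7 - 17 * Λ - t) := by
          rw [H.exp_Λ]
          have := H.L_sq_le
          rw [H.exp_Λ] at this
          gcongr
      _ = Real.exp (7 - 14 * Λ - t) := by
          rw [← Real.exp_add, ← Real.exp_add, ← Real.exp_add]; congr 1; ring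
      _ ≤ _ := Real.exp_le_exp.2 (by linarith)
  · intro w hw hne a b u v S S' hab hb hu hv hc
    have hrhs : 0 ≤ 40 * Real.sqrt (Λ / m) * Real.sqrt (S.card + S'.card + t) *
        (l2 u * l2 v) := by
      have := l2_nonneg u
      have := l2_nonneg v
      positivity
    rcases Finset.eq_empty_or_nonempty S with hS | hS
    · have : u = 0 := by funext k; exact hu k (by simp [hS])
      rw [this, zero_dot, abs_zero]; rw [this] at hrhs; exact hrhs
    rcases Finset.eq_empty_or_nonempty S' with hS' | hS'
    · have : v = 0 := by funext k; exact hv k (by simp [hS'])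
      rw [this, map_zero, mulVec_zero, dot_zero, abs_zero]; rw [this] at hrhs; exact hrhs
    have hScard := Finset.card_pos.2 hS
    have hScard' := Finset.card_pos.2 hS'
    have hSm : S.card ≤ m := by simpa using Finset.card_le_univ S
    have hSm' : S'.card ≤ m := by simpa using Finset.card_le_univ S'
    have hw' : w ∉ E ((⟨a, by omega⟩, ⟨b, hb⟩),
        (⟨S.card - 1, by omega⟩, ⟨S'.card - 1, by omega⟩)) :=
      fun hh => hw (Set.mem_iUnion.2 ⟨_, hh⟩)
    simp only [hE, Nat.sub_add_cancel hScard, Nat.sub_add_cancel hScard', if_pos hc] at hw'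
    have := bilin_of_net_event hne hb hScard le_rfl hScard' le_rfl
      (netSet_mono (Finset.subset_univ _) _) (netSet_mono (Finset.subset_univ _) _)
      (r := R S.card S'.card) (by rw [hR]; positivity) hw' u v hu hv
    refine this.trans (le_of_eq ?_)
    rw [hR]; ring

/-- Sparse linear forms of the backward vectors. -/
lemma sparse_event_B {Λ t : ℝ} (H : ProbHyp m d L Λ t) (x : Fin 𝔡 → ℝ) :
    ∃ E : Set (Init 𝔡 m d L), initMeasure 𝔡 m d L E ≤ ENNReal.ofReal (Real.exp (-(3 + t))) ∧
      ∀ w ∉ E, (∀ i ≤ L, hseq w.1 w.2.1 x i ≠ 0) →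
      ∀ (j : Fin d) a (v : Fin m → ℝ) (S : Finset (Fin m)), a ≤ L →
        (∀ k, k ∉ S → v k = 0) → (S.card : ℝ) + t ≤ m / (400 * L * Λ) →
        |dot (w.2.2 j) (layerProd (Wat w.2.1)
          (fun i => signOf (gseq w.1 w.2.1 x i)) a L v)| ≤
        Real.sqrt (m / d) * (40 * Real.sqrt (Λ / m) * Real.sqrt (S.card + t)) * l2 v := by
  have hm := H.m_pos
  have hm0 := H.m0
  have hL2 := H.L2
  have hΛ2 := H.hΛ2
  have ht0 := H.ht0
  have hd1 := H.d1
  set U : ℕ → Finset (Fin m → ℤ) := fun n => netSet Finset.univ (4 * n) with hU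
  set R : ℕ → ℝ := fun n => 10 * (Real.sqrt (Λ / m) * Real.sqrt (n + t)) with hR
  have hR2 : ∀ n, R n ^ 2 = 100 * (n + t) * Λ / m := by
    intro n
    rw [hR]; simp only
    rw [mul_pow, mul_pow, Real.sq_sqrt (by positivity), Real.sq_sqrt (by positivity)]
    ring
  classical
  set E : (Fin d × Fin (L + 1)) × Fin m → Set (Init 𝔡 m d L) := fun p =>
    if ((p.2 + 1 : ℕ) : ℝ) + t ≤ m / (400 * L * Λ) then
      {w | ∃ z ∈ U (p.2 + 1), R (p.2 + 1) * Real.sqrt (m / d) * l2 (castVec z) <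
          |dot (w.2.2 p.1.1) (safeProd w.1 w.2.1 x (castVec z) p.1.2 L)|}
    else ∅ with hE
  refine ⟨⋃ p, E p, ?_, ?_⟩
  · have hp : ∀ p, initMeasure 𝔡 m d L (E p) ≤
        ENNReal.ofReal (Real.exp (4 - 17 / 2 * Λ - t)) := by
      intro p
      rw [hE]; simp only
      split_ifs with hc
      · set n := (p.2 : ℕ) + 1 with hn
        have hn1 : (1 : ℝ) ≤ n := by rw [hn]; push_cast; linarith [(p.2 : ℕ).cast_nonneg (α := ℝ)]
        refine (net_tail_B hm (by linarith [H.hL]) H.hd x _ _ _ (r := R n) ?_ ?_).trans ?_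
        · rw [hR]; positivity
        · rw [hR2, div_le_div_iff₀ hm0 (by positivity)]
          rw [le_div_iff₀ (by positivity)] at hc
          nlinarith
        · refine ENNReal.ofReal_le_ofReal ?_
          have e1 : (R n) ^ 2 * m / 8 = 25 / 2 * (n + t) * Λ := by
            rw [hR2]; field_simp; norm_num
          rw [e1]
          have h2 : (2 : ℝ) ≤ Real.exp 1 := by linarith [Real.exp_one_gt_d9]
          calc ((U n).card : ℝ) * (2 * Real.exp (-(25 / 2 * (n + t) * Λ)))
              ≤ Real.exp (3 + 4 * n * Λ) *
                (Real.exp 1 * Real.exp (-(25 / 2 * (n + t) * Λ))) := by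
                gcongr
                exact H.card_univ n
            _ = Real.exp (4 - (17 / 2 * n * Λ + 25 / 2 * t * Λ)) := by
                rw [← Real.exp_add, ← Real.exp_add]; congr 1; ring
            _ ≤ _ := by
                refine Real.exp_le_exp.2 ?_
                have h3 : Λ ≤ n * Λ := by nlinarith
                have h4 : t ≤ t * Λ := by nlinarith
                linarith
      · simp
    refine (measure_iUnion_le_card _ _ hp).trans (ENNReal.ofReal_le_ofReal ?_)
    simp only [Fintype.card_prod, Fintype.card_fin]
    push_cast
    calc (d : ℝ) * (L + 1) * m * Real.exp (4 - 17 / 2 * Λ - t)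
        ≤ Real.exp Λ * Real.exp Λ * Real.exp Λ * Real.exp (4 - 17 / 2 * Λ - t) := by
          have h1 := H.d_le
          have h2 := H.L_le
          have h3 := H.exp_Λ.ge
          gcongr
      _ = Real.exp (4 - 11 / 2 * Λ - t) := by
          rw [← Real.exp_add, ← Real.exp_add, ← Real.exp_add]; congr 1; ring
      _ ≤ _ := Real.exp_le_exp.2 (by linarith)
  · intro w hw hne j a v S ha hv hc
    rcases Finset.eq_empty_or_nonempty S with hS | hS
    · have : v = 0 := by funext k; exact hv k (by simp [hS])
      rw [this, map_zero, dot_zero, abs_zero, l2_zero, mul_zero]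
    have hScard := Finset.card_pos.2 hS
    have hSm : S.card ≤ m := by simpa using Finset.card_le_univ S
    have hw' : w ∉ E ((j, ⟨a, by omega⟩), ⟨S.card - 1, by omega⟩) :=
      fun hh => hw (Set.mem_iUnion.2 ⟨_, hh⟩)
    simp only [hE, Nat.sub_add_cancel hScard, if_pos hc] at hw'
    have := functional_of_net_event hne (w.2.2 j) hScard le_rfl
      (netSet_mono (Finset.subset_univ _) _)
      (r := R S.card * Real.sqrt (m / d)) (by rw [hR]; positivity) hw' v hv
    refine this.trans ?_
    rw [hR]
    have h1 : 0 ≤ Real.sqrt (m / d) * (Real.sqrt (Λ / m) * Real.sqrt (S.card + t)) * l2 v := by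
      have := l2_nonneg v
      positivity
    linarith

/-! ### Operator norms through blocks -/

/-- The `i`-th block of `q` consecutive coordinates. -/
def block (m q i : ℕ) : Finset (Fin m) := Finset.univ.filter fun k => (k : ℕ) / q = i

lemma card_block_le {q : ℕ} (hq : 0 < q) (i : ℕ) : (block m q i).card ≤ q := by
  have h : ((block m q i).map Fin.valEmbedding) ⊆ Finset.Ico (i * q) (i * q + q) := by
    intro k hk
    simp only [block, Finset.mem_map, Finset.mem_filter, Finset.mem_univ, true_and] at hk
    obtain ⟨k, h1, rfl⟩ := hk
    have h2 := Nat.div_add_mod (k : ℕ) q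
    have h3 := Nat.mod_lt (k : ℕ) hq
    rw [h1, mul_comm] at h2
    simp only [Fin.valEmbedding_apply, Finset.mem_Ico]
    omega
  simpa using Finset.card_le_card h

lemma sum_restr_block (q : ℕ) (v : Fin m → ℝ) :
    ∑ i : Fin (m / q + 1), restr (block m q i) v = v := by
  funext k
  have hk : (k : ℕ) / q < m / q + 1 := Nat.lt_succ_of_le (Nat.div_le_div_right k.2.le)
  rw [Finset.sum_apply, Finset.sum_eq_single ⟨(k : ℕ) / q, hk⟩]
  · simp [restr, block]
  · intro i _ hi
    have : ¬ (k : ℕ) / q = i := fun h => hi (Fin.ext h.symm)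
    simp [restr, block, this]
  · simp

/-- Cauchy–Schwarz over the blocks. -/
lemma sum_l2_restr_block (q : ℕ) (v : Fin m → ℝ) :
    ∑ i : Fin (m / q + 1), l2 (restr (block m q i) v) ≤
      Real.sqrt (m / q + 1 : ℕ) * l2 v := by
  have h1 : ∑ i : Fin (m / q + 1), l2 (restr (block m q i) v) ^ 2 = l2 v ^ 2 := by
    simp_rw [l2_sq]
    rw [Finset.sum_comm]
    refine Finset.sum_congr rfl fun k _ => ?_
    have hk : (k : ℕ) / q < m / q + 1 := Nat.lt_succ_of_le (Nat.div_le_div_right k.2.le)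
    rw [Finset.sum_eq_single ⟨(k : ℕ) / q, hk⟩]
    · simp [restr, block]
    · intro i _ hi
      have : ¬ (k : ℕ) / q = i := fun h => hi (Fin.ext h.symm)
      simp [restr, block, this]
    · simp
  have h2 := sq_sum_le_card_mul_sum_sq (s := (Finset.univ : Finset (Fin (m / q + 1))))
    (f := fun i => l2 (restr (block m q i) v))
  rw [h1, Finset.card_univ, Fintype.card_fin] at h2
  refine (Real.le_sqrt_of_sq_le h2).trans (le_of_eq ?_)
  rw [Real.sqrt_mul (by positivity), Real.sqrt_sq (l2_nonneg v)]

section numerics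

variable {Λ t : ℝ}

lemma ProbHyp.block_pos (H : ProbHyp m d L Λ t) : 0 < m / (1000 * L) := by
  have h1 : 10 ^ 12 * L ≤ m := by exact_mod_cast H.m_large
  have h2 := H.hL
  exact Nat.div_pos (by omega) (by omega)

lemma ProbHyp.block_count (H : ProbHyp m d L Λ t) :
    ((m / (m / (1000 * L)) + 1 : ℕ) : ℝ) ≤ 2001 * L := by
  have hq := H.block_pos
  have hL := H.hL
  set q := m / (1000 * L) with hqd
  have h1 : m < (q + 1) * (1000 * L) := by
    rw [hqd, mul_comm]; exact Nat.lt_mul_div_succ m (by omega)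
  have h2 : m / q ≤ 2000 * L := by
    refine Nat.div_le_of_le_mul ?_
    nlinarith
  have h3 : m / q + 1 ≤ 2001 * L := by omega
  exact_mod_cast h3

lemma ProbHyp.block_count_le (H : ProbHyp m d L Λ t) :
    ((m / (m / (1000 * L)) + 1 : ℕ) : ℝ) ≤ Real.exp Λ := by
  rw [H.exp_Λ]
  have h1 := H.block_count
  have h2 := H.m_large
  have h3 := H.L2
  linarith

lemma ProbHyp.ratio (H : ProbHyp m d L Λ t) :
    10 ^ 6 * Λ ≤ (m : ℝ) / L ∧ 10 ^ 6 * t ≤ (m : ℝ) / L ∧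
      ((m / (1000 * L) : ℕ) : ℝ) ≤ m / L / 1000 := by
  have h2 := H.L2
  have h3 := H.hΛ2
  have h4 := H.ht0
  have hL0 : (0 : ℝ) < L := by linarith
  refine ⟨?_, ?_, ?_⟩
  · rw [le_div_iff₀ hL0]
    refine le_trans ?_ H.mL
    have : (L : ℝ) * Λ ≤ L ^ 2 * Λ := by gcongr; nlinarith
    have : 0 ≤ (L : ℝ) * Λ := by positivity
    nlinarith
  · rw [le_div_iff₀ hL0]
    refine le_trans ?_ H.ht
    have : (L : ℝ) * t ≤ L ^ 2 * t := by gcongr; nlinarith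
    linarith
  · refine Nat.cast_div_le.trans (le_of_eq ?_)
    push_cast
    field_simp

end numerics

/-- Operator norm of the layer products. On a pair of blocks of size about `m / (1000 L)` the net
bound holds at the level `1 / √L`; summing over the at most order `L²` pairs of blocks with
Cauchy–Schwarz gives the norm bound of order `√L`. -/
lemma op_event_W {Λ t : ℝ} (H : ProbHyp m d L Λ t) (x : Fin 𝔡 → ℝ) :
    ∃ E : Set (Init 𝔡 m d L), initMeasure 𝔡 m d L E ≤ ENNReal.ofReal (Real.exp (-(3 + t))) ∧
      ∀ w ∉ E, (∀ i ≤ L, hseq w.1 w.2.1 x i ≠ 0) →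
      ∀ a b (v : Fin m → ℝ), a ≤ b → b < L →
        l2 (mulVec (Wat w.2.1 (b + 1)) (layerProd (Wat w.2.1)
          (fun i => signOf (gseq w.1 w.2.1 x i)) a b v)) ≤ 5000 * Real.sqrt L * l2 v := by
  have hm := H.m_pos
  have hm0 := H.m0
  have hL2 := H.L2
  have hL0 : (0 : ℝ) < L := by linarith
  have hΛ2 := H.hΛ2
  have ht0 := H.ht0
  obtain ⟨hr1, hr2, hr3⟩ := H.ratio
  have hq := H.block_pos
  have hnb := H.block_count
  have hnb' := H.block_count_le
  set q := m / (1000 * L) with hqd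
  set r : ℝ := 1 / (2 * Real.sqrt L) with hr
  have hsL : 0 < Real.sqrt L := Real.sqrt_pos.2 hL0
  have hrsq : r ^ 2 = 1 / (4 * L) := by
    rw [hr, div_pow, mul_pow, Real.sq_sqrt hL0.le]; norm_num
  set E : (Fin L × Fin L) × Fin (m / q + 1) × Fin (m / q + 1) → Set (Init 𝔡 m d L) := fun p =>
      {w | ∃ y ∈ netSet (block m q p.2.1) (4 * q), ∃ z ∈ netSet (block m q p.2.2) (4 * q),
        r * (l2 (castVec y) * l2 (castVec z)) <
          |dot (castVec y) (mulVec (Wat w.2.1 (p.1.2 + 1))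
            (safeProd w.1 w.2.1 x (castVec z) p.1.1 p.1.2))|} with hE
  refine ⟨⋃ p, E p, ?_, ?_⟩
  · have hp : ∀ p, initMeasure 𝔡 m d L (E p) ≤
        ENNReal.ofReal (Real.exp (1 - 19 / 1000 * (m / L))) := by
      intro p
      refine (net_tail_W hm (by linarith [H.hL]) x _ _ _ p.1.2.2 (r := r) (by positivity)
        hrsq.le).trans (ENNReal.ofReal_le_ofReal ?_)
      have h2 : (2 : ℝ) ≤ Real.exp 1 := by linarith [Real.exp_one_gt_d9]
      calc _ ≤ Real.exp (6 * q) * Real.exp (6 * q) * (Real.exp 1 *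
              Real.exp (-(r ^ 2 * m / 8))) := by
            gcongr
            · exact card_netSet_block (card_block_le hq _)
            · exact card_netSet_block (card_block_le hq _)
        _ = Real.exp (12 * q + 1 - m / L / 32) := by
            rw [← Real.exp_add, ← Real.exp_add, ← Real.exp_add, hrsq]
            congr 1; field_simp; ring
        _ ≤ _ := Real.exp_le_exp.2 (by linarith)
    refine (measure_iUnion_le_card _ _ hp).trans (ENNReal.ofReal_le_ofReal ?_)
    simp only [Fintype.card_prod, Fintype.card_fin]
    rw [Nat.cast_mul, Nat.cast_mul, Nat.cast_mul]
    calc (L : ℝ) * L * (((m / q + 1 : ℕ) : ℝ) * ((m / q + 1 : ℕ) : ℝ)) *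
          Real.exp (1 - 19 / 1000 * (m / L))
        = L ^ 2 * (((m / q + 1 : ℕ) : ℝ) * ((m / q + 1 : ℕ) : ℝ)) *
          Real.exp (1 - 19 / 1000 * (m / L)) := by ring
      _ ≤ Real.exp Λ * (Real.exp Λ * Real.exp Λ) * Real.exp (1 - 19 / 1000 * (m / L)) := by
          have := H.L_sq_le
          gcongr
      _ = Real.exp (3 * Λ + 1 - 19 / 1000 * (m / L)) := by
          rw [← Real.exp_add, ← Real.exp_add, ← Real.exp_add]; congr 1; ring
      _ ≤ _ := Real.exp_le_exp.2 (by linarith)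
  · intro w hw hne a b v hab hb
    have hnn := l2_nonneg v
    have hbl : ∀ i i' : Fin (m / q + 1), ∀ u v : Fin m → ℝ,
        |dot (restr (block m q i) u) (mulVec (Wat w.2.1 (b + 1)) (layerProd (Wat w.2.1)
          (fun i => signOf (gseq w.1 w.2.1 x i)) a b (restr (block m q i') v)))| ≤
        4 * r * (l2 (restr (block m q i) u) * l2 (restr (block m q i') v)) := by
      intro i i' u v
      have hw' : w ∉ E ((⟨a, by omega⟩, ⟨b, hb⟩), (i, i')) :=
        fun hh => hw (Set.mem_iUnion.2 ⟨_, hh⟩)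
      exact bilin_of_net_event hne hb hq (card_block_le hq i) hq (card_block_le hq i')
        subset_rfl subset_rfl (by positivity) hw' _ _ (restr_supp _ _) (restr_supp _ _)
    refine l2_le_of_dot (by positivity) fun u => ?_
    rw [dot_comm]
    have hun := l2_nonneg u
    set Q : (Fin m → ℝ) →ₗ[ℝ] (Fin m → ℝ) := (mvL (Wat w.2.1 (b + 1))).comp
      (layerProd (Wat w.2.1) (fun i => signOf (gseq w.1 w.2.1 x i)) a b) with hQ
    change |dot u (Q v)| ≤ _
    have hdec : dot u (Q v) = ∑ i : Fin (m / q + 1), ∑ i' : Fin (m / q + 1),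
        dot (restr (block m q i) u) (Q (restr (block m q i') v)) := by
      conv_lhs => rw [← sum_restr_block q u, ← sum_restr_block q v, map_sum, sum_dot]
      refine Finset.sum_congr rfl fun i _ => ?_
      rw [dot_sum]
    rw [hdec]
    calc |∑ i : Fin (m / q + 1), ∑ i' : Fin (m / q + 1),
          dot (restr (block m q i) u) (Q (restr (block m q i') v))|
        ≤ ∑ i : Fin (m / q + 1), ∑ i' : Fin (m / q + 1),
          4 * r * (l2 (restr (block m q i) u) * l2 (restr (block m q i') v)) :=
          (Finset.abs_sum_le_sum_abs _ _).trans (Finset.sum_le_sum fun i _ =>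
            (Finset.abs_sum_le_sum_abs _ _).trans (Finset.sum_le_sum fun i' _ => hbl i i' u v))
      _ = 4 * r * ((∑ i : Fin (m / q + 1), l2 (restr (block m q i) u)) *
          ∑ i : Fin (m / q + 1), l2 (restr (block m q i) v)) := by
          rw [Finset.sum_mul_sum, Finset.mul_sum]
          refine Finset.sum_congr rfl fun i _ => ?_
          rw [Finset.mul_sum]
      _ ≤ 4 * r * ((Real.sqrt (m / q + 1 : ℕ) * l2 u) * (Real.sqrt (m / q + 1 : ℕ) * l2 v)) := by
          have h0 : 0 ≤ ∑ i : Fin (m / q + 1), l2 (restr (block m q i) v) :=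
            Finset.sum_nonneg fun _ _ => l2_nonneg _
          gcongr
          · exact sum_l2_restr_block q u
          · exact sum_l2_restr_block q v
      _ = 4 * r * ((m / q + 1 : ℕ) : ℝ) * (l2 u * l2 v) := by
          have := Real.mul_self_sqrt (Nat.cast_nonneg (α := ℝ) (m / q + 1))
          linear_combination 4 * r * (l2 u * l2 v) * this
      _ ≤ 4 * r * (2001 * L) * (l2 u * l2 v) := by gcongr
      _ = 4002 * Real.sqrt L * (l2 u * l2 v) := by
          have : r * L = Real.sqrt L / 2 := by
            rw [hr]
            nth_rewrite 2 [← Real.mul_self_sqrt hL0.le]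
            field_simp
          linear_combination 8004 * (l2 u * l2 v) * this
      _ ≤ _ := by
          have : 0 ≤ Real.sqrt L * (l2 u * l2 v) := by positivity
          linarith

/-- Norm of the backward vectors, by the same division into blocks. -/
lemma op_event_B {Λ t : ℝ} (H : ProbHyp m d L Λ t) (x : Fin 𝔡 → ℝ) :
    ∃ E : Set (Init 𝔡 m d L), initMeasure 𝔡 m d L E ≤ ENNReal.ofReal (Real.exp (-(3 + t))) ∧
      ∀ w ∉ E, (∀ i ≤ L, hseq w.1 w.2.1 x i ≠ 0) →
      ∀ (j : Fin d) a (v : Fin m → ℝ), a ≤ L →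
        |dot (w.2.2 j) (layerProd (Wat w.2.1)
          (fun i => signOf (gseq w.1 w.2.1 x i)) a L v)| ≤ 50 * Real.sqrt (m / d) * l2 v := by
  have hm := H.m_pos
  have hm0 := H.m0
  have hL2 := H.L2
  have hd1 := H.d1
  have hL0 : (0 : ℝ) < L := by linarith
  have hΛ2 := H.hΛ2
  have ht0 := H.ht0
  obtain ⟨hr1, hr2, hr3⟩ := H.ratio
  have hq := H.block_pos
  have hnb := H.block_count
  have hnb' := H.block_count_le
  set q := m / (1000 * L) with hqd
  set r : ℝ := 1 / (2 * Real.sqrt L) with hr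
  have hsL : 0 < Real.sqrt L := Real.sqrt_pos.2 hL0
  have hrsq : r ^ 2 = 1 / (4 * L) := by
    rw [hr, div_pow, mul_pow, Real.sq_sqrt hL0.le]; norm_num
  set E : (Fin d × Fin (L + 1)) × Fin (m / q + 1) → Set (Init 𝔡 m d L) := fun p =>
      {w | ∃ z ∈ netSet (block m q p.2) (4 * q), r * Real.sqrt (m / d) * l2 (castVec z) <
          |dot (w.2.2 p.1.1) (safeProd w.1 w.2.1 x (castVec z) p.1.2 L)|} with hE
  refine ⟨⋃ p, E p, ?_, ?_⟩
  · have hp : ∀ p, initMeasure 𝔡 m d L (E p) ≤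
        ENNReal.ofReal (Real.exp (1 - 19 / 1000 * (m / L))) := by
      intro p
      refine (net_tail_B hm (by linarith [H.hL]) H.hd x _ _ _ (r := r) (by positivity)
        hrsq.le).trans (ENNReal.ofReal_le_ofReal ?_)
      have h2 : (2 : ℝ) ≤ Real.exp 1 := by linarith [Real.exp_one_gt_d9]
      calc _ ≤ Real.exp (6 * q) * (Real.exp 1 * Real.exp (-(r ^ 2 * m / 8))) := by
            gcongr
            exact card_netSet_block (card_block_le hq _)
        _ = Real.exp (6 * q + 1 - m / L / 32) := by
            rw [← Real.exp_add, ← Real.exp_add, hrsq]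
            congr 1; field_simp; ring
        _ ≤ _ := Real.exp_le_exp.2 (by linarith)
    refine (measure_iUnion_le_card _ _ hp).trans (ENNReal.ofReal_le_ofReal ?_)
    simp only [Fintype.card_prod, Fintype.card_fin]
    rw [Nat.cast_mul, Nat.cast_mul]
    calc (d : ℝ) * ((L + 1 : ℕ) : ℝ) * ((m / q + 1 : ℕ) : ℝ) *
          Real.exp (1 - 19 / 1000 * (m / L))
        ≤ Real.exp Λ * Real.exp Λ * Real.exp Λ * Real.exp (1 - 19 / 1000 * (m / L)) := by
          have h1 := H.d_le
          have h2 : ((L + 1 : ℕ) : ℝ) ≤ Real.exp Λ := by push_cast; exact H.L_le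
          gcongr
      _ = Real.exp (3 * Λ + 1 - 19 / 1000 * (m / L)) := by
          rw [← Real.exp_add, ← Real.exp_add, ← Real.exp_add]; congr 1; ring
      _ ≤ _ := Real.exp_le_exp.2 (by linarith)
  · intro w hw hne j a v ha
    have hnn := l2_nonneg v
    have hbl : ∀ i : Fin (m / q + 1), |dot (w.2.2 j) (layerProd (Wat w.2.1)
          (fun i => signOf (gseq w.1 w.2.1 x i)) a L (restr (block m q i) v))| ≤
        2 * (r * Real.sqrt (m / d)) * l2 (restr (block m q i) v) := by
      intro i
      have hw' : w ∉ E ((j, ⟨a, by omega⟩), i) := fun hh => hw (Set.mem_iUnion.2 ⟨_, hh⟩)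
      exact functional_of_net_event hne _ hq (card_block_le hq i) subset_rfl (by positivity) hw' _
        (restr_supp _ _)
    have hnbs : Real.sqrt (m / q + 1 : ℕ) ≤ 50 * Real.sqrt L := by
      rw [show (50 : ℝ) = Real.sqrt (50 ^ 2) by rw [Real.sqrt_sq (by norm_num)],
        ← Real.sqrt_mul (by norm_num)]
      exact Real.sqrt_le_sqrt (by linarith)
    conv_lhs => rw [← sum_restr_block q v, map_sum, dot_sum]
    calc _ ≤ ∑ i : Fin (m / q + 1), 2 * (r * Real.sqrt (m / d)) * l2 (restr (block m q i) v) :=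
          (Finset.abs_sum_le_sum_abs _ _).trans (Finset.sum_le_sum fun i _ => hbl i)
      _ = 2 * (r * Real.sqrt (m / d)) * ∑ i : Fin (m / q + 1), l2 (restr (block m q i) v) := by
          rw [Finset.mul_sum]
      _ ≤ 2 * (r * Real.sqrt (m / d)) * (Real.sqrt (m / q + 1 : ℕ) * l2 v) := by
          gcongr
          exact sum_l2_restr_block q v
      _ ≤ 2 * (r * Real.sqrt (m / d)) * (50 * Real.sqrt L * l2 v) := by gcongr
      _ = 50 * Real.sqrt (m / d) * l2 v := by rw [hr]; field_simp

/-! ### Assembly: the good event and the final parameters -/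

lemma ne_zero_of_half_le_l2 {p : ℕ} {v : Fin p → ℝ} (h : 1 / 2 ≤ l2 v) : v ≠ 0 := by
  rintro rfl
  have : l2 (0 : Fin p → ℝ) = 0 := by simp [l2]
  rw [this] at h
  norm_num at h

/-- Numerical summation of the failure probabilities of the seven events. -/
lemma seven_failures (t : ℝ) :
    Real.exp (-(2 + t)) + 6 * Real.exp (-(3 + t)) ≤ Real.exp (-t) := by
  have he : (2.7 : ℝ) ≤ Real.exp 1 := by linarith [Real.exp_one_gt_d9]
  have h3 : Real.exp (-t) = Real.exp 1 ^ 3 * Real.exp (-(3 + t)) := by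
    rw [← Real.exp_nat_mul, ← Real.exp_add]; congr 1; push_cast; ring
  have h2 : Real.exp (-(2 + t)) = Real.exp 1 * Real.exp (-(3 + t)) := by
    rw [← Real.exp_add]; congr 1; ring
  rw [h3, h2]
  have hp := Real.exp_pos (-(3 + t))
  have : Real.exp 1 + 6 ≤ Real.exp 1 ^ 3 := by nlinarith [sq_nonneg (Real.exp 1)]
  nlinarith

/-- The initialization is good outside an event of probability at most `e^{-t}`. -/
lemma good_event {Λ t τ : ℝ} (H : ProbHyp m d L Λ t) {x : Fin 𝔡 → ℝ} (hx : l2 x = 1)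
    (hτ : 0 ≤ τ) (hτt : (m : ℝ) * (τ * Real.sqrt m) = t) :
    ∃ E : Set (Init 𝔡 m d L), initMeasure 𝔡 m d L E ≤ ENNReal.ofReal (Real.exp (-t)) ∧
      ∀ w ∉ E, GoodInit x Λ t τ w.1 w.2.1 w.2.2 := by
  have hm := H.m_pos
  have hm0 := H.m0
  have hL2 := H.L2
  have hΛ2 := H.hΛ2
  have ht0 := H.ht0
  have hmL := H.mL
  have ht := H.ht
  have hL0 : (0 : ℝ) < L := by linarith
  obtain ⟨E1, hE1, h1⟩ := sparse_event_W H x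
  obtain ⟨E2, hE2, h2⟩ := sparse_event_B H x
  obtain ⟨E3, hE3, h3⟩ := op_event_W H x
  obtain ⟨E4, hE4, h4⟩ := op_event_B H x
  set S : Set (Init 𝔡 m d L) := {z | ¬ ∀ i ≤ L, 1 / 2 ≤ l2 (hseq z.1 z.2.1 x i) ∧
    l2 (hseq z.1 z.2.1 x i) ≤ 2} with hS
  set K : Set (Init 𝔡 m d L) := {z | 1 + 100 * L * t ≤
    2 * ∑ i ∈ Finset.range L, (kinkCount τ z.1 z.2.1 x i : ℝ)} with hK
  set T : Fin d → Set (Init 𝔡 m d L) := fun j => {z | hseq z.1 z.2.1 x (L - 1) ≠ 0 ∧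
    l2 (signOf (gseq z.1 z.2.1 x L) * z.2.2 j) < Real.sqrt (m / d) / 5} with hT
  have hLt : (t : ℝ) ≤ L ^ 2 * t := le_mul_of_one_le_left ht0 (by nlinarith)
  have hLΛ : Λ ≤ L ^ 2 * Λ := le_mul_of_one_le_left (by linarith) (by nlinarith)
  have pS : initMeasure 𝔡 m d L S ≤ ENNReal.ofReal (Real.exp (-(3 + t))) := by
    refine (size_event hm H.hL hx).trans (ENNReal.ofReal_le_ofReal ?_)
    have e2 : (2 : ℝ) ≤ Real.exp 1 := by linarith [Real.exp_one_gt_d9]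
    have hexp : Λ + 1 + (3 + t) ≤ (m : ℝ) / (512 * L ^ 2) := by
      rw [le_div_iff₀ (by positivity)]
      nlinarith [mul_nonneg (sq_nonneg (L : ℝ)) (sub_nonneg.2 hΛ2)]
    calc ((L : ℝ) + 1) * (2 * Real.exp (-(m / (512 * L ^ 2))))
        ≤ Real.exp Λ * (Real.exp 1 * Real.exp (-(m / (512 * L ^ 2)))) := by
          gcongr; exact H.L_le
      _ = Real.exp (Λ + 1 - m / (512 * L ^ 2)) := by
          rw [← Real.exp_add, ← Real.exp_add]; congr 1; ring
      _ ≤ _ := Real.exp_le_exp.2 (by linarith)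
  have pK : initMeasure 𝔡 m d L K ≤ ENNReal.ofReal (Real.exp (-(2 + t))) :=
    kink_event hm H.hL hτ x hτt
  have pT : initMeasure 𝔡 m d L (⋃ j, T j) ≤ ENNReal.ofReal (Real.exp (-(3 + t))) := by
    refine (measure_iUnion_le_card _ T (fun j => last_event hm H.hL H.hd x j)).trans
      (ENNReal.ofReal_le_ofReal ?_)
    rw [Fintype.card_fin]
    calc (d : ℝ) * Real.exp (-(m / 5)) ≤ Real.exp Λ * Real.exp (-(m / 5)) := by
          gcongr; exact H.d_le
      _ = Real.exp (Λ - m / 5) := by rw [← Real.exp_add]; congr 1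
      _ ≤ _ := Real.exp_le_exp.2 (by linarith)
  refine ⟨K ∪ (S ∪ ((⋃ j, T j) ∪ (E1 ∪ (E2 ∪ (E3 ∪ E4))))), ?_, ?_⟩
  · have key : initMeasure 𝔡 m d L (K ∪ (S ∪ ((⋃ j, T j) ∪ (E1 ∪ (E2 ∪ (E3 ∪ E4)))))) ≤
        ENNReal.ofReal (Real.exp (-(2 + t))) + (ENNReal.ofReal (Real.exp (-(3 + t))) +
        (ENNReal.ofReal (Real.exp (-(3 + t))) + (ENNReal.ofReal (Real.exp (-(3 + t))) +
        (ENNReal.ofReal (Real.exp (-(3 + t))) + (ENNReal.ofReal (Real.exp (-(3 + t))) +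
        ENNReal.ofReal (Real.exp (-(3 + t)))))))) := by
      refine (measure_union_le _ _).trans (add_le_add pK ?_)
      refine (measure_union_le _ _).trans (add_le_add pS ?_)
      refine (measure_union_le _ _).trans (add_le_add pT ?_)
      refine (measure_union_le _ _).trans (add_le_add hE1 ?_)
      refine (measure_union_le _ _).trans (add_le_add hE2 ?_)
      exact (measure_union_le _ _).trans (add_le_add hE3 hE4)
    refine key.trans ?_
    have hp := (Real.exp_pos (-(3 + t))).le
    have hp2 := (Real.exp_pos (-(2 + t))).le
    rw [← ENNReal.ofReal_add hp hp, ← ENNReal.ofReal_add hp (by positivity),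
      ← ENNReal.ofReal_add hp (by positivity), ← ENNReal.ofReal_add hp (by positivity),
      ← ENNReal.ofReal_add hp (by positivity), ← ENNReal.ofReal_add hp2 (by positivity)]
    refine ENNReal.ofReal_le_ofReal ?_
    linarith [seven_failures t]
  · intro w hw
    simp only [Set.mem_union, not_or] at hw
    obtain ⟨wK, wS, wT, w1, w2, w3, w4⟩ := hw
    have hsz : ∀ i ≤ L, 1 / 2 ≤ l2 (hseq w.1 w.2.1 x i) ∧ l2 (hseq w.1 w.2.1 x i) ≤ 2 := by
      by_contra hc
      exact wS hc
    have hne : ∀ i ≤ L, hseq w.1 w.2.1 x i ≠ 0 := fun i hi =>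
      ne_zero_of_half_le_l2 (hsz i hi).1
    refine ⟨fun i hi => (hsz i hi).1, fun i hi => (hsz i hi).2,
      near_of_kink hτ ht0 (fun i hi => (hsz i hi).1) wK,
      ⟨h3 w w3 hne, h1 w w1 hne⟩, fun j => ⟨h4 w w4 hne j, h2 w w2 hne j⟩, fun j => ?_⟩
    by_contra hc
    exact wT (Set.mem_iUnion.2 ⟨j, hne _ (Nat.sub_le _ _), not_le.1 hc⟩)

/-- The two constraints on `ω = θ³` become, after extracting roots, a lower bound on `θ²` and an
upper bound on `θ`. -/
lemma root_bounds {m d L Λ θ : ℝ} (hm : 0 < m) (hd : 0 < d) (hL : 0 < L) (hΛ : 0 < Λ)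
    (hθ : 0 ≤ θ)
    (h1 : 10 ^ 30 * d ^ ((3 : ℝ) / 2) /
      (m ^ ((3 : ℝ) / 2) * L ^ ((3 : ℝ) / 2) * Λ ^ ((3 : ℝ) / 2)) ≤ θ ^ 3)
    (h2 : θ ^ 3 ≤ 1 / (10 ^ 30 * L ^ ((9 : ℝ) / 2) * Λ ^ 3)) :
    10 ^ 20 * d ≤ θ ^ 2 * (m * L * Λ) ∧ 10 ^ 10 * (Real.sqrt L ^ 3 * θ) * Λ ≤ 1 := by
  constructor
  · have e1 : (10 : ℝ) ^ 30 = (10 ^ 20 : ℝ) ^ ((3 : ℝ) / 2) := by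
      rw [← Real.rpow_natCast, ← Real.rpow_natCast, ← Real.rpow_mul (by norm_num)]
      norm_num
    have e2 : θ ^ 3 = (θ ^ 2) ^ ((3 : ℝ) / 2) := by
      rw [← Real.rpow_natCast, ← Real.rpow_natCast, ← Real.rpow_mul hθ]
      norm_num
    rw [div_le_iff₀ (by positivity), e1, e2, ← Real.mul_rpow (by positivity) hd.le,
      ← Real.mul_rpow hm.le hL.le, ← Real.mul_rpow (by positivity) hΛ.le,
      ← Real.mul_rpow (by positivity) (by positivity)] at h1
    exact (Real.rpow_le_rpow_iff (by positivity) (by positivity) (by norm_num)).1 h1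
  · have e1 : L ^ ((9 : ℝ) / 2) = Real.sqrt L ^ 9 := by
      rw [Real.sqrt_eq_rpow, ← Real.rpow_natCast, ← Real.rpow_mul hL.le]
      norm_num
    rw [le_div_iff₀ (by positivity), e1] at h2
    have : (10 ^ 10 * (Real.sqrt L ^ 3 * θ) * Λ) ^ 3 ≤ 1 := by
      refine le_trans (le_of_eq ?_) h2; ring
    by_contra hc
    have := one_lt_pow₀ (not_le.1 hc) (n := 3) (by norm_num)
    linarith

/-- The parameter relations behind the probabilistic and the deterministic parts. Eliminating
`θ` from the two root bounds gives `m ≥ 10^40 d L² log m`. -/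
lemma param_hyps {θ : ℝ} (hL : 2 ≤ L) (hm : 2 ≤ m) (hd : 0 < d) (hθ : 0 < θ)
    (h1 : 10 ^ 20 * (d : ℝ) ≤ θ ^ 2 * (m * L * Real.log m))
    (h2 : 10 ^ 10 * (Real.sqrt L ^ 3 * θ) * Real.log m ≤ 1) :
    ProbHyp m d L (Real.log m) (m * θ ^ 2 * L) ∧ NumHyp m d L (Real.log m) θ := by
  have hL2 : (2 : ℝ) ≤ L := by exact_mod_cast hL
  have hL0 : (0 : ℝ) < L := by linarith
  have hm2 : (2 : ℝ) ≤ m := by exact_mod_cast hm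
  have hm0 : (0 : ℝ) < m := by linarith
  have hd1 : (1 : ℝ) ≤ d := by exact_mod_cast hd
  have hlog : (0.69 : ℝ) ≤ Real.log m :=
    le_trans (by linarith [Real.log_two_gt_d9]) (Real.log_le_log (by norm_num) hm2)
  set Λ := Real.log m with hΛ
  have hΛ0 : 0 < Λ := by linarith
  have hsq : 10 ^ 20 * ((L : ℝ) ^ 3 * θ ^ 2 * Λ ^ 2) ≤ 1 := by
    have e : (10 ^ 10 * (Real.sqrt L ^ 3 * θ) * Λ) ^ 2 =
        10 ^ 20 * ((L : ℝ) ^ 3 * θ ^ 2 * Λ ^ 2) := by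
      have : (Real.sqrt L ^ 3) ^ 2 = (L : ℝ) ^ 3 := by
        rw [← pow_mul, mul_comm, pow_mul, Real.sq_sqrt hL0.le]
      rw [← this]; ring
    rw [← e]
    exact pow_le_one₀ (by positivity) h2
  have hbig : 10 ^ 40 * ((d : ℝ) * L ^ 2 * Λ) ≤ m := by
    have a1 : 10 ^ 20 * (d : ℝ) * (10 ^ 20 * (L ^ 2 * Λ)) ≤
        θ ^ 2 * (m * L * Λ) * (10 ^ 20 * (L ^ 2 * Λ)) := by gcongr
    have a2 : (m : ℝ) * (10 ^ 20 * (L ^ 3 * θ ^ 2 * Λ ^ 2)) ≤ m * 1 := by gcongr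
    nlinarith
  have hm1 : (10 : ℝ) ^ 12 ≤ m := by
    refine le_trans ?_ hbig
    have a1 : (1 : ℝ) * 2 ^ 2 * 0.69 ≤ d * L ^ 2 * Λ := by gcongr
    linarith
  have hΛ2 : 2 ≤ Λ := by
    rw [hΛ, Real.le_log_iff_exp_le hm0]
    have : Real.exp 2 = Real.exp 1 ^ 2 := by rw [← Real.exp_nat_mul]; norm_num
    rw [this]
    nlinarith [Real.exp_one_lt_d9, Real.exp_pos 1]
  refine ⟨⟨hL, hd, rfl, hΛ2, ?_, by positivity, ?_⟩,
    ⟨hL, by omega, hd, by linarith, hθ, h2, ?_⟩⟩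
  · have : 0 ≤ (d : ℝ) * L ^ 2 * Λ := by positivity
    linarith
  · have a1 : (L : ℝ) ^ 3 * θ ^ 2 * 1 ≤ L ^ 3 * θ ^ 2 * Λ ^ 2 := by
      gcongr; nlinarith
    have a2 : 10 ^ 6 * ((L : ℝ) ^ 3 * θ ^ 2) ≤ 1 := by
      have : 0 ≤ (L : ℝ) ^ 3 * θ ^ 2 := by positivity
      linarith
    have a3 := mul_le_mul_of_nonneg_left a2 hm0.le
    linarith
  · have a1 : (1 : ℝ) * (L * 1) * Λ ≤ d * (L * L) * Λ := by gcongr; linarith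
    have a2 : 0 ≤ (L : ℝ) * Λ := by positivity
    nlinarith

/-- If the complement of `G` is contained in an event of probability at most `p`, then `G` has
(outer) probability at least `1 - p`; no measurability is needed. -/
lemma prob_ge_of_compl {Ω : Type*} [MeasurableSpace Ω] {μ : Measure Ω} [IsProbabilityMeasure μ]
    {E G : Set Ω} {p : ℝ} (hp : 0 ≤ p) (hE : μ E ≤ ENNReal.ofReal p) (h : ∀ w ∉ E, w ∈ G) :
    ENNReal.ofReal (1 - p) ≤ μ G := by
  rw [ENNReal.ofReal_sub _ hp, ENNReal.ofReal_one, tsub_le_iff_right]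
  have hu : (Set.univ : Set Ω) ⊆ G ∪ E := fun w _ => by
    by_cases hw : w ∈ E
    · exact Or.inr hw
    · exact Or.inl (h w hw)
  calc (1 : ENNReal) = μ Set.univ := measure_univ.symm
    _ ≤ μ (G ∪ E) := measure_mono hu
    _ ≤ μ G + μ E := measure_union_le _ _
    _ ≤ _ := by gcongr

/-- Theorem 5, equivalence to the neural tangent kernel. -/
theorem statement4 :
    ∃ C c : ℝ, 0 < C ∧ 0 < c ∧
      ∀ (𝔡 m d L : ℕ) (h𝔡 : 0 < 𝔡) (hL : 2 ≤ L) (hm : 0 < m) (hd : 0 < d)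
        (x : Fin 𝔡 → ℝ), l2 x = 1 →
      ∀ ω : ℝ,
        C * (d : ℝ) ^ ((3 : ℝ) / 2) /
            ((m : ℝ) ^ ((3 : ℝ) / 2) * (L : ℝ) ^ ((3 : ℝ) / 2) *
              Real.log m ^ ((3 : ℝ) / 2)) ≤ ω →
        ω ≤ 1 / (C * (L : ℝ) ^ ((9 : ℝ) / 2) * Real.log m ^ 3) →
        ENNReal.ofReal (1 - Real.exp (-(c * (m : ℝ) * ω ^ ((2 : ℝ) / 3) * (L : ℝ)))) ≤
          initMeasure 𝔡 m d L
            {z | ∀ W' : Fin L → Fin m → Fin m → ℝ, (∀ ℓ, spec (W' ℓ) ≤ ω) →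
              ∀ j : Fin d,
                Real.sqrt (∑ ℓ : Fin L,
                    frob (gradW z.2.2 z.1 (fun ℓ' => z.2.1 ℓ' + W' ℓ') x
                          (basisVec d j) ((ℓ : ℕ) + 1) -
                        gradW z.2.2 z.1 z.2.1 x (basisVec d j) ((ℓ : ℕ) + 1)) ^ 2) ≤
                  C * Real.sqrt (Real.log m) * ω ^ ((1 : ℝ) / 3) * (L : ℝ) ^ 3 *
                    Real.sqrt (∑ ℓ : Fin L,
                      frob (gradW z.2.2 z.1 z.2.1 x (basisVec d j) ((ℓ : ℕ) + 1)) ^ 2) ∧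
                |mulVec z.2.2 (hseq z.1 (fun ℓ' => z.2.1 ℓ' + W' ℓ') x L) j -
                    mulVec z.2.2 (hseq z.1 z.2.1 x L) j -
                    ∑ ℓ : Fin L,
                      innerF (gradW z.2.2 z.1 z.2.1 x (basisVec d j) ((ℓ : ℕ) + 1))
                        (W' ℓ)| ≤
                  C * (L : ℝ) ^ 3 * ω ^ ((4 : ℝ) / 3) *
                    Real.sqrt ((m : ℝ) * Real.log m) / Real.sqrt d} := by
  refine ⟨10 ^ 30, 1, by norm_num, by norm_num, ?_⟩
  intro 𝔡 m d L h𝔡 hL hm hd x hx ω h1 h2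
  rcases Nat.lt_or_ge m 2 with hm1 | hm2
  · -- For `m = 1` the logarithm vanishes; the junk value `1 / 0 = 0` forces `ω = 0`, and the
    -- probability bound is trivial.
    obtain rfl : m = 1 := by omega
    have hω : ω = 0 := by
      refine le_antisymm ?_ ?_
      · simpa using h2
      · refine le_trans ?_ h1
        positivity
    subst hω
    have : (0 : ℝ) ^ ((2 : ℝ) / 3) = 0 := Real.zero_rpow (by norm_num)
    rw [this]
    simp
  have hm0 : (0 : ℝ) < m := by exact_mod_cast hm
  have hd0 : (0 : ℝ) < d := by exact_mod_cast hd
  have hL0 : (0 : ℝ) < L := by exact_mod_cast (by omega : 0 < L)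
  have hΛ : 0 < Real.log m := Real.log_pos (by exact_mod_cast hm2)
  have hω : 0 < ω := lt_of_lt_of_le (by positivity) h1
  set θ : ℝ := ω ^ ((1 : ℝ) / 3) with hθd
  have hθ : 0 < θ := Real.rpow_pos_of_pos hω _
  have hθ3 : ω = θ ^ 3 := by
    rw [hθd, ← Real.rpow_natCast, ← Real.rpow_mul hω.le]; norm_num
  have hθ2 : ω ^ ((2 : ℝ) / 3) = θ ^ 2 := by
    rw [hθd, ← Real.rpow_natCast, ← Real.rpow_mul hω.le]; norm_num
  have hθ4 : ω ^ ((4 : ℝ) / 3) = θ ^ 4 := by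
    rw [hθd, ← Real.rpow_natCast, ← Real.rpow_mul hω.le]; norm_num
  rw [hθ3] at h1 h2
  obtain ⟨r1, r2⟩ := root_bounds hm0 hd0 hL0 hΛ hθ.le h1 h2
  obtain ⟨HP, HN⟩ := param_hyps hL hm2 hd hθ r1 r2
  have hsm : 0 < Real.sqrt m := Real.sqrt_pos.2 hm0
  have hτt : (m : ℝ) * (θ ^ 2 * L / Real.sqrt m * Real.sqrt m) = m * θ ^ 2 * L := by
    rw [div_mul_cancel₀ _ hsm.ne']; ring
  obtain ⟨E, hE, hG⟩ := good_event HP hx (τ := θ ^ 2 * L / Real.sqrt m) (by positivity) hτt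
  rw [hθ2, one_mul]
  refine prob_ge_of_compl (Real.exp_pos _).le hE ?_
  intro z hz W' hW' j
  rw [hθ3] at hW'
  have G := hG z hz
  refine ⟨G.gradient HN hW' j, (G.output HN hW' j).trans (le_of_eq ?_)⟩
  rw [hθ4, Real.sqrt_mul hm0.le, Real.sqrt_div hm0.le]
  ring

end DNNPaper
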